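/- Case B2, all powers: Let l1, l2 be distinct odd primes with l1 ≡ 3 (mod 4) and l1 > 3, let r1, r2 ≥ 1, and let N = l1^{r1} l2^{r2}. Assume the multiplicative order of p modulo l1^{r1} is φ(l1^{r1})/2, the multiplicative order of p modulo l2^{r2} is φ(l2^{r2}), and f = φ(N)/2. Set h1 = h(Q(√-l1)). Then there exist integers a, b with 4p^{h1} = a² + l1 b² and a ≡ -2 p^{(l1-1+2h1)/4} (mod l1) such that for all integers t1, t2 with 0 ≤ t1 < r1 and 0 ≤ t2 < r2: G(χ^{l1^{t1} l2^{t2}}) = p^{f/2} if the Legendre symbol (l2/l1) = 1, while G(χ^{l1^{t1} l2^{t2}}) = p^{f/2 - h1 · l1^{t1} l2^{t2}} · ((a + b √-l1)/2)^{2 l1^{t1} l2^{t2}} if (l2/l1) = -1; G(χ^{l1^{r1} l2^{t2}}) = p^{f/2}; and G(χ^{l1^{t1} l2^{r2}}) = -p^{(f - h1 · l1^{t1} φ(l2^{r2}))/2} · ((a + b √-l1)/2)^{l1^{t1} φ(l2^{r2})}. -/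

import Mathlib

open Complex Polynomial IntermediateField

/-- The complex primitive `p`-th root of unity `exp(2πi/p)`. -/
noncomputable def zetaP (p : ℕ) : ℂ := Complex.exp (2 * Real.pi * Complex.I / p)

/-- The Gauss sum `G(χ^λ) = ∑_{x ∈ F, x ≠ 0} χ^λ(x) ζ_p^{T(x)}`, where
`T` is the trace map from `F` down to `ZMod p`. -/
noncomputable def gaussSumN (p : ℕ) {F : Type} [Field F] [Fintype F] [Algebra (ZMod p) F]
    (χ : MulChar F ℂ) (lam : ℕ) : ℂ :=
  letI : DecidableEq F := Classical.decEq F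
  ∑ x ∈ Finset.univ.filter (fun x : F => x ≠ 0),
    (χ ^ lam) x * zetaP p ^ (Algebra.trace (ZMod p) F x).val

/-- `√-m = i√m ∈ ℂ`. -/
noncomputable def sqrtNeg (m : ℕ) : ℂ := Real.sqrt m * Complex.I

theorem sqrtNeg_sq (m : ℕ) : sqrtNeg m ^ 2 = -(m : ℂ) := by
  have h : ((Real.sqrt m : ℝ) : ℂ) ^ 2 = ((m : ℝ) : ℂ) := by
    rw [← Complex.ofReal_pow, Real.sq_sqrt (by positivity)]
  simp only [sqrtNeg, mul_pow, Complex.I_sq, h]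
  push_cast
  ring

theorem isIntegral_sqrtNeg (m : ℕ) : IsIntegral ℚ (sqrtNeg m) := by
  refine ⟨X ^ 2 + C (m : ℚ), monic_X_pow_add_C _ (by norm_num), ?_⟩
  simp [sqrtNeg_sq]

/-- The class number `h(ℚ(√-m))` of the quadratic field `ℚ(√-m) ⊆ ℂ`. -/
noncomputable def classNumSqrtNeg (m : ℕ) : ℕ :=
  haveI : FiniteDimensional ℚ ℚ⟮sqrtNeg m⟯ :=
    IntermediateField.adjoin.finiteDimensional (isIntegral_sqrtNeg m)
  haveI : CharZero ℚ⟮sqrtNeg m⟯ :=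
    charZero_of_injective_algebraMap (algebraMap ℚ ℚ⟮sqrtNeg m⟯).injective
  haveI : NumberField ℚ⟮sqrtNeg m⟯ := ⟨⟩
  NumberField.classNumber ℚ⟮sqrtNeg m⟯

/-- `√p* = √p` if `p ≡ 1 (mod 4)` and `i√p` if `p ≡ 3 (mod 4)`. -/
noncomputable def sqrtPStar (p : ℕ) : ℂ :=
  if p % 4 = 1 then (Real.sqrt p : ℂ) else (Real.sqrt p : ℂ) * Complex.I

/-!
Let `l = l1` and `m = l2`. Since `p` generates the kernel of the Legendre character mod `l` inside
`(ℤ/N)ˣ`, and `G(χ)` is fixed by Frobenius `χ ↦ χ ^ p`, every Gauss sum `G(χ ^ λ)` lies in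
`ℚ(√-l)`. Stickelberger's congruence expresses its valuation at a prime above `p` by the sum of the
residues `λ p ^ i mod N`, which is a Legendre moment `∑ x (x / l)`, and the analytic class number
formula turns this moment into the class number `h1`. A prime of `ℚ(√-l)` above `p` has order
dividing `h1` in the class group, which yields `π = (a + b √-l) / 2` of norm `p ^ h1`; the exponents
in the theorem are those for which `p ^ e π ^ n` has the absolute value and the valuations of
`G(χ ^ λ)`. The two then differ by a unit of `ℚ(√-l)`, which is a sign as `l > 3`.

The signs come from the congruence `G(χ) ^ q ^ n ≡ G(χ ^ q ^ n)` modulo primes above `q`. It is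
applied with `q = l`, where `π ^ 2 ≡ p ^ h1` and `p ^ (f / 2) ≡ 1`, after the Gauss sums of
characters of `m`-power order have been treated with `q = m`, where `p ^ (f / 2) ≡ -1`.
-/

namespace GaussSumIndexTwo

section HurwitzZetaOdd

open Filter Topology

theorem abs_rpow_neg_sub_rpow_neg_le {m x y s : ℝ} (hm : 0 < m) (hx : m ≤ x) (hy : m ≤ y)
    (hs : 0 ≤ s) : |x ^ (-s) - y ^ (-s)| ≤ s * m ^ (-s - 1) * |x - y| := by
  refine (convex_Ici m).norm_image_sub_le_of_norm_hasDerivWithin_le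
    (f := fun z : ℝ ↦ z ^ (-s)) (f' := fun z ↦ -s * z ^ (-s - 1)) (fun z hz ↦ ?_) (fun z hz ↦ ?_)
    hy hx <;> have hz0 : 0 < z := hm.trans_le hz
  · exact (Real.hasDerivAt_rpow_const (Or.inl hz0.ne')).hasDerivWithinAt
  · rw [norm_mul, norm_neg, Real.norm_of_nonneg hs, Real.norm_of_nonneg (by positivity)]
    exact mul_le_mul_of_nonneg_left (Real.rpow_le_rpow_of_nonpos hm hz (by linarith)) hs

/-- The real number `(n + a)⁻ˢ - (n + 1 - a)⁻ˢ`; for `0 < a < 1` and `s > 1` these are the terms of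
the Dirichlet series of twice the odd Hurwitz zeta function. -/
noncomputable def hurwitzOddTerm (a : ℝ) (n : ℕ) (s : ℝ) : ℝ :=
  (n + a) ^ (-s) - (n + 1 - a) ^ (-s)

variable {a : ℝ}

theorem continuous_hurwitzOddTerm (ha : a ∈ Set.Ioo 0 1) (n : ℕ) :
    Continuous (hurwitzOddTerm a n) := by
  have h₁ : (n + a : ℝ) ≠ 0 := by have := ha.1; positivity
  have h₂ : (n + 1 - a : ℝ) ≠ 0 := by have := ha.2; have := n.cast_nonneg (α := ℝ); linarith
  exact ((Real.continuous_const_rpow h₁).comp continuous_neg).sub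
    ((Real.continuous_const_rpow h₂).comp continuous_neg)

theorem norm_hurwitzOddTerm_le (ha : a ∈ Set.Ioo 0 1) (n : ℕ) {s : ℝ} (hs : s ∈ Set.Icc 1 2) :
    ‖hurwitzOddTerm a n s‖ ≤ 2 * min a (1 - a) ^ (-3 : ℝ) * ((n + 1 : ℕ) : ℝ) ^ (-2 : ℝ) := by
  obtain ⟨ha₀, ha₁⟩ := ha
  obtain ⟨hs₁, hs₂⟩ := hs
  set δ := min a (1 - a)
  have hδ₀ : 0 < δ := lt_min ha₀ (by linarith)
  have hδa : δ ≤ a := min_le_left _ _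
  have hδa' : δ ≤ 1 - a := min_le_right _ _
  have hmn : δ * (n + 1 : ℕ) ≤ n + δ := by push_cast; nlinarith [n.cast_nonneg (α := ℝ)]
  calc ‖hurwitzOddTerm a n s‖
      ≤ s * (δ * (n + 1 : ℕ)) ^ (-s - 1) * |n + a - (n + 1 - a)| :=
        abs_rpow_neg_sub_rpow_neg_le (by positivity) (by linarith) (by linarith) (by linarith)
    _ ≤ 2 * (δ ^ (-3 : ℝ) * ((n + 1 : ℕ) : ℝ) ^ (-2 : ℝ)) * 1 := by
        rw [Real.mul_rpow hδ₀.le (by positivity)]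
        gcongr ?_ * (?_ * ?_) * ?_
        · exact Real.rpow_le_rpow_of_exponent_ge hδ₀ (by linarith) (by linarith)
        · exact Real.rpow_le_rpow_of_exponent_le (by simp) (by linarith)
        · rw [abs_le]; constructor <;> linarith
    _ = 2 * δ ^ (-3 : ℝ) * ((n + 1 : ℕ) : ℝ) ^ (-2 : ℝ) := by ring

theorem summable_hurwitzOddTerm_bound (C : ℝ) :
    Summable fun n : ℕ ↦ C * ((n + 1 : ℕ) : ℝ) ^ (-2 : ℝ) :=
  ((summable_nat_add_iff 1).mpr (Real.summable_nat_rpow.mpr (by norm_num))).mul_left C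

theorem hurwitzZetaOdd_eq_tsum (ha : a ∈ Set.Ioo 0 1) {s : ℝ} (hs : 1 < s) :
    HurwitzZeta.hurwitzZetaOdd a s = ((∑' n, hurwitzOddTerm a n s : ℝ) : ℂ) / 2 := by
  have hsum := HurwitzZeta.hasSum_nat_hurwitzZetaOdd_of_mem_Icc (a := a) ⟨ha.1.le, ha.2.le⟩
    (s := (s : ℂ)) (by simpa using hs)
  rw [← hsum.tsum_eq, tsum_div_const, Complex.ofReal_tsum]
  congr 1
  refine tsum_congr fun n ↦ ?_
  have h₁ : (0 : ℝ) ≤ n + a := by have := ha.1; positivity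
  have h₂ : (0 : ℝ) ≤ n + 1 - a := by have := ha.2; have := n.cast_nonneg (α := ℝ); linarith
  simp only [hurwitzOddTerm, Real.rpow_neg h₁, Real.rpow_neg h₂]
  push_cast [Complex.ofReal_cpow h₁, Complex.ofReal_cpow h₂]
  simp only [one_div]

theorem hurwitzZetaOdd_one_eq_tsum (ha : a ∈ Set.Ioo 0 1) :
    HurwitzZeta.hurwitzZetaOdd a 1 = ((∑' n, hurwitzOddTerm a n 1 : ℝ) : ℂ) / 2 := by
  have hcont : ContinuousOn (fun s : ℝ ↦ ((∑' n, hurwitzOddTerm a n s : ℝ) : ℂ) / 2)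
      (Set.Icc 1 2) :=
    (Complex.continuous_ofReal.comp_continuousOn <| continuousOn_tsum
      (fun n ↦ (continuous_hurwitzOddTerm ha n).continuousOn) (summable_hurwitzOddTerm_bound _)
      fun n _ hs ↦ norm_hurwitzOddTerm_le ha n hs).div_const 2
  have hcont' : ContinuousOn (fun s : ℝ ↦ HurwitzZeta.hurwitzZetaOdd a s) (Set.Icc 1 2) :=
    ((HurwitzZeta.differentiable_hurwitzZetaOdd a).continuous.comp
      Complex.continuous_ofReal).continuousOn
  have heq : Set.EqOn (fun s : ℝ ↦ HurwitzZeta.hurwitzZetaOdd a s)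
      (fun s : ℝ ↦ ((∑' n, hurwitzOddTerm a n s : ℝ) : ℂ) / 2) (Set.Ioc 1 2) :=
    fun s hs ↦ hurwitzZetaOdd_eq_tsum ha hs.1
  simpa using heq.of_subset_closure hcont' hcont Set.Ioc_subset_Icc_self
    (closure_Ioc (by norm_num : (1 : ℝ) ≠ 2)).ge (Set.left_mem_Icc.mpr one_le_two)

theorem sum_range_hurwitzOddTerm_one (M : ℕ) :
    ((∑ n ∈ Finset.range M, hurwitzOddTerm a n 1 : ℝ) : ℂ) =
      1 / a + ∑ n ∈ Finset.range M, (1 / ((a : ℂ) - (n + 1)) + 1 / (a + (n + 1))) -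
        1 / ((M : ℂ) + a) := by
  induction M with
  | zero => simp
  | succ M ih =>
    rw [Finset.sum_range_succ, Complex.ofReal_add, ih, Finset.sum_range_succ]
    simp only [hurwitzOddTerm, Real.rpow_neg_one]
    push_cast
    rw [show (a : ℂ) - (M + 1) = -(M + 1 - a) by ring, show (a : ℂ) + (M + 1) = M + 1 + a by ring]
    simp only [one_div, inv_neg]
    ring

theorem ofReal_mem_integerComplement (ha : a ∈ Set.Ioo 0 1) : (a : ℂ) ∈ integerComplement := by
  rintro ⟨n, hn⟩
  obtain rfl : (n : ℝ) = a := by exact_mod_cast hn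
  have h₀ : 0 < n := by exact_mod_cast ha.1
  have h₁ : n < 1 := by exact_mod_cast ha.2
  omega

theorem tsum_hurwitzOddTerm_one (ha : a ∈ Set.Ioo 0 1) :
    ((∑' n, hurwitzOddTerm a n 1 : ℝ) : ℂ) = Real.pi * cot (Real.pi * a) := by
  have hZ := ofReal_mem_integerComplement ha
  have hsummable : Summable fun n ↦ hurwitzOddTerm a n 1 :=
    (summable_hurwitzOddTerm_bound _).of_norm_bounded
      fun n ↦ norm_hurwitzOddTerm_le ha n (Set.left_mem_Icc.mpr one_le_two)
  have hcot : Tendsto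
      (fun M ↦ ∑ n ∈ Finset.range M, (1 / ((a : ℂ) - (n + 1)) + 1 / (a + (n + 1))))
      atTop (𝓝 (Real.pi * cot (Real.pi * a) - 1 / a)) := by
    rw [cot_series_rep' hZ]
    exact (summable_cotTerm hZ).hasSum.tendsto_sum_nat
  have hend : Tendsto (fun M : ℕ ↦ 1 / ((M : ℂ) + a)) atTop (𝓝 0) := by
    have hatTop : Tendsto (fun M : ℕ ↦ (M : ℝ) + a) atTop atTop :=
      tendsto_atTop_add_const_right _ _ tendsto_natCast_atTop_atTop
    simpa [Function.comp_def] using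
      (Complex.continuous_ofReal.tendsto 0).comp hatTop.inv_tendsto_atTop
  have hlim : Tendsto (fun M ↦ ((∑ n ∈ Finset.range M, hurwitzOddTerm a n 1 : ℝ) : ℂ)) atTop
      (𝓝 (1 / a + (Real.pi * cot (Real.pi * a) - 1 / a) - 0)) := by
    simp_rw [sum_range_hurwitzOddTerm_one]
    exact (hcot.const_add _).sub hend
  rw [tendsto_nhds_unique
    ((Complex.continuous_ofReal.tendsto _).comp hsummable.hasSum.tendsto_sum_nat) hlim]
  ring

theorem hurwitzZetaOdd_one (ha : a ∈ Set.Ioo 0 1) :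
    HurwitzZeta.hurwitzZetaOdd a 1 = Real.pi / 2 * cot (Real.pi * a) := by
  rw [hurwitzZetaOdd_one_eq_tsum ha, tsum_hurwitzOddTerm_one ha]
  ring

end HurwitzZetaOdd

section DirichletLFunctionOne

variable {N : ℕ} [NeZero N]

theorem sum_zmod_val_eq_sum_range {M : Type*} [AddCommMonoid M] (g : ℕ → M) :
    ∑ j : ZMod N, g j.val = ∑ k ∈ Finset.range N, g k :=
  Finset.sum_nbij' ZMod.val (fun k ↦ (k : ZMod N))
    (fun j _ ↦ Finset.mem_range.mpr (ZMod.val_lt j)) (fun _ _ ↦ Finset.mem_univ _)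
    (fun j _ ↦ ZMod.natCast_zmod_val j)
    (fun _ hk ↦ ZMod.val_cast_of_lt (Finset.mem_range.mp hk)) (fun _ _ ↦ rfl)

theorem sum_range_mul_pow_mul_sub_one {R : Type*} [CommRing R] (e : R) (n : ℕ) :
    (∑ k ∈ Finset.range n, (k : R) * e ^ k) * (e - 1) =
      n * e ^ n - e * ∑ k ∈ Finset.range n, e ^ k := by
  induction n with
  | zero => simp
  | succ n ih =>
    rw [Finset.sum_range_succ, add_mul, ih, Finset.sum_range_succ]
    push_cast
    ring

theorem stdAddChar_ne_one {j : ZMod N} (hj : j ≠ 0) : ZMod.stdAddChar j ≠ 1 := by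
  rw [← AddChar.map_zero_eq_one (ZMod.stdAddChar (N := N))]
  exact ZMod.injective_stdAddChar.ne hj

theorem sum_val_mul_stdAddChar {j : ZMod N} (hj : j ≠ 0) :
    ∑ b : ZMod N, (b.val : ℂ) * ZMod.stdAddChar (b * j) = N / (ZMod.stdAddChar j - 1) := by
  set e := ZMod.stdAddChar j with he
  have he1 : e ≠ 1 := stdAddChar_ne_one hj
  have hpow (b : ZMod N) : ZMod.stdAddChar (b * j) = e ^ b.val := by
    rw [he, ← AddChar.map_nsmul_eq_pow, nsmul_eq_mul, ZMod.natCast_zmod_val]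
  have heN : e ^ N = 1 := by
    rw [he, ← AddChar.map_nsmul_eq_pow]
    simp
  simp only [hpow]
  rw [sum_zmod_val_eq_sum_range fun k ↦ (k : ℂ) * e ^ k, eq_div_iff (sub_ne_zero.mpr he1),
    sum_range_mul_pow_mul_sub_one, geom_sum_eq he1, heN]
  simp

theorem cot_pi_mul_val_div {j : ZMod N} (hj : j ≠ 0) :
    cot (Real.pi * ((j.val / N : ℝ) : ℂ)) = I * (1 + 2 / (ZMod.stdAddChar j - 1)) := by
  have hexp : exp (2 * Real.pi * I * ((j.val / N : ℝ) : ℂ)) = ZMod.stdAddChar j := by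
    have hcoe := ZMod.stdAddChar_coe (N := N) (j.val : ℤ)
    rw [Int.cast_natCast, ZMod.natCast_zmod_val] at hcoe
    rw [hcoe]
    push_cast
    ring_nf
  have he1 := sub_ne_zero.mpr (stdAddChar_ne_one hj)
  rw [cot_pi_eq_exp_ratio, hexp, ← neg_sub,
    div_eq_iff (mul_ne_zero I_ne_zero (neg_ne_zero.mpr he1))]
  linear_combination (ZMod.stdAddChar j - 1) * (1 + 2 / (ZMod.stdAddChar j - 1)) * I_mul_I -
    2 * div_mul_cancel₀ 1 he1

variable {χ : DirichletCharacter ℂ N}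

theorem hurwitzZetaOdd_toAddCircle_one {j : ZMod N} (hj : j ≠ 0) :
    HurwitzZeta.hurwitzZetaOdd (ZMod.toAddCircle j) 1 =
      Real.pi / 2 * I +
        Real.pi * I / N * ∑ b : ZMod N, (b.val : ℂ) * ZMod.stdAddChar (b * j) := by
  have hN : (0 : ℝ) < N := Nat.cast_pos.mpr (NeZero.pos N)
  have hmem : (j.val / N : ℝ) ∈ Set.Ioo (0 : ℝ) 1 :=
    ⟨div_pos (Nat.cast_pos.mpr (ZMod.val_pos.mpr hj)) hN,
      (div_lt_one hN).mpr (Nat.cast_lt.mpr (ZMod.val_lt j))⟩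
  rw [ZMod.toAddCircle_apply, hurwitzZetaOdd_one hmem, cot_pi_mul_val_div hj,
    sum_val_mul_stdAddChar hj]
  have := NeZero.ne (N : ℂ)
  field_simp

theorem LFunction_one_of_isPrimitive_of_odd (hχ : χ.IsPrimitive) (hodd : χ.Odd) :
    χ.LFunction 1 = Real.pi * I / N ^ 2 *
      (gaussSum χ ZMod.stdAddChar * ∑ b : ZMod N, χ⁻¹ b * b.val) := by
  have hχ1 : χ ≠ 1 := by
    rintro rfl
    have h := hodd
    rw [DirichletCharacter.Odd, MulChar.one_apply isUnit_one.neg] at h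
    norm_num at h
  have hterm (j : ZMod N) : χ j * HurwitzZeta.hurwitzZetaOdd (ZMod.toAddCircle j) 1 =
      Real.pi / 2 * I * χ j +
        Real.pi * I / N * ∑ b : ZMod N, b.val * (χ j * ZMod.stdAddChar (b * j)) := by
    rcases eq_or_ne j 0 with rfl | hj
    · simp [hodd.to_fun.map_zero]
    · rw [hurwitzZetaOdd_toAddCircle_one hj]
      simp only [mul_left_comm _ (χ j), ← Finset.mul_sum]
      ring
  have hgauss (b : ZMod N) : ∑ j, χ j * ZMod.stdAddChar (b * j) =
      χ⁻¹ b * gaussSum χ ZMod.stdAddChar := by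
    rw [← gaussSum_mulShift_of_isPrimitive _ hχ b]
    rfl
  rw [DirichletCharacter.LFunction, ZMod.LFunction_def_odd hodd.to_fun]
  simp only [hterm, Finset.sum_add_distrib, ← Finset.mul_sum, MulChar.sum_eq_zero_of_ne_one hχ1]
  rw [Finset.sum_comm]
  simp only [← Finset.mul_sum, hgauss, cpow_neg_one]
  rw [Finset.mul_sum, Finset.mul_sum, mul_zero, zero_add, Finset.mul_sum, Finset.mul_sum]
  exact Finset.sum_congr rfl fun b _ ↦ by field_simp

end DirichletLFunctionOne

section LegendreCharacter

variable (l : ℕ) [Fact l.Prime]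

/-- The Legendre symbol modulo `l` as a complex Dirichlet character. -/
noncomputable def legendreChar : DirichletCharacter ℂ l :=
  (quadraticChar (ZMod l)).ringHomComp (Int.castRingHom ℂ)

/-- The first moment `∑ j (j / l)`, over `0 ≤ j < l`, of the Legendre symbol. For
`l ≡ 3 (mod 4)`, `l > 3` it is `-l` times the class number of `ℚ(√-l)`. -/
noncomputable def legendreMoment : ℤ :=
  ∑ j : ZMod l, quadraticChar (ZMod l) j * (j.val : ℤ)

variable {l}

theorem legendreChar_apply (j : ZMod l) :
    legendreChar l j = ((quadraticChar (ZMod l) j : ℤ) : ℂ) := by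
  simp [legendreChar, MulChar.ringHomComp_apply]

theorem legendreChar_isQuadratic : (legendreChar l).IsQuadratic :=
  (quadraticChar_isQuadratic (ZMod l)).comp _

theorem ringChar_zmod_ne_two (hl : l % 4 = 3) : ringChar (ZMod l) ≠ 2 := by
  rw [ZMod.ringChar_zmod_n]
  lia

theorem quadraticChar_zmod_neg_one (hl : l % 4 = 3) : quadraticChar (ZMod l) (-1) = -1 := by
  rw [quadraticChar_neg_one (ringChar_zmod_ne_two hl), ZMod.card, ZMod.χ₄_nat_three_mod_four hl]

theorem legendreChar_odd (hl : l % 4 = 3) : (legendreChar l).Odd := by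
  rw [DirichletCharacter.Odd, legendreChar_apply, quadraticChar_zmod_neg_one hl]
  simp

theorem legendreChar_ne_one (hl : l % 4 = 3) : legendreChar l ≠ 1 :=
  (MulChar.ringHomComp_ne_one_iff (RingHom.injective_int _)).mpr
    (quadraticChar_ne_one (ringChar_zmod_ne_two hl))

theorem isPrimitive_of_prime_of_ne_one {R : Type*} [CommMonoidWithZero R]
    {χ : DirichletCharacter R l} (hχ : χ ≠ 1) : χ.IsPrimitive :=
  ((Nat.dvd_prime Fact.out).mp χ.conductor_dvd_level).resolve_left
    fun h ↦ hχ ((DirichletCharacter.eq_one_iff_conductor_eq_one (χ := χ)).mpr h)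

theorem norm_gaussSum_legendreChar (hl : l % 4 = 3) :
    ‖gaussSum (legendreChar l) (ZMod.stdAddChar (N := l))‖ = √l := by
  have h : ‖gaussSum (legendreChar l) (ZMod.stdAddChar (N := l)) ^ 2‖ =
      ‖legendreChar l (-1) * Fintype.card (ZMod l)‖ :=
    congrArg norm (gaussSum_sq (legendreChar_ne_one hl) legendreChar_isQuadratic
      (ZMod.isPrimitive_stdAddChar l))
  rw [show legendreChar l (-1) = -1 from legendreChar_odd hl, norm_pow, norm_mul, norm_neg,
    norm_one, one_mul, ZMod.card, norm_natCast] at h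
  rw [← h, Real.sqrt_sq (norm_nonneg _)]

theorem norm_LFunction_legendreChar_one (hl : l % 4 = 3) :
    ‖(legendreChar l).LFunction 1‖ = Real.pi * |(legendreMoment l : ℝ)| / (l * √l) := by
  have hmoment : ∑ b : ZMod l, (legendreChar l)⁻¹ b * b.val = legendreMoment l := by
    simp [legendreChar_isQuadratic.inv, legendreChar_apply, legendreMoment]
  have hl0 : (0 : ℝ) < l := Nat.cast_pos.mpr (NeZero.pos l)
  rw [LFunction_one_of_isPrimitive_of_odd (isPrimitive_of_prime_of_ne_one (legendreChar_ne_one hl))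
    (legendreChar_odd hl), hmoment]
  simp only [norm_mul, norm_div, norm_pow, norm_I, norm_natCast, norm_intCast, norm_real,
    norm_gaussSum_legendreChar hl, Real.norm_of_nonneg Real.pi_pos.le, mul_one]
  rw [div_mul_eq_mul_div, div_eq_div_iff (by positivity) (by positivity)]
  linear_combination Real.pi * |(legendreMoment l : ℝ)| * l * Real.mul_self_sqrt hl0.le

end LegendreCharacter

section QuadraticAlgebra

variable {R : Type*} [CommRing R] {a b : R}

theorem quadraticAlgebra_basis_zero : QuadraticAlgebra.basis a b 0 = 1 := by
  apply (QuadraticAlgebra.basis a b).repr.injective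
  ext i
  fin_cases i <;> simp [QuadraticAlgebra.basis_repr_apply, QuadraticAlgebra.re_one,
    QuadraticAlgebra.im_one]

theorem quadraticAlgebra_basis_one : QuadraticAlgebra.basis a b 1 = QuadraticAlgebra.omega := by
  apply (QuadraticAlgebra.basis a b).repr.injective
  ext i
  fin_cases i <;> simp [QuadraticAlgebra.basis_repr_apply]

theorem algebra_norm_eq_quadraticAlgebra_norm (z : QuadraticAlgebra R a b) :
    Algebra.norm R z = z.norm := by
  rw [← QuadraticAlgebra.det_toLinearMap_eq_norm]
  rfl

theorem algebra_trace_eq_quadraticAlgebra_trace (z : QuadraticAlgebra R a b) :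
    Algebra.trace R _ z = z.trace := by
  rw [Algebra.trace_eq_matrix_trace (QuadraticAlgebra.basis a b), Matrix.trace_fin_two,
    QuadraticAlgebra.trace_def, Algebra.leftMulMatrix_eq_repr_mul,
    Algebra.leftMulMatrix_eq_repr_mul, quadraticAlgebra_basis_zero, quadraticAlgebra_basis_one]
  simp [QuadraticAlgebra.basis_repr_apply]
  ring

theorem four_mul_quadraticAlgebra_norm (z : QuadraticAlgebra R a b) :
    4 * z.norm = (2 * z.re + b * z.im) ^ 2 - (b ^ 2 + 4 * a) * z.im ^ 2 := by
  rw [QuadraticAlgebra.norm_def]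
  ring

theorem eq_zero_of_quadraticAlgebra_norm_eq_zero [LinearOrder R] [IsStrictOrderedRing R]
    (hab : b ^ 2 + 4 * a < 0) {z : QuadraticAlgebra R a b} (hz : z.norm = 0) : z = 0 := by
  have h := four_mul_quadraticAlgebra_norm z
  rw [hz, mul_zero] at h
  have him : z.im = 0 := by
    by_contra hne
    nlinarith [sq_nonneg (2 * z.re + b * z.im), sq_pos_of_ne_zero hne]
  have hre : z.re = 0 := by simpa [him] using h.symm
  ext
  · exact hre
  · exact him

theorem injective_of_quadraticAlgebra_norm {A : Type*} [Ring A] [Algebra R A] [FaithfulSMul R A]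
    (hnorm : ∀ z : QuadraticAlgebra R a b, z.norm = 0 → z = 0)
    (g : QuadraticAlgebra R a b →ₐ[R] A) : Function.Injective g := by
  rw [injective_iff_map_eq_zero]
  intro z hz
  apply hnorm
  apply FaithfulSMul.algebraMap_injective R A
  rw [← g.commutes, QuadraticAlgebra.algebraMap_norm_eq_mul_star, map_mul, hz, zero_mul, map_zero]

end QuadraticAlgebra

section QuadraticOrder

variable {S : Type*} [CommRing S] {m : ℤ} (e : QuadraticAlgebra ℤ (-m) 1 ≃ₐ[ℤ] S)
include e

theorem add_mul_omega_eq (a b : ℤ) : a + b * e QuadraticAlgebra.omega = e ⟨a, b⟩ := by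
  rw [QuadraticAlgebra.mk_eq_add_smul_omega, map_add, map_smul, e.commutes]
  simp [zsmul_eq_mul]

theorem exists_add_mul_omega (x : S) : ∃ a b : ℤ, x = a + b * e QuadraticAlgebra.omega := by
  obtain ⟨⟨a, b⟩, rfl⟩ := e.surjective x
  exact ⟨a, b, (add_mul_omega_eq e a b).symm⟩

theorem omega_sq : e QuadraticAlgebra.omega ^ 2 = e QuadraticAlgebra.omega - m := by
  rw [← map_pow, pow_two, QuadraticAlgebra.omega_mul_omega_eq_mk, ← add_mul_omega_eq]
  simp
  ring

theorem two_mul_omega_sub_one_sq :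
    (2 * e QuadraticAlgebra.omega - 1) ^ 2 = ((1 - 4 * m : ℤ) : S) := by
  push_cast
  linear_combination 4 * omega_sq e

theorem norm_add_mul_omega (a b : ℤ) :
    Algebra.norm ℤ (a + b * e QuadraticAlgebra.omega) = a ^ 2 + a * b + m * b ^ 2 := by
  rw [add_mul_omega_eq, Algebra.norm_eq_of_algEquiv, algebra_norm_eq_quadraticAlgebra_norm,
    QuadraticAlgebra.norm_def]
  ring

theorem dvd_of_intCast_dvd_add_mul_omega {n a b : ℤ}
    (h : (n : S) ∣ a + b * e QuadraticAlgebra.omega) : n ∣ a ∧ n ∣ b := by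
  rw [add_mul_omega_eq, ← map_intCast e, map_dvd_iff] at h
  exact QuadraticAlgebra.algebraMap_dvd_iff.mp h

theorem units_eq_one_or_neg_one (hm : 1 < m) (u : Sˣ) : u = 1 ∨ u = -1 := by
  obtain ⟨a, b, h⟩ := exists_add_mul_omega e (u : S)
  have hunit : IsUnit (Algebra.norm ℤ (u : S)) := u.isUnit.map _
  rw [h, norm_add_mul_omega, Int.isUnit_iff] at hunit
  have hnorm : a ^ 2 + a * b + m * b ^ 2 = 1 := hunit.resolve_right (by
    nlinarith [sq_nonneg (2 * a + b), sq_nonneg b])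
  have hb : b = 0 := by
    by_contra hb
    have hb2 : 1 ≤ b ^ 2 := sq_pos_of_ne_zero hb
    nlinarith [sq_nonneg (2 * a + b)]
  subst hb
  rcases sq_eq_one_iff.mp (by simpa using hnorm : a ^ 2 = 1) with rfl | rfl
  · exact Or.inl (Units.ext (by simp [h]))
  · exact Or.inr (Units.ext (by simp [h]))

end QuadraticOrder

section QuadraticRingOfIntegers

open NumberField

theorem exists_int_eq_two_mul {l : ℕ} (hl : Squarefree l) {v : ℚ} {k : ℤ}
    (h : l * (2 * v) ^ 2 = k) : ∃ B : ℤ, (B : ℚ) = 2 * v := by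
  have hsq : (l * (2 * v)) ^ 2 = (l * k : ℤ) := by
    push_cast
    rw [← h]
    ring
  have hint : IsIntegral ℤ (l * (2 * v) : ℚ) :=
    .of_pow two_pos (hsq ▸ isIntegral_algebraMap (R := ℤ) (A := ℚ))
  obtain ⟨C, hC⟩ := IsIntegrallyClosed.isIntegral_iff.mp hint
  rw [eq_intCast] at hC
  have hC2 : C ^ 2 = l * k := by
    rw [← hC] at hsq
    exact_mod_cast hsq
  obtain ⟨B, rfl⟩ := ((Int.squarefree_natCast.mpr hl).dvd_pow_iff_dvd two_ne_zero).mp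
    (Dvd.intro k hC2.symm)
  refine ⟨B, mul_left_cancel₀ (Nat.cast_ne_zero.mpr hl.ne_zero) ?_⟩
  exact_mod_cast hC

theorem int_emod_two_eq_of_four_dvd {l : ℕ} (hl : l % 4 = 3) {A B : ℤ}
    (h : 4 ∣ A ^ 2 + l * B ^ 2) : A % 2 = B % 2 := by
  have hmod : ((A : ZMod 4)) ^ 2 = (B : ZMod 4) ^ 2 := by
    have h4 := (ZMod.intCast_zmod_eq_zero_iff_dvd _ 4).mpr h
    have hl4 : ((l : ℕ) : ZMod 4) = -1 := by
      rw [← ZMod.natCast_mod l 4, hl]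
      decide
    push_cast [hl4] at h4
    linear_combination h4
  have hdvd : (4 : ℤ) ∣ (A - B) * (A + B) := by
    apply (ZMod.intCast_zmod_eq_zero_iff_dvd _ 4).mp
    push_cast
    linear_combination hmod
  have h2 : (2 : ℤ) ∣ (A - B) * (A + B) := dvd_trans (by norm_num) hdvd
  rcases Int.prime_two.dvd_or_dvd h2 with h | h <;> omega

/-- The half-integrality of elements with integral trace `2 u` and norm `u² + lv²`. -/
theorem exists_int_add_half_mul {l : ℕ} (hl : Squarefree l) (hl4 : l % 4 = 3) {u v : ℚ} {A n : ℤ}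
    (hA : 2 * u = A) (hn : u ^ 2 + l * v ^ 2 = n) : ∃ a b : ℤ, u = a + b / 2 ∧ v = b / 2 := by
  obtain ⟨B, hB⟩ := exists_int_eq_two_mul hl (v := v) (k := 4 * n - A ^ 2) (by
    push_cast
    rw [← hA, ← hn]
    ring)
  have hBA : A ^ 2 + l * B ^ 2 = 4 * n := by
    have : (A : ℚ) ^ 2 + l * B ^ 2 = 4 * n := by
      rw [← hA, ← hn, hB]
      ring
    exact_mod_cast this
  have hpar := int_emod_two_eq_of_four_dvd hl4 (Dvd.intro n hBA.symm)
  obtain ⟨a, ha⟩ : ∃ a, A = 2 * a + B := ⟨(A - B) / 2, by omega⟩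
  refine ⟨a, B, ?_, by linarith⟩
  rw [ha] at hA
  push_cast at hA
  linarith

variable {K : Type*} [Field K] [NumberField K]

theorem exists_quadraticAlgebra_rat_algEquiv (hK : Module.finrank ℚ K = 2) {l : ℕ} (hl : 0 < l)
    {s : K} (hs : s ^ 2 = -(l : K)) :
    ∃ e : QuadraticAlgebra ℚ (-l) 0 ≃ₐ[ℚ] K, e QuadraticAlgebra.omega = s := by
  let g : QuadraticAlgebra ℚ (-l : ℚ) 0 →ₐ[ℚ] K :=
    QuadraticAlgebra.lift ⟨s, by simp [← pow_two, hs, Algebra.smul_def]⟩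
  have hg : Function.Injective g := injective_of_quadraticAlgebra_norm (fun z ↦
    eq_zero_of_quadraticAlgebra_norm_eq_zero (by simpa using hl)) g
  have hbij : Function.Bijective g :=
    ⟨hg, (LinearMap.injective_iff_surjective_of_finrank_eq_finrank (f := g.toLinearMap)
      (by rw [hK, QuadraticAlgebra.finrank_eq_two])).mp hg⟩
  exact ⟨AlgEquiv.ofBijective g hbij, by simp [g]⟩

theorem exists_int_add_half_mul_of_isIntegral (hK : Module.finrank ℚ K = 2) {l : ℕ}
    (hl : Squarefree l) (hl4 : l % 4 = 3) {s : K} (hs : s ^ 2 = -(l : K)) {x : K}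
    (hx : IsIntegral ℤ x) : ∃ a b : ℤ, x = a + b * ((1 + s) / 2) := by
  obtain ⟨e, he⟩ := exists_quadraticAlgebra_rat_algEquiv hK (Nat.pos_of_ne_zero hl.ne_zero) hs
  obtain ⟨⟨u, v⟩, rfl⟩ := e.surjective x
  obtain ⟨A, hA⟩ := IsIntegrallyClosed.isIntegral_iff.mp (Algebra.isIntegral_trace (L := ℚ) hx)
  obtain ⟨n, hn⟩ := IsIntegrallyClosed.isIntegral_iff.mp (Algebra.isIntegral_norm ℚ hx)
  rw [Algebra.trace_eq_of_algEquiv, algebra_trace_eq_quadraticAlgebra_trace,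
    QuadraticAlgebra.trace_def] at hA
  rw [Algebra.norm_eq_of_algEquiv, algebra_norm_eq_quadraticAlgebra_norm,
    QuadraticAlgebra.norm_def] at hn
  simp only [eq_intCast, zero_mul, add_zero] at hA hn
  obtain ⟨a, b, rfl, rfl⟩ := exists_int_add_half_mul hl hl4 (v := v) hA.symm
    (by rw [hn]; ring)
  refine ⟨a, b, ?_⟩
  rw [QuadraticAlgebra.mk_eq_add_smul_omega, map_add, map_smul, he, Algebra.smul_def, e.commutes]
  simp
  ring

theorem nonempty_quadraticAlgebra_algEquiv_ringOfIntegers (hK : Module.finrank ℚ K = 2) {l : ℕ}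
    {m : ℤ} (hl : Squarefree l) (hm : l = 4 * m - 1) {s : K} (hs : s ^ 2 = -(l : K)) :
    Nonempty (QuadraticAlgebra ℤ (-m) 1 ≃ₐ[ℤ] 𝓞 K) := by
  have hmK : (l : K) = 4 * m - 1 := by exact_mod_cast congrArg (Int.cast : ℤ → K) hm
  have hθ : ((1 + s) / 2) ^ 2 = (1 + s) / 2 - (m : K) := by
    linear_combination hs / 4 - hmK / 4
  have hint : IsIntegral ℤ ((1 + s) / 2) := by
    refine ⟨X ^ 2 - X + C m, by monicity!, ?_⟩
    simp only [eval₂_add, eval₂_sub, eval₂_pow, eval₂_X, eval₂_C, hθ]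
    simp
  let θ : 𝓞 K := ⟨(1 + s) / 2, hint⟩
  let g : QuadraticAlgebra ℤ (-m) 1 →ₐ[ℤ] 𝓞 K := QuadraticAlgebra.lift ⟨θ, by
    apply RingOfIntegers.ext
    simp only [map_mul, map_add, map_zsmul, map_one]
    change (1 + s) / 2 * ((1 + s) / 2) = _ • 1 + _ • ((1 + s) / 2)
    rw [← pow_two, hθ]
    simp
    ring⟩
  have hg : Function.Injective g := injective_of_quadraticAlgebra_norm (fun z ↦
    eq_zero_of_quadraticAlgebra_norm_eq_zero (by have := hl.ne_zero; omega)) g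
  refine ⟨AlgEquiv.ofBijective g ⟨hg, fun x ↦ ?_⟩⟩
  obtain ⟨a, b, hab⟩ := exists_int_add_half_mul_of_isIntegral hK hl (by omega) hs x.isIntegral_coe
  refine ⟨⟨a, b⟩, FaithfulSMul.algebraMap_injective (𝓞 K) K ?_⟩
  rw [hab, QuadraticAlgebra.mk_eq_add_smul_omega, map_add, map_smul, g.commutes]
  have hθK : algebraMap (𝓞 K) K θ = (1 + s) / 2 := rfl
  simp [g, zsmul_eq_mul, hθK]

theorem regulator_eq_one_of_rank_eq_zero (hK : Units.rank K = 0) : Units.regulator K = 1 := by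
  classical
  have : IsEmpty {w : InfinitePlace K // w ≠ Units.dirichletUnitTheorem.w₀} :=
    Fintype.card_eq_zero_iff.mp (by rw [← Fintype.card_congr (Units.equivFinRank K), hK]; simp)
  rw [Units.regulator_eq_det', Matrix.det_isEmpty]
  simp

variable {m : ℤ} (e : QuadraticAlgebra ℤ (-m) 1 ≃ₐ[ℤ] 𝓞 K)
include e

theorem finrank_eq_two : Module.finrank ℚ K = 2 := by
  rw [← RingOfIntegers.rank, ← e.toLinearEquiv.finrank_eq, QuadraticAlgebra.finrank_eq_two]

theorem discr_eq : discr K = 1 - 4 * m := by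
  have htrace (z : QuadraticAlgebra ℤ (-m) 1) : Algebra.trace ℤ (𝓞 K) (e z) = z.trace := by
    rw [Algebra.trace_eq_of_algEquiv, algebra_trace_eq_quadraticAlgebra_trace]
  rw [← discr_eq_discr K ((QuadraticAlgebra.basis _ _).map e.toLinearEquiv), Algebra.discr_def,
    Matrix.det_fin_two]
  simp only [Algebra.traceMatrix_apply, Algebra.traceForm_apply, Module.Basis.map_apply,
    AlgEquiv.toLinearEquiv_apply, ← map_mul, htrace, quadraticAlgebra_basis_zero,
    quadraticAlgebra_basis_one, one_mul, mul_one, QuadraticAlgebra.omega_mul_omega_eq_mk,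
    QuadraticAlgebra.trace_one, QuadraticAlgebra.trace_omega]
  rw [QuadraticAlgebra.trace_def]
  ring

section Imaginary

variable (hm : 0 < m)
include hm

theorem nrRealPlaces_eq_zero : InfinitePlace.nrRealPlaces K = 0 := by
  rw [nrRealPlaces_eq_zero_iff]
  refine ⟨fun w ↦ InfinitePlace.not_isReal_iff_isComplex.mp ?_⟩
  rintro ⟨φ, hφ, -⟩
  have h := congrArg (fun x : 𝓞 K ↦ hφ.embedding (x : K)) (two_mul_omega_sub_one_sq e)
  simp only [map_pow, map_intCast] at h
  have hneg : ((1 - 4 * m : ℤ) : ℝ) < 0 := by exact_mod_cast (by omega : 1 - 4 * m < 0)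
  exact absurd (h ▸ sq_nonneg _) hneg.not_ge

theorem nrComplexPlaces_eq_one : InfinitePlace.nrComplexPlaces K = 1 := by
  have h := InfinitePlace.card_add_two_mul_card_eq_rank K
  rw [nrRealPlaces_eq_zero e hm, finrank_eq_two e] at h
  omega

theorem regulator_eq_one : Units.regulator K = 1 := by
  apply regulator_eq_one_of_rank_eq_zero
  rw [Units.rank, InfinitePlace.card_eq_nrRealPlaces_add_nrComplexPlaces,
    nrRealPlaces_eq_zero e hm, nrComplexPlaces_eq_one e hm]

end Imaginary

section OneLT

variable (hm : 1 < m)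
include hm

theorem torsionOrder_eq_two : Units.torsionOrder K = 2 := by
  classical
  have hle : Units.torsionOrder K ≤ 2 := by
    have hinj : Function.Injective fun x : Units.torsion K ↦ decide ((x : (𝓞 K)ˣ) = 1) := by
      intro x y hxy
      rw [decide_eq_decide] at hxy
      apply Subtype.ext
      rcases units_eq_one_or_neg_one e hm x with hx | hx <;>
        rcases units_eq_one_or_neg_one e hm y with hy | hy <;> simp_all
    exact (Nat.card_le_card_of_injective _ hinj).trans_eq (by simp)
  obtain ⟨k, hk⟩ := Units.even_torsionOrder K
  have := Units.torsionOrder_pos K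
  omega

theorem dedekindZeta_residue_eq :
    dedekindZeta_residue K = Real.pi * classNumber K / √(4 * m - 1) := by
  have hm0 : 0 < m := one_pos.trans hm
  rw [dedekindZeta_residue_def, regulator_eq_one e hm0, torsionOrder_eq_two e hm, discr_eq e,
    nrRealPlaces_eq_zero e hm0, nrComplexPlaces_eq_one e hm0,
    show |((1 - 4 * m : ℤ) : ℝ)| = 4 * m - 1 by
      rw [abs_of_neg (by exact_mod_cast (by omega : 1 - 4 * m < 0))]
      push_cast
      ring]
  push_cast
  ring

end OneLT

end QuadraticRingOfIntegers

section QuadraticCongruence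

variable {l q : ℕ} [Fact l.Prime] [Fact q.Prime]

theorem legendreSym_neg_of_mod_four_eq_three (hl : l % 4 = 3) (hq : q ≠ 2) :
    legendreSym q (-l) = legendreSym l q := by
  have hodd : q % 2 = 1 := (Nat.Prime.mod_two_eq_one_iff_ne_two Fact.out).mpr hq
  rw [← neg_one_mul, legendreSym.mul, legendreSym.at_neg_one hq]
  rcases (by omega : q % 4 = 1 ∨ q % 4 = 3) with h4 | h4
  · rw [ZMod.χ₄_nat_one_mod_four h4, one_mul,
      legendreSym.quadratic_reciprocity_one_mod_four h4 (by omega)]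
  · rw [ZMod.χ₄_nat_three_mod_four h4, legendreSym.quadratic_reciprocity_three_mod_four hl h4]
    ring

theorem exists_dvd_sq_sub_add_iff_of_ne_two {m : ℤ} (hm : l = 4 * m - 1) (hql : q ≠ l)
    (hq : q ≠ 2) : (∃ c : ℤ, (q : ℤ) ∣ c ^ 2 - c + m) ↔ legendreSym l q = 1 := by
  have hlq : ((-l : ℤ) : ZMod q) ≠ 0 := by
    simpa using ZMod.prime_ne_zero q l hql
  have hq2 : (2 : ZMod q) ≠ 0 := by
    exact_mod_cast ZMod.prime_ne_zero q 2 hq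
  have hmq : (l : ZMod q) = 4 * m - 1 := by
    exact_mod_cast congrArg (Int.cast : ℤ → ZMod q) hm
  rw [← legendreSym_neg_of_mod_four_eq_three (by omega) hq, legendreSym.eq_one_iff q hlq]
  simp only [← ZMod.intCast_zmod_eq_zero_iff_dvd]
  push_cast
  constructor
  · rintro ⟨c, hc⟩
    exact ⟨2 * c - 1, by linear_combination (-4) * hc - hmq⟩
  · rintro ⟨d, hd⟩
    obtain ⟨c, hc⟩ := ZMod.intCast_surjective ((1 + d) / 2)
    have hd' : d = 2 * c - 1 := by
      rw [hc]
      field_simp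
      ring
    refine ⟨c, mul_left_cancel₀ (mul_ne_zero hq2 hq2) ?_⟩
    rw [hd'] at hd
    linear_combination (-1) * hd - hmq

omit [Fact q.Prime] in
theorem exists_two_dvd_sq_sub_add_iff {m : ℤ} (hm : l = 4 * m - 1) :
    (∃ c : ℤ, 2 ∣ c ^ 2 - c + m) ↔ legendreSym l 2 = 1 := by
  have heven (c : ℤ) : 2 ∣ c ^ 2 - c := by
    rw [pow_two, ← mul_sub_one]
    exact (Int.even_mul_pred_self c).two_dvd
  have hsym : legendreSym l 2 = if l % 8 = 7 then 1 else -1 := by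
    rw [legendreSym.at_two (by omega), ZMod.χ₈_nat_eq_if_mod_eight]
    split_ifs <;> omega
  simp only [dvd_add_right (heven _), exists_const, hsym]
  split_ifs <;> simp <;> omega

/-- `X² - X + m`, of discriminant `-l`, has a root modulo `q` iff `q` splits. -/
theorem exists_dvd_sq_sub_add_iff {m : ℤ} (hm : l = 4 * m - 1) (hql : q ≠ l) :
    (∃ c : ℤ, (q : ℤ) ∣ c ^ 2 - c + m) ↔ legendreSym l q = 1 := by
  by_cases hq : q = 2
  · subst hq
    exact exists_two_dvd_sq_sub_add_iff hm
  · exact exists_dvd_sq_sub_add_iff_of_ne_two hm hql hq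

end QuadraticCongruence

section PrimeIdeals

open NumberField

variable {K : Type*} [Field K] [NumberField K] {q : ℕ}

theorem exists_isMaximal_mem_dvd_of_dvd_absNorm (hq : q.Prime) {I : Ideal (𝓞 K)}
    (h : q ∣ I.absNorm) : ∃ P : Ideal (𝓞 K), P.IsMaximal ∧ (q : 𝓞 K) ∈ P ∧ P ∣ I := by
  obtain ⟨P, hP, hPq, hPI⟩ := Ideal.exists_isMaximal_dvd_of_dvd_absNorm' hq I h
  have hmem : (q : ℤ) ∈ P.under ℤ := hPq ▸ Ideal.mem_span_singleton_self _
  exact ⟨P, hP, by simpa [Ideal.mem_comap] using hmem, hPI⟩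

theorem isMaximal_of_prime_absNorm {P : Ideal (𝓞 K)} (hP : P.absNorm.Prime) : P.IsMaximal := by
  refine (Ideal.isPrime_of_irreducible_absNorm hP).isMaximal ?_
  rintro rfl
  simp [Nat.not_prime_zero] at hP

theorem natCast_mem_of_absNorm_eq {P : Ideal (𝓞 K)} (hPq : P.absNorm = q) : (q : 𝓞 K) ∈ P :=
  hPq ▸ P.absNorm_mem

omit [NumberField K] in
theorem dvd_of_intCast_mem {P : Ideal (𝓞 K)} (hP : P ≠ ⊤) (hq : q.Prime) (hqP : (q : 𝓞 K) ∈ P)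
    {z : ℤ} (hz : (z : 𝓞 K) ∈ P) : (q : ℤ) ∣ z := by
  by_contra hnd
  obtain ⟨u, v, huv⟩ := (Nat.prime_iff_prime_int.mp hq).coprime_iff_not_dvd.mpr hnd
  apply hP
  rw [Ideal.eq_top_iff_one, ← Int.cast_one, ← huv]
  push_cast
  exact P.add_mem (P.mul_mem_left _ hqP) (P.mul_mem_left _ hz)

theorem exists_intCast_sub_mem (hq : q.Prime) {P : Ideal (𝓞 K)} (hPq : P.absNorm = q) (x : 𝓞 K) :
    ∃ c : ℤ, x - c ∈ P := by
  have := Fact.mk hq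
  have hP : P ≠ ⊤ := (isMaximal_of_prime_absNorm (hPq ▸ hq)).ne_top
  have hone : (1 : 𝓞 K ⧸ P) ≠ 0 := fun h ↦
    hP ((Ideal.eq_top_iff_one P).mpr (Ideal.Quotient.eq_zero_iff_mem.mp h))
  have hcard : Nat.card (𝓞 K ⧸ P) = q := hPq
  obtain ⟨c, hc⟩ := mem_zmultiples_of_prime_card hcard hone (g' := Ideal.Quotient.mk P x)
  refine ⟨c, ?_⟩
  rw [← Ideal.Quotient.eq_zero_iff_mem, map_sub, ← hc]
  simp

omit [NumberField K] in
theorem eq_or_eq_of_span_eq_mul {P Q R : Ideal (𝓞 K)} (hP : P.IsMaximal) (hQ : Q.IsMaximal)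
    (hR : R.IsMaximal) (hPQ : Ideal.span {(q : 𝓞 K)} = P * Q) (hqR : (q : 𝓞 K) ∈ R) :
    R = P ∨ R = Q := by
  rcases hR.isPrime.mul_le.mp (hPQ ▸ (Ideal.span_singleton_le_iff_mem R).mpr hqR) with h | h
  · exact .inl (hP.eq_of_le hR.ne_top h).symm
  · exact .inr (hQ.eq_of_le hR.ne_top h).symm

theorem exists_span_eq_mul_of_not_isPrime (hK : Module.finrank ℚ K = 2) (hq : q.Prime)
    (h : ¬ (Ideal.span {(q : 𝓞 K)}).IsPrime) :
    ∃ P Q : Ideal (𝓞 K), P.absNorm = q ∧ Q.absNorm = q ∧ Ideal.span {(q : 𝓞 K)} = P * Q := by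
  have hN : (Ideal.span {(q : 𝓞 K)}).absNorm = q ^ 2 := by
    rw [Ideal.absNorm_span_natCast, RingOfIntegers.rank, hK]
  obtain ⟨P, hP, -, Q, hPQ⟩ := exists_isMaximal_mem_dvd_of_dvd_absNorm hq
    (I := Ideal.span {(q : 𝓞 K)}) (hN ▸ dvd_pow_self q two_ne_zero)
  have hmul : P.absNorm * Q.absNorm = q * q := by rw [← map_mul, ← hPQ, hN, pow_two]
  have hP1 : P.absNorm ≠ 1 := fun h1 ↦ hP.ne_top (Ideal.absNorm_eq_one_iff.mp h1)
  have hQ1 : Q.absNorm ≠ 1 := by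
    intro h1
    rw [Ideal.absNorm_eq_one_iff.mp h1, Ideal.mul_top] at hPQ
    exact h (hPQ ▸ hP.isPrime)
  obtain ⟨hPq, hQq⟩ := (Nat.Prime.mul_eq_prime_sq_iff hq hP1 hQ1).mp (by rw [hmul, pow_two])
  exact ⟨P, Q, hPq, hQq, hPQ⟩

end PrimeIdeals

section QuadraticPrimes

open NumberField

variable {K : Type*} [Field K] [NumberField K] {m : ℤ}
  (e : QuadraticAlgebra ℤ (-m) 1 ≃ₐ[ℤ] 𝓞 K) {q : ℕ}
include e

omit [NumberField K] in
theorem not_isPrime_span_of_dvd_sq_sub_add (hq : q.Prime) {c : ℤ}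
    (hc : (q : ℤ) ∣ c ^ 2 - c + m) : ¬ (Ideal.span {(q : 𝓞 K)}).IsPrime := by
  intro hprime
  have hndvd (a : ℤ) : ¬ ((q : ℤ) : 𝓞 K) ∣ a + (1 : ℤ) * e QuadraticAlgebra.omega := fun h ↦
    (Nat.prime_iff_prime_int.mp hq).not_dvd_one (dvd_of_intCast_dvd_add_mul_omega e h).2
  have hmem : ((-c : ℤ) + (1 : ℤ) * e QuadraticAlgebra.omega) *
      ((c - 1 : ℤ) + (1 : ℤ) * e QuadraticAlgebra.omega) ∈ Ideal.span {((q : ℤ) : 𝓞 K)} := by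
    rw [Ideal.mem_span_singleton, show _ * _ = ((-(c ^ 2 - c + m) : ℤ) : 𝓞 K) by
      push_cast
      linear_combination omega_sq e]
    exact Int.cast_dvd_cast _ _ hc.neg_right
  rcases hprime.mem_or_mem (by simpa using hmem) with h | h
  · exact hndvd (-c) (by simpa using Ideal.mem_span_singleton.mp h)
  · exact hndvd (c - 1) (by simpa using Ideal.mem_span_singleton.mp h)

theorem exists_dvd_sq_sub_add_of_absNorm_eq (hq : q.Prime) {P : Ideal (𝓞 K)}
    (hPq : P.absNorm = q) :
    ∃ c : ℤ, (q : ℤ) ∣ c ^ 2 - c + m ∧ e QuadraticAlgebra.omega - c ∈ P := by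
  obtain ⟨c, hc⟩ := exists_intCast_sub_mem hq hPq (e QuadraticAlgebra.omega)
  have hP := isMaximal_of_prime_absNorm (hPq ▸ hq : P.absNorm.Prime)
  refine ⟨c, dvd_of_intCast_mem hP.ne_top hq (natCast_mem_of_absNorm_eq hPq) ?_, hc⟩
  rw [show ((c ^ 2 - c + m : ℤ) : 𝓞 K) =
      (1 - c - e QuadraticAlgebra.omega) * (e QuadraticAlgebra.omega - c) by
    push_cast
    linear_combination omega_sq e]
  exact P.mul_mem_left _ hc

theorem dvd_of_span_eq_mul_self (hq : q.Prime) {P : Ideal (𝓞 K)} (hPq : P.absNorm = q)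
    (hPP : Ideal.span {(q : 𝓞 K)} = P * P) : (q : ℤ) ∣ 4 * m - 1 := by
  obtain ⟨c, hc, hcP⟩ := exists_dvd_sq_sub_add_of_absNorm_eq e hq hPq
  have hsq := Ideal.mul_mem_mul hcP hcP
  rw [← hPP, Ideal.mem_span_singleton] at hsq
  have hdvd : ((q : ℤ) : 𝓞 K) ∣
      ((c ^ 2 - m : ℤ) : 𝓞 K) + ((1 - 2 * c : ℤ) : 𝓞 K) * e QuadraticAlgebra.omega := by
    push_cast
    convert hsq using 1
    linear_combination -omega_sq e
  have h := (dvd_of_intCast_dvd_add_mul_omega e hdvd).2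
  rw [show 4 * m - 1 = 4 * (c ^ 2 - c + m) - (1 - 2 * c) * (1 - 2 * c) by ring]
  exact dvd_sub (hc.mul_left _) (h.mul_left _)

theorem eq_of_span_eq_mul_of_dvd (hq : q.Prime) (hqm : (q : ℤ) ∣ 4 * m - 1) {P Q : Ideal (𝓞 K)}
    (hPq : P.absNorm = q) (hQq : Q.absNorm = q) (hPQ : Ideal.span {(q : 𝓞 K)} = P * Q) :
    P = Q := by
  have hmem {R : Ideal (𝓞 K)} (hRq : R.absNorm = q) : 2 * e QuadraticAlgebra.omega - 1 ∈ R := by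
    have hR := isMaximal_of_prime_absNorm (hRq ▸ hq : R.absNorm.Prime)
    apply hR.isPrime.mem_of_pow_mem 2
    rw [two_mul_omega_sub_one_sq, ← neg_sub, Int.cast_neg]
    obtain ⟨k, hk⟩ := hqm
    rw [hk]
    push_cast
    exact R.neg_mem (R.mul_mem_right _ (natCast_mem_of_absNorm_eq hRq))
  by_contra hne
  have hcop : IsCoprime P Q := Ideal.isCoprime_iff_sup_eq.mpr
    ((isMaximal_of_prime_absNorm (hPq ▸ hq)).coprime_of_ne
      (isMaximal_of_prime_absNorm (hQq ▸ hq)) hne)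
  have hin : 2 * e QuadraticAlgebra.omega - 1 ∈ Ideal.span {(q : 𝓞 K)} := by
    rw [hPQ, Ideal.mul_eq_inf_of_coprime (Ideal.isCoprime_iff_sup_eq.mp hcop)]
    exact ⟨hmem hPq, hmem hQq⟩
  have hdvd : ((q : ℤ) : 𝓞 K) ∣ ((-1 : ℤ) : 𝓞 K) + ((2 : ℤ) : 𝓞 K) * e QuadraticAlgebra.omega := by
    rw [Ideal.mem_span_singleton] at hin
    push_cast
    convert hin using 1
    ring
  exact (Nat.prime_iff_prime_int.mp hq).not_dvd_one
    (by simpa using (dvd_of_intCast_dvd_add_mul_omega e hdvd).1)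

variable {l : ℕ} [Fact l.Prime] (hm : l = 4 * m - 1)
include hm

theorem isPrime_span_of_legendreSym_eq_neg_one (hq : q.Prime) (h : legendreSym l q = -1) :
    (Ideal.span {(q : 𝓞 K)}).IsPrime := by
  have := Fact.mk hq
  have hql : q ≠ l := by
    rintro rfl
    simp [legendreSym] at h
  by_contra hnp
  obtain ⟨P, Q, hPq, -⟩ := exists_span_eq_mul_of_not_isPrime (finrank_eq_two e) hq hnp
  obtain ⟨c, hc, -⟩ := exists_dvd_sq_sub_add_of_absNorm_eq e hq hPq
  rw [(exists_dvd_sq_sub_add_iff hm hql).mp ⟨c, hc⟩] at h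
  norm_num at h

theorem exists_span_eq_mul_of_legendreSym_eq_one (hq : q.Prime) (h : legendreSym l q = 1) :
    ∃ P Q : Ideal (𝓞 K), P.absNorm = q ∧ Q.absNorm = q ∧
      Ideal.span {(q : 𝓞 K)} = P * Q ∧ P ≠ Q := by
  have := Fact.mk hq
  have hql : q ≠ l := by
    rintro rfl
    simp [legendreSym] at h
  obtain ⟨c, hc⟩ := (exists_dvd_sq_sub_add_iff hm hql).mpr h
  obtain ⟨P, Q, hPq, hQq, hPQ⟩ := exists_span_eq_mul_of_not_isPrime (finrank_eq_two e) hq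
    (not_isPrime_span_of_dvd_sq_sub_add e hq hc)
  refine ⟨P, Q, hPq, hQq, hPQ, ?_⟩
  rintro rfl
  have hdvd := dvd_of_span_eq_mul_self e hq hPq hPQ
  rw [← hm, Int.natCast_dvd_natCast, Nat.prime_dvd_prime_iff_eq hq Fact.out] at hdvd
  exact hql hdvd

theorem exists_span_eq_mul_self : ∃ P : Ideal (𝓞 K), P.absNorm = l ∧
    Ideal.span {(l : 𝓞 K)} = P * P := by
  have hl : l.Prime := Fact.out
  obtain ⟨P, Q, hPl, hQl, hPQ⟩ := exists_span_eq_mul_of_not_isPrime (finrank_eq_two e) hl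
    (not_isPrime_span_of_dvd_sq_sub_add e hl (c := 2 * m) ⟨m, by rw [hm]; ring⟩)
  obtain rfl := eq_of_span_eq_mul_of_dvd e hl hm.dvd hPl hQl hPQ
  exact ⟨P, hPl, hPQ⟩

end QuadraticPrimes

section IdealCount

open NumberField

variable {K : Type*} [Field K] [NumberField K]

/-- The number of ideals of norm `n` of `𝓞 K` that are divisible by `J`; for `J = 1` it is the
`n`-th coefficient of the Dedekind zeta function of `K`. -/
noncomputable def idealCount (J : Ideal (𝓞 K)) (n : ℕ) : ℕ :=
  {I : Ideal (𝓞 K) | I.absNorm = n ∧ J ∣ I}.ncard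

theorem finite_absNorm_eq_and_dvd (J : Ideal (𝓞 K)) (n : ℕ) :
    {I : Ideal (𝓞 K) | I.absNorm = n ∧ J ∣ I}.Finite :=
  (Ideal.finite_setOfPred_absNorm_eq (S := 𝓞 K) n).subset fun _ hI ↦ hI.1

theorem idealCount_one_one : idealCount (1 : Ideal (𝓞 K)) 1 = 1 := by
  simp [idealCount, Ideal.absNorm_eq_one_iff]

theorem idealCount_absNorm_mul {J : Ideal (𝓞 K)} (hJ : J.absNorm ≠ 0) (n : ℕ) :
    idealCount J (J.absNorm * n) = idealCount (1 : Ideal (𝓞 K)) n := by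
  have hJ0 : J ≠ 0 := by
    rintro rfl
    simp at hJ
  have himage : {I : Ideal (𝓞 K) | I.absNorm = J.absNorm * n ∧ J ∣ I} =
      (J * ·) '' {I : Ideal (𝓞 K) | I.absNorm = n ∧ 1 ∣ I} := by
    ext I
    constructor
    · rintro ⟨hI, I', rfl⟩
      rw [map_mul] at hI
      exact ⟨I', ⟨mul_left_cancel₀ hJ hI, one_dvd _⟩, rfl⟩
    · rintro ⟨I', ⟨rfl, -⟩, rfl⟩
      exact ⟨map_mul _ _ _, dvd_mul_right _ _⟩
  rw [idealCount, himage, Set.ncard_image_of_injective _ (mul_right_injective₀ hJ0), idealCount]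

theorem idealCount_eq_zero_of_not_dvd {J : Ideal (𝓞 K)} {n : ℕ} (h : ¬ J.absNorm ∣ n) :
    idealCount J n = 0 := by
  rw [idealCount, Set.ncard_eq_zero (finite_absNorm_eq_and_dvd J n),
    Set.eq_empty_iff_forall_notMem]
  rintro _ ⟨hI, I', rfl⟩
  exact h ⟨I'.absNorm, by rw [← hI, map_mul]⟩

variable {q : ℕ}

theorem idealCount_mul_of_isPrime (hq : q.Prime) (h : (Ideal.span {(q : 𝓞 K)}).IsPrime) (n : ℕ) :
    idealCount (1 : Ideal (𝓞 K)) (q * n) = idealCount (Ideal.span {(q : 𝓞 K)}) (q * n) := by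
  have hbot : Ideal.span {(q : 𝓞 K)} ≠ ⊥ := by simpa using hq.ne_zero
  have hdvd {I : Ideal (𝓞 K)} (hI : I.absNorm = q * n) : Ideal.span {(q : 𝓞 K)} ∣ I := by
    obtain ⟨P, hP, hqP, hPI⟩ := exists_isMaximal_mem_dvd_of_dvd_absNorm hq (Dvd.intro n hI.symm)
    rwa [(h.isMaximal hbot).eq_of_le hP.ne_top ((Ideal.span_singleton_le_iff_mem P).mpr hqP)]
  simp only [idealCount]
  congr 1
  ext I
  exact ⟨fun hI ↦ ⟨hI.1, hdvd hI.1⟩, fun hI ↦ ⟨hI.1, one_dvd I⟩⟩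

theorem dvd_or_dvd_of_span_eq_mul (hq : q.Prime) {P Q : Ideal (𝓞 K)} (hPq : P.absNorm = q)
    (hQq : Q.absNorm = q) (hPQ : Ideal.span {(q : 𝓞 K)} = P * Q) {I : Ideal (𝓞 K)}
    (hI : q ∣ I.absNorm) : P ∣ I ∨ Q ∣ I := by
  obtain ⟨R, hR, hqR, hRI⟩ := exists_isMaximal_mem_dvd_of_dvd_absNorm hq hI
  rcases eq_or_eq_of_span_eq_mul (isMaximal_of_prime_absNorm (hPq ▸ hq))
    (isMaximal_of_prime_absNorm (hQq ▸ hq)) hR hPQ hqR with rfl | rfl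
  · exact .inl hRI
  · exact .inr hRI

theorem idealCount_mul_of_span_eq_mul_self (hq : q.Prime) {P : Ideal (𝓞 K)} (hPq : P.absNorm = q)
    (hPP : Ideal.span {(q : 𝓞 K)} = P * P) (n : ℕ) :
    idealCount (1 : Ideal (𝓞 K)) (q * n) = idealCount (1 : Ideal (𝓞 K)) n := by
  rw [← idealCount_absNorm_mul (hPq ▸ hq.ne_zero) n, hPq]
  simp only [idealCount]
  congr 1
  ext I
  refine ⟨fun hI ↦ ⟨hI.1, ?_⟩, fun hI ↦ ⟨hI.1, one_dvd I⟩⟩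
  exact (dvd_or_dvd_of_span_eq_mul hq hPq hPq hPP (Dvd.intro n hI.1.symm)).elim id id

theorem idealCount_mul_add_of_span_eq_mul (hq : q.Prime) {P Q : Ideal (𝓞 K)} (hPq : P.absNorm = q)
    (hQq : Q.absNorm = q) (hPQ : Ideal.span {(q : 𝓞 K)} = P * Q) (hne : P ≠ Q) (n : ℕ) :
    idealCount (1 : Ideal (𝓞 K)) (q * n) + idealCount (Ideal.span {(q : 𝓞 K)}) (q * n) =
      2 * idealCount (1 : Ideal (𝓞 K)) n := by
  have hcop : IsCoprime P Q := Ideal.isCoprime_iff_sup_eq.mpr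
    ((isMaximal_of_prime_absNorm (hPq ▸ hq)).coprime_of_ne
      (isMaximal_of_prime_absNorm (hQq ▸ hq)) hne)
  have hunion : {I : Ideal (𝓞 K) | I.absNorm = q * n ∧ 1 ∣ I} =
      {I : Ideal (𝓞 K) | I.absNorm = q * n ∧ P ∣ I} ∪
      {I : Ideal (𝓞 K) | I.absNorm = q * n ∧ Q ∣ I} := by
    ext I
    constructor
    · rintro ⟨hI, -⟩
      exact (dvd_or_dvd_of_span_eq_mul hq hPq hQq hPQ (Dvd.intro n hI.symm)).imp
        (fun h ↦ ⟨hI, h⟩) (fun h ↦ ⟨hI, h⟩)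
    · rintro (hI | hI) <;> exact ⟨hI.1, one_dvd I⟩
  have hinter : {I : Ideal (𝓞 K) | I.absNorm = q * n ∧ Ideal.span {(q : 𝓞 K)} ∣ I} =
      {I : Ideal (𝓞 K) | I.absNorm = q * n ∧ P ∣ I} ∩
      {I : Ideal (𝓞 K) | I.absNorm = q * n ∧ Q ∣ I} := by
    ext I
    rw [hPQ]
    constructor
    · rintro ⟨hI, hdvd⟩
      exact ⟨⟨hI, dvd_of_mul_right_dvd hdvd⟩, ⟨hI, dvd_of_mul_left_dvd hdvd⟩⟩
    · rintro ⟨⟨hI, hP⟩, -, hQ⟩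
      exact ⟨hI, hcop.mul_dvd hP hQ⟩
  have hP := idealCount_absNorm_mul (hPq ▸ hq.ne_zero) n
  have hQ := idealCount_absNorm_mul (hQq ▸ hq.ne_zero) n
  rw [hPq, idealCount] at hP
  rw [hQq, idealCount] at hQ
  rw [idealCount, hunion, idealCount, hinter, Set.ncard_union_add_ncard_inter _ _
    (finite_absNorm_eq_and_dvd P _) (finite_absNorm_eq_and_dvd Q _), hP, hQ, two_mul]

end IdealCount

section DedekindZeta

open NumberField

theorem zetaMul_prime_pow {N : ℕ} [NeZero N] (χ : DirichletCharacter ℂ N) {q : ℕ} (hq : q.Prime)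
    (k : ℕ) : χ.zetaMul (q ^ k) = ∑ i ∈ Finset.range (k + 1), χ (q : ZMod N) ^ i := by
  rw [DirichletCharacter.zetaMul, ArithmeticFunction.coe_zeta_mul_apply,
    Nat.sum_divisors_prime_pow hq]
  refine Finset.sum_congr rfl fun i _ ↦ ?_
  rw [← DirichletCharacter.apply_eq_toArithmeticFunction_apply _ (pow_ne_zero i hq.ne_zero),
    Nat.cast_pow, map_pow]

theorem LSeries_zetaMul {N : ℕ} [NeZero N] (χ : DirichletCharacter ℂ N) {s : ℂ} (hs : 1 < s.re) :
    LSeries χ.zetaMul s = riemannZeta s * χ.LFunction s := by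
  have hcoeff {n : ℕ} (hn : n ≠ 0) := χ.apply_eq_toArithmeticFunction_apply hn
  rw [DirichletCharacter.zetaMul, ArithmeticFunction.LSeries_mul',
    ← ArithmeticFunction.LSeries_zeta_eq_riemannZeta hs, χ.LFunction_eq_LSeries hs,
    LSeries_congr (fun hn ↦ hcoeff hn)]
  · simp
  · exact ArithmeticFunction.LSeriesSummable_zeta_iff.mpr hs
  · refine LSeriesSummable_of_bounded_of_one_lt_re (m := 1) (fun n hn ↦ ?_) hs
    rw [← hcoeff hn]
    exact χ.norm_le_one _

theorem legendreChar_natCast {l : ℕ} [Fact l.Prime] (n : ℕ) :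
    legendreChar l (n : ZMod l) = legendreSym l n := by
  simp [legendreChar_apply, legendreSym]

variable {K : Type*} [Field K] [NumberField K] {m : ℤ}
  (e : QuadraticAlgebra ℤ (-m) 1 ≃ₐ[ℤ] 𝓞 K) {l : ℕ} [Fact l.Prime] (hm : l = 4 * m - 1)
include e hm

theorem idealCount_mul_add {q : ℕ} (hq : q.Prime) (n : ℕ) :
    (idealCount (1 : Ideal (𝓞 K)) (q * n) : ℤ) +
        legendreSym l q * idealCount (Ideal.span {(q : 𝓞 K)}) (q * n) =
      (1 + legendreSym l q) * idealCount (1 : Ideal (𝓞 K)) n := by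
  by_cases hq0 : ((q : ℤ) : ZMod l) = 0
  · have hql : l = q := (Nat.prime_dvd_prime_iff_eq Fact.out hq).mp
      ((ZMod.natCast_eq_zero_iff q l).mp (by exact_mod_cast hq0))
    obtain ⟨P, hPl, hPP⟩ := exists_span_eq_mul_self e hm
    rw [(legendreSym.eq_zero_iff l q).mpr hq0, ← hql,
      idealCount_mul_of_span_eq_mul_self Fact.out hPl hPP]
    ring
  · rcases legendreSym.eq_one_or_neg_one l hq0 with h | h
    · obtain ⟨P, Q, hPq, hQq, hPQ, hne⟩ := exists_span_eq_mul_of_legendreSym_eq_one e hm hq h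
      rw [h]
      exact_mod_cast (by simpa using idealCount_mul_add_of_span_eq_mul hq hPq hQq hPQ hne n)
    · rw [h, idealCount_mul_of_isPrime hq (isPrime_span_of_legendreSym_eq_neg_one e hm hq h)]
      ring

theorem idealCount_prime_pow_mul {q n : ℕ} (hq : q.Prime) (hn : ¬ q ∣ n) (k : ℕ) :
    (idealCount (1 : Ideal (𝓞 K)) (q ^ k * n) : ℤ) =
      (∑ i ∈ Finset.range (k + 1), legendreSym l q ^ i) * idealCount (1 : Ideal (𝓞 K)) n := by
  have hN : (Ideal.span {(q : 𝓞 K)}).absNorm = q ^ 2 := by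
    rw [Ideal.absNorm_span_natCast, RingOfIntegers.rank, finrank_eq_two e]
  induction k using Nat.twoStepInduction with
  | zero => simp
  | one =>
    have h := idealCount_mul_add e hm hq n
    rw [idealCount_eq_zero_of_not_dvd (J := Ideal.span {(q : 𝓞 K)})] at h
    · simpa [Finset.sum_range_succ] using h
    · rw [hN, pow_two]
      exact fun hdvd ↦ hn (Nat.dvd_of_mul_dvd_mul_left hq.pos hdvd)
  | more k ih₀ ih₁ =>
    have h := idealCount_mul_add e hm hq (q ^ (k + 1) * n)
    have hcount := idealCount_absNorm_mul (J := Ideal.span {(q : 𝓞 K)})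
      (hN ▸ pow_ne_zero 2 hq.ne_zero) (q ^ k * n)
    rw [hN, show q ^ 2 * (q ^ k * n) = q * (q ^ (k + 1) * n) by ring] at hcount
    rw [hcount, ih₀, ih₁, show q * (q ^ (k + 1) * n) = q ^ (k + 2) * n by ring,
      Finset.sum_range_succ _ (k + 1)] at h
    rw [Finset.sum_range_succ _ (k + 2), Finset.sum_range_succ _ (k + 1)]
    linear_combination h

theorem idealCount_one_eq_zetaMul {n : ℕ} (hn : n ≠ 0) :
    (idealCount (1 : Ideal (𝓞 K)) n : ℂ) = (legendreChar l).zetaMul n := by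
  have hmul := DirichletCharacter.isMultiplicative_zetaMul (legendreChar l)
  induction n using Nat.strong_induction_on with
  | _ n ih =>
    by_cases h1 : n = 1
    · rw [h1, idealCount_one_one, hmul.map_one, Nat.cast_one]
    obtain ⟨q, hq, hqn⟩ := Nat.exists_prime_and_dvd h1
    obtain ⟨k, n', hn', rfl⟩ := Nat.exists_eq_pow_mul_and_not_dvd hn q hq.ne_one
    have hk : k ≠ 0 := by
      rintro rfl
      exact hn' (by simpa using hqn)
    have hn0 : n' ≠ 0 := right_ne_zero_of_mul hn
    have hlt : n' < q ^ k * n' :=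
      lt_mul_of_one_lt_left (Nat.pos_of_ne_zero hn0) (Nat.one_lt_pow hk hq.one_lt)
    have hpow := congrArg (Int.cast : ℤ → ℂ) (idealCount_prime_pow_mul e hm hq hn' k)
    push_cast at hpow
    rw [hpow, hmul.map_mul_of_coprime
        (Nat.Coprime.pow_left k ((Nat.Prime.coprime_iff_not_dvd hq).mpr hn')),
      zetaMul_prime_pow _ hq, legendreChar_natCast, ih n' hlt hn0]

theorem dedekindZeta_eq_riemannZeta_mul_LFunction {s : ℂ} (hs : 1 < s.re) :
    dedekindZeta K s = riemannZeta s * (legendreChar l).LFunction s := by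
  rw [← LSeries_zetaMul _ hs, dedekindZeta]
  refine LSeries_congr (fun {n} hn ↦ ?_) s
  rw [← idealCount_one_eq_zetaMul e hm hn]
  simp only [idealCount, one_dvd, and_true]
  rfl

end DedekindZeta

section ClassNumberFormula

open NumberField Filter Topology

theorem tendsto_ofReal_nhdsGT_nhdsNE (a : ℝ) :
    Tendsto (fun s : ℝ ↦ (s : ℂ)) (𝓝[>] a) (𝓝[≠] (a : ℂ)) := by
  refine tendsto_nhdsWithin_of_tendsto_nhds_of_eventually_within _
    (Complex.continuous_ofReal.continuousAt.tendsto.mono_left nhdsWithin_le_nhds) ?_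
  filter_upwards [self_mem_nhdsWithin] with s hs
  simpa using (Set.mem_Ioi.mp hs).ne'

theorem legendreMoment_odd {l : ℕ} [Fact l.Prime] (hl : l % 4 = 3) : Odd (legendreMoment l) := by
  have hmod : ((legendreMoment l : ℤ) : ZMod 2) = ((∑ j : ZMod l, (j.val : ℤ) : ℤ) : ZMod 2) := by
    rw [legendreMoment]
    push_cast
    refine Finset.sum_congr rfl fun j _ ↦ ?_
    by_cases hj : j = 0
    · simp [hj]
    · rcases quadraticChar_dichotomy hj with h | h <;> rw [h] <;> simp
  have hgauss := Finset.sum_range_id_mul_two l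
  obtain ⟨k, rfl⟩ : ∃ k, l = 4 * k + 3 := ⟨l / 4, by lia⟩
  have hsum : ∑ i ∈ Finset.range (4 * k + 3), (i : ℤ) = 2 * (4 * k ^ 2 + 5 * k + 1) + 1 := by
    rw [show 4 * k + 3 - 1 = 4 * k + 2 by lia] at hgauss
    have h := congrArg (Nat.cast : ℕ → ℤ) hgauss
    push_cast at h
    linarith
  rw [sum_zmod_val_eq_sum_range (fun i ↦ (i : ℤ)), hsum, ZMod.intCast_eq_intCast_iff'] at hmod
  exact Int.odd_iff.mpr (hmod.trans (Int.odd_iff.mp (odd_two_mul_add_one _)))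

variable {K : Type*} [Field K] [NumberField K] {m : ℤ}
  (e : QuadraticAlgebra ℤ (-m) 1 ≃ₐ[ℤ] 𝓞 K) {l : ℕ} [Fact l.Prime] (hm : l = 4 * m - 1)
include e hm

theorem LFunction_legendreChar_one_eq_residue :
    (legendreChar l).LFunction 1 = dedekindZeta_residue K := by
  have hζ := riemannZeta_residue_one.comp (ofReal_one ▸ tendsto_ofReal_nhdsGT_nhdsNE 1)
  have hL : Tendsto (fun s : ℝ ↦ (legendreChar l).LFunction s) (𝓝[>] 1)
      (𝓝 ((legendreChar l).LFunction 1)) := by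
    have hcont := (DirichletCharacter.differentiable_LFunction
      (legendreChar_ne_one (l := l) (by lia))).continuous
    exact ((hcont.comp Complex.continuous_ofReal).tendsto' 1 _ (by simp)).mono_left
      nhdsWithin_le_nhds
  refine tendsto_nhds_unique (one_mul ((legendreChar l).LFunction 1) ▸ hζ.mul hL)
    ((tendsto_sub_one_mul_dedekindZeta_nhdsGT K).congr' ?_)
  filter_upwards [self_mem_nhdsWithin] with s hs
  rw [dedekindZeta_eq_riemannZeta_mul_LFunction e hm (by simpa using hs)]
  simp [mul_assoc]

theorem abs_legendreMoment (hm1 : 1 < m) : |legendreMoment l| = l * classNumber K := by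
  have h := norm_LFunction_legendreChar_one (l := l) (by lia)
  have hl : (4 * m - 1 : ℝ) = l := mod_cast hm.symm
  have hl0 : (0 : ℝ) < l := Nat.cast_pos.mpr (NeZero.pos l)
  rw [LFunction_legendreChar_one_eq_residue e hm, dedekindZeta_residue_eq e hm1, hl,
    Complex.norm_real, Real.norm_of_nonneg (by positivity)] at h
  have _ := Real.sqrt_pos.mpr hl0
  have _ := Real.pi_pos
  field_simp at h
  exact_mod_cast (by linarith : |(legendreMoment l : ℝ)| = l * classNumber K)

end ClassNumberFormula

section SqrtNegField

open NumberField

instance finiteDimensional_adjoin_sqrtNeg (l : ℕ) : FiniteDimensional ℚ ℚ⟮sqrtNeg l⟯ :=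
  IntermediateField.adjoin.finiteDimensional (isIntegral_sqrtNeg l)

instance numberField_adjoin_sqrtNeg (l : ℕ) : NumberField ℚ⟮sqrtNeg l⟯ := ⟨⟩

theorem classNumSqrtNeg_eq_classNumber (l : ℕ) :
    classNumSqrtNeg l = classNumber ℚ⟮sqrtNeg l⟯ := rfl

theorem finrank_adjoin_sqrtNeg {l : ℕ} (hl : 0 < l) : Module.finrank ℚ ℚ⟮sqrtNeg l⟯ = 2 := by
  have hnat : (X ^ 2 + C (l : ℚ)).natDegree = 2 := natDegree_X_pow_add_C
  have hirr : Irreducible (X ^ 2 + C (l : ℚ)) := by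
    refine irreducible_of_degree_le_three_of_not_isRoot (by rw [hnat]; decide) fun x hx ↦ ?_
    simp only [IsRoot.def, eval_add, eval_pow, eval_X, eval_C] at hx
    have hl' : (0 : ℚ) < l := Nat.cast_pos.mpr hl
    nlinarith [sq_nonneg x]
  rw [IntermediateField.adjoin.finrank (isIntegral_sqrtNeg l),
    ← minpoly.eq_of_irreducible_of_monic hirr (by simp [sqrtNeg_sq])
      (monic_X_pow_add_C _ two_ne_zero), hnat]

variable {l : ℕ} {m : ℤ}

theorem nonempty_algEquiv_ringOfIntegers_adjoin_sqrtNeg (hl : Squarefree l) (hm : l = 4 * m - 1) :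
    Nonempty (QuadraticAlgebra ℤ (-m) 1 ≃ₐ[ℤ] 𝓞 ℚ⟮sqrtNeg l⟯) := by
  refine nonempty_quadraticAlgebra_algEquiv_ringOfIntegers
    (finrank_adjoin_sqrtNeg (Nat.pos_of_ne_zero hl.ne_zero)) hl hm
    (s := AdjoinSimple.gen ℚ (sqrtNeg l)) ((algebraMap ℚ⟮sqrtNeg l⟯ ℂ).injective ?_)
  simp [sqrtNeg_sq]

theorem abs_legendreMoment_eq_mul_classNumSqrtNeg [Fact l.Prime] (hl : l % 4 = 3) (hl3 : 3 < l) :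
    |legendreMoment l| = l * classNumSqrtNeg l := by
  obtain ⟨m, hm⟩ : ∃ m : ℤ, l = 4 * m - 1 := ⟨(l + 1) / 4, by lia⟩
  obtain ⟨e⟩ := nonempty_algEquiv_ringOfIntegers_adjoin_sqrtNeg
    (Nat.Prime.prime Fact.out).squarefree hm
  exact abs_legendreMoment e hm (by lia)

theorem odd_classNumSqrtNeg [Fact l.Prime] (hl : l % 4 = 3) (hl3 : 3 < l) :
    Odd (classNumSqrtNeg l) := by
  have h := legendreMoment_odd hl
  rw [← odd_abs, abs_legendreMoment_eq_mul_classNumSqrtNeg hl hl3, Int.odd_mul] at h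
  exact mod_cast h.2

end SqrtNegField

section Representation

open NumberField

theorem isPrincipal_pow_classNumber {K : Type*} [Field K] [NumberField K] (I : Ideal (𝓞 K)) :
    (I ^ classNumber K).IsPrincipal := by
  by_cases hI : I = ⊥
  · rw [hI, ← Ideal.zero_eq_bot, zero_pow (classNumber_pos K).ne']
    exact bot_isPrincipal
  · have hmem := mem_nonZeroDivisors_of_ne_zero hI
    have hpow : ClassGroup.mk0 (⟨I, hmem⟩ ^ classNumber K) = 1 := by
      rw [map_pow, classNumber, pow_card_eq_one]
    exact (ClassGroup.mk0_eq_one_iff (pow_mem hmem _)).mp hpow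

section

variable {K : Type*} [Field K] [NumberField K] {m : ℤ}
  (e : QuadraticAlgebra ℤ (-m) 1 ≃ₐ[ℤ] 𝓞 K) {p : ℕ}
include e

theorem exists_norm_form_eq_pow_classNumber (hm : 0 < m) {P : Ideal (𝓞 K)} (hPp : P.absNorm = p) :
    ∃ x y : ℤ, P ^ classNumber K = Ideal.span {x + y * e QuadraticAlgebra.omega} ∧
      x ^ 2 + x * y + m * y ^ 2 = (p : ℤ) ^ classNumber K := by
  obtain ⟨π, hπ⟩ := (isPrincipal_pow_classNumber P).principal
  rw [Ideal.submodule_span_eq] at hπ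
  obtain ⟨x, y, rfl⟩ := exists_add_mul_omega e π
  refine ⟨x, y, hπ, ?_⟩
  have hN : (P ^ classNumber K).absNorm = p ^ classNumber K := by rw [map_pow, hPp]
  have hnonneg : 0 ≤ x ^ 2 + x * y + m * y ^ 2 := by
    nlinarith [sq_nonneg (2 * x + y), sq_nonneg y]
  rw [hπ, Ideal.absNorm_span_singleton, norm_add_mul_omega] at hN
  rw [← Int.natAbs_of_nonneg hnonneg, hN, Nat.cast_pow]

/-- If `p` divided the trace `2 x + y` of the generator of `P ^ h`, it would divide its square,
and then `Q`, the conjugate of `P`, would divide `P`. -/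
theorem not_dvd_two_mul_add (hp : p.Prime) {P Q : Ideal (𝓞 K)} (hPp : P.absNorm = p)
    (hQp : Q.absNorm = p) (hPQ : Ideal.span {(p : 𝓞 K)} = P * Q) (hne : P ≠ Q) {x y : ℤ} {h : ℕ}
    (hspan : P ^ h = Ideal.span {x + y * e QuadraticAlgebra.omega}) (hh : h ≠ 0)
    (hnorm : x ^ 2 + x * y + m * y ^ 2 = (p : ℤ) ^ h) : ¬ (p : ℤ) ∣ 2 * x + y := by
  intro hdvd
  have hsq : (x + y * e QuadraticAlgebra.omega) ^ 2 =
      ((2 * x + y : ℤ) : 𝓞 K) * (x + y * e QuadraticAlgebra.omega) - ((p ^ h : ℤ) : 𝓞 K) := by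
    rw [← hnorm]
    push_cast
    linear_combination (y : 𝓞 K) ^ 2 * omega_sq e
  have hp_dvd : (p : 𝓞 K) ∣ (x + y * e QuadraticAlgebra.omega) ^ 2 := by
    have hcast {z : ℤ} (hz : (p : ℤ) ∣ z) : (p : 𝓞 K) ∣ (z : 𝓞 K) := by
      simpa using (Int.castRingHom (𝓞 K)).map_dvd hz
    exact hsq ▸ dvd_sub ((hcast hdvd).mul_right _) (hcast (dvd_pow_self _ hh))
  have hQmax := isMaximal_of_prime_absNorm (hQp ▸ hp : Q.absNorm.Prime)
  have hQ0 : Q ≠ ⊥ := by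
    rintro rfl
    simp [hp.ne_zero.symm] at hQp
  have hQdvd : Q ∣ (P ^ h) ^ 2 := by
    refine (dvd_of_mul_left_eq P hPQ.symm).trans ?_
    rwa [hspan, Ideal.span_singleton_pow, Ideal.dvd_span_singleton, Ideal.mem_span_singleton]
  have hQP : Q ∣ P :=
    have hQprime := Ideal.prime_of_isPrime hQ0 hQmax.isPrime
    hQprime.dvd_of_dvd_pow (hQprime.dvd_of_dvd_pow hQdvd)
  exact hne ((isMaximal_of_prime_absNorm (hPp ▸ hp)).eq_of_le hQmax.ne_top
    (Ideal.dvd_iff_le.mp hQP))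

end

variable {l p : ℕ} [Fact l.Prime]

theorem exists_four_mul_pow_classNumSqrtNeg_eq (hl : l % 4 = 3) (hp : p.Prime)
    (hpl : legendreSym l p = 1) :
    ∃ a b : ℤ, 4 * (p : ℤ) ^ classNumSqrtNeg l = a ^ 2 + l * b ^ 2 ∧ ¬ (p : ℤ) ∣ a := by
  obtain ⟨m, hm⟩ : ∃ m : ℤ, l = 4 * m - 1 := ⟨(l + 1) / 4, by lia⟩
  obtain ⟨e⟩ := nonempty_algEquiv_ringOfIntegers_adjoin_sqrtNeg
    (Nat.Prime.prime Fact.out).squarefree hm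
  obtain ⟨P, Q, hPp, hQp, hPQ, hne⟩ := exists_span_eq_mul_of_legendreSym_eq_one e hm hp hpl
  obtain ⟨x, y, hspan, hnorm⟩ := exists_norm_form_eq_pow_classNumber e (by lia) hPp
  refine ⟨2 * x + y, y, ?_,
    not_dvd_two_mul_add e hp hPp hQp hPQ hne hspan (classNumber_pos _).ne' hnorm⟩
  rw [classNumSqrtNeg_eq_classNumber, ← hnorm, hm]
  ring

/-- The sign of `a` is normalized by `(a / 2)² ≡ p ^ h ≡ p ^ ((l - 1) / 2 + h) (mod l)`. -/
theorem exists_four_mul_pow_classNumSqrtNeg_eq_and_modEq (hl : l % 4 = 3) (hl3 : 3 < l)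
    (hp : p.Prime) (hpl : legendreSym l p = 1) :
    ∃ a b : ℤ, 4 * (p : ℤ) ^ classNumSqrtNeg l = a ^ 2 + l * b ^ 2 ∧
      a ≡ -2 * (p : ℤ) ^ ((l - 1 + 2 * classNumSqrtNeg l) / 4) [ZMOD l] ∧ ¬ (p : ℤ) ∣ a := by
  obtain ⟨a, b, hab, ha⟩ := exists_four_mul_pow_classNumSqrtNeg_eq hl hp hpl
  obtain ⟨k, hk⟩ := odd_classNumSqrtNeg hl hl3
  set h := classNumSqrtNeg l
  set E := (l - 1 + 2 * h) / 4
  have hpE : ((p : ZMod l) ^ E) ^ 2 = p ^ h := by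
    have hp1 : (p : ZMod l) ^ (l / 2) = 1 := by simpa [hpl] using (legendreSym.eq_pow l p).symm
    rw [← pow_mul, show E * 2 = l / 2 + h by lia, pow_add, hp1, one_mul]
  have hab' := congrArg (Int.cast : ℤ → ZMod l) hab
  push_cast at hab'
  rw [ZMod.natCast_self, zero_mul, add_zero] at hab'
  have hfactor : ((a : ZMod l) - 2 * p ^ E) * (a + 2 * p ^ E) = 0 := by
    linear_combination -hab' - 4 * hpE
  have hmod {c : ℤ} (hc : (c : ZMod l) + 2 * p ^ E = 0) : c ≡ -2 * (p : ℤ) ^ E [ZMOD l] := by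
    rw [← ZMod.intCast_eq_intCast_iff]
    push_cast
    linear_combination hc
  rcases mul_eq_zero.mp hfactor with h0 | h0
  · refine ⟨-a, b, by rw [hab, neg_sq], hmod ?_, by rwa [dvd_neg]⟩
    push_cast
    linear_combination -h0
  · exact ⟨a, b, hab, hmod h0, ha⟩

end Representation

section ResidueCharacteristic

variable {L : Type*} [Field L] {V : ValuationSubring L} {p : ℕ}

theorem exists_valuationSubring_valuation_natCast_lt_one (L : Type*) [Field L] [CharZero L]
    (hp : p.Prime) : ∃ V : ValuationSubring L, V.valuation (p : L) < 1 := by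
  have hpA : (p : L) ∈ (Int.castRingHom L).range := ⟨p, by simp⟩
  obtain ⟨V, -, hV⟩ := Ideal.image_subset_nonunits_valuationSubring
    (Ideal.span {(⟨p, hpA⟩ : (Int.castRingHom L).range)}) <| by
      rw [Ne, Ideal.span_singleton_eq_top]
      intro hu
      obtain ⟨⟨_, b, rfl⟩, hb⟩ := hu.exists_right_inv
      have hpb : (p : L) * (b : L) = 1 := by simpa using congrArg Subtype.val hb
      have hpb' : (p : ℤ) * b = 1 := by exact_mod_cast hpb
      exact (Nat.prime_iff_prime_int.mp hp).not_isUnit (.of_mul_eq_one _ hpb')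
  exact ⟨V, (ValuationSubring.mem_nonunits_iff V).mp
    (hV ⟨⟨p, hpA⟩, Ideal.mem_span_singleton_self _, rfl⟩)⟩

theorem valuation_le_one_of_isIntegral {x : L} (hx : IsIntegral ℤ x) : V.valuation x ≤ 1 := by
  obtain ⟨y, rfl⟩ := (IsIntegrallyClosed.isIntegral_iff (R := V) (K := L)).mp hx.tower_top
  exact V.valuation_le_one y

theorem valuation_intCast_le_one (m : ℤ) : V.valuation (m : L) ≤ 1 :=
  valuation_le_one_of_isIntegral (isIntegral_algebraMap (R := ℤ) (A := L) (x := m))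

theorem valuation_natCast_le_one (m : ℕ) : V.valuation (m : L) ≤ 1 :=
  V.valuation_le_one (m : V)

theorem valuation_intCast_eq_one (hp : p.Prime) (hV : V.valuation (p : L) < 1) {m : ℤ}
    (hm : ¬ (p : ℤ) ∣ m) : V.valuation (m : L) = 1 := by
  refine le_antisymm (valuation_intCast_le_one m) (not_lt.mp fun hlt ↦ ?_)
  obtain ⟨a, b, hab⟩ := (Nat.prime_iff_prime_int.mp hp).coprime_iff_not_dvd.mpr hm
  have hab' : (a : L) * p + b * m = 1 := by exact_mod_cast congrArg (Int.cast : ℤ → L) hab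
  have hlt_one : V.valuation ((a : L) * p + b * m) < 1 := by
    refine Valuation.map_add_lt _ ?_ ?_ <;> rw [map_mul]
    · exact (mul_le_of_le_one_left' (valuation_intCast_le_one a)).trans_lt hV
    · exact (mul_le_of_le_one_left' (valuation_intCast_le_one b)).trans_lt hlt
  simp [hab'] at hlt_one

theorem valuation_intCast_lt_one_iff (hp : p.Prime) (hV : V.valuation (p : L) < 1) {m : ℤ} :
    V.valuation (m : L) < 1 ↔ (p : ℤ) ∣ m := by
  refine ⟨fun h ↦ by_contra fun hm ↦ h.ne (valuation_intCast_eq_one hp hV hm), ?_⟩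
  rintro ⟨c, rfl⟩
  push_cast
  rw [map_mul]
  exact (mul_le_of_le_one_right' (valuation_intCast_le_one c)).trans_lt hV

theorem valuation_natCast_pos [CharZero L] (hp : p.Prime) : 0 < V.valuation (p : L) :=
  zero_lt_iff.mpr (V.valuation.ne_zero_iff.mpr (Nat.cast_ne_zero.mpr hp.ne_zero))

theorem pow_dvd_of_valuation_intCast_le [CharZero L] (hp : p.Prime)
    (hV : V.valuation (p : L) < 1) {k : ℕ} {m : ℤ}
    (h : V.valuation (m : L) ≤ V.valuation (p : L) ^ k) : (p : ℤ) ^ k ∣ m := by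
  obtain rfl | hm := eq_or_ne m 0
  · exact dvd_zero _
  have hfin : FiniteMultiplicity (p : ℤ) m :=
    Int.finiteMultiplicity_iff.mpr ⟨by simpa using hp.ne_one, hm⟩
  obtain ⟨c, hmc, hpc⟩ := hfin.exists_eq_pow_mul_and_not_dvd
  have hval : V.valuation (m : L) = V.valuation (p : L) ^ multiplicity (p : ℤ) m := by
    conv_lhs => rw [hmc]
    push_cast
    rw [map_mul, map_pow, valuation_intCast_eq_one hp hV hpc, mul_one]
  rw [hval, pow_le_pow_iff_right_of_lt_one₀ (valuation_natCast_pos hp) hV] at h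
  exact pow_dvd_of_le_multiplicity h

theorem charP_residueField (hp : p.Prime) (hV : V.valuation (p : L) < 1) :
    CharP (IsLocalRing.ResidueField V) p := by
  have := Fact.mk hp
  refine (CharP.charP_iff_prime_eq_zero hp).mpr ?_
  have hres : IsLocalRing.residue V (p : V) = 0 := by
    rw [IsLocalRing.residue_eq_zero_iff, V.valuation_lt_one_iff]
    simpa using hV
  simpa using hres

theorem residue_eq_residue_iff {x y : V} :
    IsLocalRing.residue V x = IsLocalRing.residue V y ↔ V.valuation ((x : L) - y) < 1 := by
  rw [← sub_eq_zero, ← map_sub, IsLocalRing.residue_eq_zero_iff, V.valuation_lt_one_iff]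
  simp

theorem valuation_pow_sub_pow_lt_one {x y : L} (hx : V.valuation x ≤ 1) (hy : V.valuation y ≤ 1)
    (h : V.valuation (x - y) < 1) (n : ℕ) : V.valuation (x ^ n - y ^ n) < 1 := by
  lift x to V using V.mem_of_valuation_le_one _ hx
  lift y to V using V.mem_of_valuation_le_one _ hy
  have hpow := congrArg (· ^ n) (residue_eq_residue_iff.mpr h)
  simp only [← map_pow] at hpow
  simpa using residue_eq_residue_iff.mp hpow

theorem valuation_sum_pow_char_pow_sub_lt_one (hp : p.Prime) (hV : V.valuation (p : L) < 1)
    {ι : Type*} (s : Finset ι) {a : ι → L} (ha : ∀ i, V.valuation (a i) ≤ 1) (k : ℕ) :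
    V.valuation ((∑ i ∈ s, a i) ^ p ^ k - ∑ i ∈ s, a i ^ p ^ k) < 1 := by
  have := Fact.mk hp
  have := charP_residueField hp hV
  lift a to ι → V using fun i ↦ V.mem_of_valuation_le_one _ (ha i)
  have hres : IsLocalRing.residue V ((∑ i ∈ s, a i) ^ p ^ k) =
      IsLocalRing.residue V (∑ i ∈ s, a i ^ p ^ k) := by
    simp only [map_pow, map_sum, sum_pow_char_pow]
  simpa using residue_eq_residue_iff.mp hres

theorem isAlgClosed_residueField [IsAlgClosed L] :
    IsAlgClosed (IsLocalRing.ResidueField V) := by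
  refine IsAlgClosed.of_exists_root _ fun P hP hirr ↦ ?_
  obtain ⟨Q, hQ, hdeg, hmonic⟩ := Polynomial.lifts_and_degree_eq_and_monic
    (Polynomial.mem_lifts_of_surjective IsLocalRing.residue_surjective P) hP
  have hdeg_ne : (Q.map (algebraMap V L)).degree ≠ 0 := by
    rw [hmonic.degree_map, hdeg]
    exact (Polynomial.degree_pos_of_irreducible hirr).ne'
  obtain ⟨x, hx⟩ := IsAlgClosed.exists_root _ hdeg_ne
  rw [IsRoot.def, eval_map] at hx
  obtain ⟨y, rfl⟩ := (IsIntegrallyClosed.isIntegral_iff (R := V) (K := L)).mp ⟨Q, hmonic, hx⟩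
  have hroot : Q.eval y = 0 := by
    rw [eval₂_at_apply] at hx
    exact (map_eq_zero_iff _ (FaithfulSMul.algebraMap_injective V L)).mp hx
  exact ⟨IsLocalRing.residue V y, by rw [← hQ, eval_map, eval₂_at_apply, hroot, map_zero]⟩

end ResidueCharacteristic

section GaussSums

variable {R R' : Type*} [CommRing R] [CommRing R']

theorem isIntegral_mulChar_apply [Finite R] (χ : MulChar R R') (x : R) : IsIntegral ℤ (χ x) := by
  by_cases hx : IsUnit x
  · refine IsIntegral.of_pow χ.orderOf_pos ?_
    rw [← MulChar.pow_apply' _ χ.orderOf_pos.ne', pow_orderOf_eq_one, MulChar.one_apply hx]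
    exact isIntegral_one
  · rw [MulChar.map_nonunit χ hx]
    exact isIntegral_zero

theorem isIntegral_addChar_apply [Finite R] (ψ : AddChar R R') (x : R) :
    IsIntegral ℤ (ψ x) := by
  refine IsIntegral.of_pow (Nat.card_pos (α := R)) ?_
  rw [← AddChar.map_nsmul_eq_pow, card_nsmul_eq_zero', AddChar.map_zero_eq_one]
  exact isIntegral_one

variable [Fintype R]

theorem isIntegral_gaussSum (χ : MulChar R R') (ψ : AddChar R R') :
    IsIntegral ℤ (gaussSum χ ψ) :=
  IsIntegral.sum _ fun x _ ↦ (isIntegral_mulChar_apply χ x).mul (isIntegral_addChar_apply ψ x)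

theorem isIntegral_jacobiSum (χ φ : MulChar R R') : IsIntegral ℤ (jacobiSum χ φ) :=
  IsIntegral.sum _ fun _ _ ↦ (isIntegral_mulChar_apply χ _).mul (isIntegral_mulChar_apply φ _)

theorem gaussSum_mul_gaussSum_inv_of_odd_orderOf {F : Type*} [Field F] [Fintype F] [IsDomain R']
    {χ : MulChar F R'} {ψ : AddChar F R'} (hodd : Odd (orderOf χ)) (hχ : χ ≠ 1)
    (hψ : ψ.IsPrimitive) : gaussSum χ ψ * gaussSum χ⁻¹ ψ = Fintype.card F := by
  have hneg : χ⁻¹ (-1) = 1 :=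
    MulChar.val_neg_one_eq_one_of_odd_order hodd (by rw [inv_pow, pow_orderOf_eq_one, inv_one])
  rw [← gaussSum_mul_gaussSum_eq_card hχ hψ, ← mul_gaussSum_inv_eq_gaussSum χ⁻¹ ψ, hneg, one_mul]

end GaussSums

section ValuationGaussSum

variable {F L : Type*} [Field F] [Fintype F] [Field L] {V : ValuationSubring L} {ψ : AddChar F L}

theorem valuation_gaussSum_mul_le (hψ : ψ ≠ 1) (χ φ : MulChar F L) :
    V.valuation (gaussSum χ ψ) * V.valuation (gaussSum φ ψ) ≤
      V.valuation (gaussSum (χ * φ) ψ) := by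
  by_cases h : χ * φ = 1
  · rw [h, gaussSum_one_left hψ, Valuation.map_neg, map_one]
    exact mul_le_one' (valuation_le_one_of_isIntegral (isIntegral_gaussSum χ ψ))
      (valuation_le_one_of_isIntegral (isIntegral_gaussSum φ ψ))
  · rw [← map_mul, ← jacobiSum_mul_nontrivial h, map_mul]
    exact mul_le_of_le_one_right' (valuation_le_one_of_isIntegral (isIntegral_jacobiSum χ φ))

theorem valuation_gaussSum_pow_le (hψ : ψ ≠ 1) (χ : MulChar F L) (k : ℕ) :
    V.valuation (gaussSum χ ψ) ^ k ≤ V.valuation (gaussSum (χ ^ k) ψ) := by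
  induction k with
  | zero => simp [gaussSum_one_left hψ, Valuation.map_neg]
  | succ k ih =>
    rw [pow_succ, pow_succ]
    exact (mul_le_mul_left ih _).trans (valuation_gaussSum_mul_le hψ _ _)

end ValuationGaussSum

section TraceGaussSum

theorem isPrimitiveRoot_zetaP {p : ℕ} (hp : p ≠ 0) : IsPrimitiveRoot (zetaP p) p :=
  Complex.isPrimitiveRoot_exp p hp

theorem isIntegral_zetaP {p : ℕ} (hp : p ≠ 0) : IsIntegral ℤ (zetaP p) :=
  (isPrimitiveRoot_zetaP hp).isIntegral (Nat.pos_of_ne_zero hp)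

variable (p : ℕ) [Fact p.Prime] (F : Type*) [Field F] [Algebra (ZMod p) F]

/-- The additive character `x ↦ ζ_p ^ T(x)` of a finite field `F`, where `T` is the trace from `F`
to `ZMod p`. -/
noncomputable def traceAddChar : AddChar F ℂ :=
  (AddChar.zmodChar p (isPrimitiveRoot_zetaP (Fact.out : p.Prime).ne_zero).pow_eq_one)
    |>.compAddMonoidHom (Algebra.trace (ZMod p) F).toAddMonoidHom

theorem traceAddChar_apply (x : F) :
    traceAddChar p F x = zetaP p ^ (Algebra.trace (ZMod p) F x).val := rfl

variable [Finite F]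

theorem traceAddChar_ne_one : traceAddChar p F ≠ 1 := by
  intro h
  obtain ⟨x, hx⟩ := Algebra.trace_surjective (ZMod p) F 1
  have hζ := DFunLike.congr_fun h x
  have : Fact (1 < p) := ⟨(Fact.out : p.Prime).one_lt⟩
  rw [traceAddChar_apply, hx, ZMod.val_one, pow_one, AddChar.one_apply] at hζ
  exact (isPrimitiveRoot_zetaP (NeZero.ne p)).ne_one (Fact.out : p.Prime).one_lt hζ

variable {F}

theorem traceAddChar_pow_char (x : F) : traceAddChar p F (x ^ p) = traceAddChar p F x := by
  have h := Algebra.trace_eq_of_algEquiv (FiniteField.frobeniusAlgEquivOfAlgebraic (ZMod p) F) x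
  rw [FiniteField.coe_frobeniusAlgEquivOfAlgebraic] at h
  simp only [ZMod.card] at h
  rw [traceAddChar_apply, traceAddChar_apply, h]

omit [Finite F]

variable [Fintype F]

/-- The Gauss sum of `χ` with respect to the additive character `x ↦ ζ_p ^ T(x)`. -/
noncomputable abbrev traceGaussSum (χ : MulChar F ℂ) : ℂ := gaussSum χ (traceAddChar p F)

theorem gaussSumN_eq_traceGaussSum_pow {F : Type} [Field F] [Fintype F] [Algebra (ZMod p) F]
    (χ : MulChar F ℂ) (k : ℕ) : gaussSumN p χ k = traceGaussSum p (χ ^ k) := by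
  let _ : DecidableEq F := Classical.decEq F
  refine Finset.sum_subset_zero_on_sdiff (Finset.subset_univ _) (fun x hx ↦ ?_) fun _ _ ↦ rfl
  obtain rfl : x = 0 := by simpa using hx
  rw [MulChar.map_zero, zero_mul]

theorem traceGaussSum_mul_inv {χ : MulChar F ℂ} (hodd : Odd (orderOf χ)) (hχ : χ ≠ 1) :
    traceGaussSum p χ * traceGaussSum p χ⁻¹ = Fintype.card F :=
  gaussSum_mul_gaussSum_inv_of_odd_orderOf hodd hχ (.of_ne_one (traceAddChar_ne_one p F))

theorem traceGaussSum_pow_char (χ : MulChar F ℂ) : traceGaussSum p (χ ^ p) = traceGaussSum p χ := by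
  have : CharP F p := charP_of_injective_algebraMap (algebraMap (ZMod p) F).injective p
  have hbij : Function.Bijective (frobenius F p) :=
    Finite.injective_iff_bijective.mp (frobenius_inj F p)
  refine Fintype.sum_bijective _ hbij _ _ fun x ↦ ?_
  rw [frobenius_def, traceAddChar_pow_char, MulChar.pow_apply' _ (NeZero.ne p), map_pow]

theorem traceGaussSum_pow_char_pow (χ : MulChar F ℂ) (i : ℕ) :
    traceGaussSum p (χ ^ p ^ i) = traceGaussSum p χ := by
  induction i with
  | zero => simp
  | succ k ih => rw [pow_succ, pow_mul, traceGaussSum_pow_char, ih]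

/-- The exponent `⌊p ^ i c / N⌋` is built up digit by digit in base `p`, and `G(ω ^ p) = G(ω)`. -/
theorem valuation_traceGaussSum_pow_sum_le {V : ValuationSubring ℂ} (ω : MulChar F ℂ) {N c : ℕ}
    (hc : c < N) (i : ℕ) :
    V.valuation (traceGaussSum p ω) ^ (∑ j ∈ Finset.range i, p * (p ^ j * c % N) / N) ≤
      V.valuation (traceGaussSum p (ω ^ (p ^ i * c / N))) := by
  have hψ := traceAddChar_ne_one p F
  induction i with
  | zero => simp [Nat.div_eq_of_lt hc, gaussSum_one_left hψ, Valuation.map_neg]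
  | succ k ih =>
    have hdigit : p ^ (k + 1) * c / N = p * (p ^ k * c / N) + p * (p ^ k * c % N) / N := by
      have hsplit : p ^ (k + 1) * c = p * (p ^ k * c % N) + N * (p * (p ^ k * c / N)) := by
        calc p ^ (k + 1) * c = p * (p ^ k * c) := by ring
          _ = p * (N * (p ^ k * c / N) + p ^ k * c % N) := by rw [Nat.div_add_mod]
          _ = _ := by ring
      rw [hsplit, Nat.add_mul_div_left _ _ (by lia), add_comm]
    rw [hdigit, Finset.sum_range_succ, pow_add, pow_add, mul_comm p (p ^ k * c / N), pow_mul]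
    refine le_trans ?_ (valuation_gaussSum_mul_le hψ _ _)
    rw [← traceGaussSum, traceGaussSum_pow_char]
    exact mul_le_mul' ih (valuation_gaussSum_pow_le hψ _ _)

end TraceGaussSum

section Teichmuller

open IsLocalRing (ResidueField residue)

variable (p : ℕ) [Fact p.Prime] {F : Type*} [Field F]

theorem nonempty_ringHom_residueField (F : Type*) [Field F] [Finite F] [Algebra (ZMod p) F]
    {L : Type*} [Field L] [IsAlgClosed L] {V : ValuationSubring L}
    (hV : V.valuation (p : L) < 1) : Nonempty (F →+* ResidueField V) := by
  have := charP_residueField Fact.out hV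
  have := isAlgClosed_residueField (V := V)
  let _ : Algebra (ZMod p) (ResidueField V) := ZMod.algebra _ p
  exact ⟨(IsAlgClosed.lift (R := ZMod p) (S := F) (M := ResidueField V)).toRingHom⟩

theorem exists_pow_eq_one_and_residue_eq {L : Type*} [Field L] [IsAlgClosed L] [CharZero L]
    {V : ValuationSubring L} {n : ℕ} [NeZero n] {y : ResidueField V} (hy : y ^ n = 1) :
    ∃ z : V, z ^ n = 1 ∧ residue V z = y := by
  obtain ⟨ζ, hζ⟩ := HasEnoughRootsOfUnity.exists_primitiveRoot L n
  lift ζ to V using (V.valuation_le_one_iff _).mp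
    (valuation_le_one_of_isIntegral (hζ.isIntegral (NeZero.pos n)))
  have hζV : IsPrimitiveRoot ζ n := .of_map_of_injective (f := V.subtype) hζ V.subtype_injective
  have hfactor := congrArg (Polynomial.eval₂ (residue V) y)
    (X_pow_sub_one_eq_prod (NeZero.pos n) hζV)
  simp only [eval₂_sub, eval₂_X_pow, eval₂_one, hy, sub_self, eval₂_finsetProd, eval₂_X,
    eval₂_C] at hfactor
  obtain ⟨z, hz, hyz⟩ := Finset.prod_eq_zero_iff.mp hfactor.symm
  exact ⟨z, (mem_nthRootsFinset (NeZero.pos n) _).mp hz, (sub_eq_zero.mp hyz).symm⟩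

theorem exists_mulChar_residue_eq [Finite F] {L : Type*} [Field L] [IsAlgClosed L] [CharZero L]
    {V : ValuationSubring L} (ι : F →+* ResidueField V) :
    ∃ ω : MulChar F V, ∀ x, residue V (ω x) = ι x := by
  classical
  have := Fintype.ofFinite F
  obtain ⟨g, hg⟩ := IsCyclic.exists_generator (α := Fˣ)
  obtain ⟨z, hz, hzg⟩ := exists_pow_eq_one_and_residue_eq (n := Fintype.card Fˣ) (y := ι g) <| by
    rw [← map_pow, ← Units.val_pow_eq_pow_val, pow_card_eq_one, Units.val_one, map_one]
  have hzu : Units.ofPowEqOne z _ hz Fintype.card_ne_zero ∈ rootsOfUnity (Fintype.card Fˣ) V :=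
    (_root_.mem_rootsOfUnity _ _).mpr (Units.pow_ofPowEqOne _ _)
  refine ⟨MulChar.ofRootOfUnity hzu hg, fun x ↦ ?_⟩
  obtain rfl | hx := eq_or_ne x 0
  · rw [MulChar.map_zero, map_zero, map_zero]
  obtain ⟨k, hk⟩ := mem_powers_iff_mem_zpowers.mpr (hg (Units.mk0 x hx))
  obtain rfl : (g : F) ^ k = x := by simpa using congrArg Units.val hk
  rw [map_pow, map_pow, map_pow, MulChar.ofRootOfUnity_spec]
  simp [hzg]

theorem orderOf_mulChar_eq_card_sub_one [Fintype F] {A k : Type*} [CommRing A] [IsDomain A]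
    [Field k] {r : A →+* k} {ι : F →+* k} {ω : MulChar F A} (hω : ∀ x, r (ω x) = ι x) :
    orderOf ω = Fintype.card F - 1 := by
  classical
  refine Nat.dvd_antisymm (MulChar.orderOf_dvd_card_sub_one F _) ?_
  obtain ⟨g, hg⟩ := IsCyclic.exists_generator (α := Fˣ)
  rw [← Fintype.card_units, ← Nat.card_eq_fintype_card, ← orderOf_eq_card_of_forall_mem_zpowers hg]
  refine orderOf_dvd_of_pow_eq_one (Units.ext (ι.injective ?_))
  have hωg : ω (g : F) ^ orderOf ω = 1 := by
    rw [← MulChar.pow_apply' _ ω.orderOf_pos.ne', pow_orderOf_eq_one, MulChar.one_apply g.isUnit]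
  rw [Units.val_pow_eq_pow_val, map_pow, ← hω, ← map_pow, hωg, Units.val_one, map_one, map_one]

theorem sum_inv_mul_trace [Fintype F] [Algebra (ZMod p) F] :
    ∑ x : F, x⁻¹ * algebraMap (ZMod p) F (Algebra.trace (ZMod p) F x) = -1 := by
  classical
  have hpow : ∀ i ≠ 0, ∀ x : F, x⁻¹ * x ^ p ^ i = x ^ (p ^ i - 1) := fun i hi x ↦ by
    obtain rfl | hx := eq_or_ne x 0
    · have := Nat.one_lt_pow hi (Fact.out : p.Prime).one_lt
      rw [inv_zero, zero_mul, zero_pow (by lia)]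
    · rw [pow_sub₀ x hx (Nat.one_le_pow _ _ (NeZero.pos p)), pow_one, mul_comm]
  have hcard : Fintype.card F = p ^ Module.finrank (ZMod p) F := by
    rw [Module.card_eq_pow_finrank (K := ZMod p), ZMod.card]
  simp_rw [FiniteField.algebraMap_trace_eq_sum_pow, Finset.mul_sum, Nat.card_zmod]
  rw [Finset.sum_comm,
    Finset.sum_eq_single_of_mem 0 (Finset.mem_range.mpr Module.finrank_pos) fun i hi hi0 ↦ ?_]
  · have hinv : ∀ x : F, x⁻¹ * x = 1 - if x = 0 then 1 else 0 := fun x ↦ by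
      by_cases hx : x = 0 <;> simp [hx]
    simp only [pow_zero, pow_one, hinv]
    simp [Finset.sum_sub_distrib]
  · simp_rw [hpow i hi0]
    refine FiniteField.sum_pow_lt_card_sub_one F _ ?_
    have := Nat.pow_lt_pow_right (Fact.out : p.Prime).one_lt (Finset.mem_range.mp hi)
    have := Nat.one_le_pow i p (NeZero.pos p)
    lia

theorem map_sum_inv_mulChar_mul_trace [Fintype F] [Algebra (ZMod p) F] {A k : Type*} [CommRing A]
    [CommRing k] {r : A →+* k} {ι : F →+* k} {ω : MulChar F A} (hω : ∀ x, r (ω x) = ι x) :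
    r (∑ x, ω⁻¹ x * (Algebra.trace (ZMod p) F x).val) = -1 := by
  rw [map_sum, ← map_one ι, ← map_neg, ← sum_inv_mul_trace p, map_sum]
  refine Finset.sum_congr rfl fun x _ ↦ ?_
  rw [map_mul, map_mul, MulChar.inv_apply', hω, map_natCast]
  conv_rhs => rw [← ZMod.natCast_zmod_val (Algebra.trace (ZMod p) F x), map_natCast, map_natCast]

theorem exists_sum_mulChar_mul_one_add_pow_eq [Fintype F] {A : Type*} [CommRing A] [IsDomain A]
    {χ : MulChar F A} (hχ : χ ≠ 1) (z : A) (t : F → ℕ) :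
    ∃ R, ∑ x, χ x * (1 + z) ^ t x = z * (∑ x, χ x * t x + z * R) := by
  choose r hr using fun n ↦ (Polynomial.powAddExpansion 1 z n).exists_of_subtype
  refine ⟨∑ x, χ x * r (t x), ?_⟩
  have hterm : ∀ x, χ x * (1 + z) ^ t x = χ x + z * (χ x * t x) + z ^ 2 * (χ x * r (t x)) :=
    fun x ↦ by rw [hr]; ring
  simp_rw [hterm, Finset.sum_add_distrib, ← Finset.mul_sum, MulChar.sum_eq_zero_of_ne_one hχ]
  ring

end Teichmuller

section GaussSumTeichmuller

open IsLocalRing (ResidueField residue)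

variable (p : ℕ) [Fact p.Prime] {F : Type*} [Field F] [Fintype F] [Algebra (ZMod p) F]
  {V : ValuationSubring ℂ}

theorem valuation_natCast_le_valuation_zetaP_sub_one_pow (V : ValuationSubring ℂ) :
    V.valuation (p : ℂ) ≤ V.valuation (zetaP p - 1) ^ (p - 1) := by
  obtain ⟨n, rfl⟩ : ∃ n, p = n + 1 := ⟨p - 1, by have := NeZero.pos p; lia⟩
  have hprod := (isPrimitiveRoot_zetaP (NeZero.ne (n + 1))).prod_one_sub_pow_eq_order
  rw [Nat.cast_succ, ← hprod, map_prod, Nat.add_sub_cancel]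
  refine (Finset.prod_le_pow_card _ _ (V.valuation (zetaP (n + 1) - 1)) fun k _ ↦ ?_).trans_eq
    (by rw [Finset.card_range])
  rw [← Valuation.map_neg, neg_sub, ← mul_geom_sum, map_mul]
  exact mul_le_of_le_one_right' <| valuation_le_one_of_isIntegral <|
    IsIntegral.sum _ fun i _ ↦ (isIntegral_zetaP (NeZero.ne _)).pow i

theorem valuation_traceGaussSum_teichmuller (hV : V.valuation (p : ℂ) < 1)
    {ι : F →+* ResidueField V} {ω : MulChar F V} (hω : ∀ x, residue V (ω x) = ι x)
    (hF : 2 < Fintype.card F) :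
    V.valuation (traceGaussSum p (ω.ringHomComp V.subtype)⁻¹) = V.valuation (zetaP p - 1) := by
  have := charP_residueField Fact.out hV
  obtain ⟨ζ, hζ⟩ : ∃ ζ : V, (ζ : ℂ) = zetaP p := ⟨⟨zetaP p, (V.valuation_le_one_iff _).mp
    (valuation_le_one_of_isIntegral (isIntegral_zetaP (NeZero.ne p)))⟩, rfl⟩
  have hζp : ζ ^ p = 1 := by
    ext
    push_cast
    rw [hζ, (isPrimitiveRoot_zetaP (NeZero.ne p)).pow_eq_one]
  have hres : residue V (ζ - 1) = 0 := by
    refine eq_zero_of_pow_eq_zero (n := p) ?_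
    rw [map_sub, map_one, sub_pow_char, ← map_pow, hζp, map_one, one_pow, sub_self]
  have hω1 : ω⁻¹ ≠ 1 := fun h ↦ by
    have horder := orderOf_mulChar_eq_card_sub_one hω
    rw [inv_eq_one.mp h, orderOf_one] at horder
    lia
  obtain ⟨R, hR⟩ := exists_sum_mulChar_mul_one_add_pow_eq hω1 (ζ - 1)
    fun x ↦ (Algebra.trace (ZMod p) F x).val
  set S := ∑ x, ω⁻¹ x * ((Algebra.trace (ZMod p) F x).val : V)
  have hG : traceGaussSum p (ω.ringHomComp V.subtype)⁻¹ =
      ((ζ - 1 : V) : ℂ) * ((S + (ζ - 1) * R : V) : ℂ) := by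
    have hsum := congrArg V.subtype hR
    rw [map_sum, map_mul, add_sub_cancel] at hsum
    refine Eq.trans (Finset.sum_congr rfl fun x _ ↦ ?_) hsum
    rw [traceAddChar_apply, MulChar.inv_apply', MulChar.ringHomComp_apply, map_mul, map_pow,
      MulChar.inv_apply', ← hζ, ValuationSubring.subtype_apply, ValuationSubring.subtype_apply]
  have hunit : V.valuation ((S + (ζ - 1) * R : V) : ℂ) = 1 := by
    rw [← V.valuation_eq_one_iff]
    refine (IsLocalRing.residue_ne_zero_iff_isUnit _).mp ?_
    rw [map_add, map_mul, hres, zero_mul, add_zero, map_sum_inv_mulChar_mul_trace p hω]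
    exact neg_ne_zero.mpr one_ne_zero
  rw [hG, map_mul, hunit, mul_one]
  simp [hζ]

end GaussSumTeichmuller

section StickelbergerSum

/-- The sum `∑_{i < f} (p ^ i c mod N)` of the least residues of the conjugates of `c`: by
Stickelberger's theorem it is `N` times the `p`-adic valuation of a Gauss sum of order `N`. -/
def stickelbergerSum (p f N c : ℕ) : ℕ := ∑ i ∈ Finset.range f, p ^ i * c % N

variable {p f N c : ℕ}

theorem stickelbergerSum_mod : stickelbergerSum p f N (c % N) = stickelbergerSum p f N c :=
  Finset.sum_congr rfl fun i _ ↦ by simp [Nat.mul_mod]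

theorem stickelbergerSum_add_of_dvd_add {d : ℕ} (hNp : N.Coprime p) (hc : ¬ N ∣ c)
    (hcd : N ∣ c + d) : stickelbergerSum p f N c + stickelbergerSum p f N d = f * N := by
  rw [stickelbergerSum, stickelbergerSum, ← Finset.sum_add_distrib,
    Finset.sum_congr rfl (g := fun _ ↦ N) fun i _ ↦ ?_, Finset.sum_const, Finset.card_range,
    smul_eq_mul]
  have hN : 0 < N := Nat.pos_of_ne_zero fun h ↦ by
    simp only [h, zero_dvd_iff, Nat.add_eq_zero_iff] at hc hcd
    exact hc hcd.1
  have hpos : 0 < p ^ i * c % N := Nat.pos_of_ne_zero fun h ↦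
    hc ((hNp.pow_right i).dvd_of_dvd_mul_left (Nat.dvd_of_mod_eq_zero h))
  have hdvd : N ∣ p ^ i * c % N + p ^ i * d % N := by
    rw [Nat.dvd_iff_mod_eq_zero, ← Nat.add_mod, ← mul_add]
    exact Nat.mod_eq_zero_of_dvd (hcd.mul_left _)
  refine Nat.eq_of_dvd_of_lt_two_mul (by lia) hdvd ?_
  have := Nat.mod_lt (p ^ i * c) hN
  have := Nat.mod_lt (p ^ i * d) hN
  lia

theorem mul_sum_mul_mod_div (hpf : p ^ f ≡ 1 [MOD N]) :
    N * ∑ j ∈ Finset.range f, p * (p ^ j * c % N) / N = (p - 1) * stickelbergerSum p f N c := by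
  have hdigit : ∀ j, N * (p * (p ^ j * c % N) / N) + p ^ (j + 1) * c % N =
      p * (p ^ j * c % N) := fun j ↦ by
    conv_rhs => rw [← Nat.div_add_mod (p * (p ^ j * c % N)) N, Nat.mul_mod_mod, ← mul_assoc,
      ← pow_succ']
  have hshift : ∑ j ∈ Finset.range f, p ^ (j + 1) * c % N = stickelbergerSum p f N c := by
    have hperiod : p ^ f * c % N = p ^ 0 * c % N := by rw [pow_zero]; exact hpf.mul_right c
    rw [stickelbergerSum, ← Nat.add_right_cancel_iff (n := p ^ 0 * c % N),
      ← Finset.sum_range_succ' (fun j ↦ p ^ j * c % N), Finset.sum_range_succ, hperiod]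
  have hsum : N * ∑ j ∈ Finset.range f, p * (p ^ j * c % N) / N + stickelbergerSum p f N c =
      p * stickelbergerSum p f N c := by
    nth_rw 1 [← hshift]
    rw [Finset.mul_sum, ← Finset.sum_add_distrib, stickelbergerSum, Finset.mul_sum]
    exact Finset.sum_congr rfl fun j _ ↦ hdigit j
  rw [Nat.sub_mul, one_mul, ← hsum, Nat.add_sub_cancel]

end StickelbergerSum

section Stickelberger

theorem exists_eq_pow_pow_coprime {G : Type*} [Monoid G] {g x : G} {M N : ℕ} (hM : 0 < M)
    (hN : 0 < N) (hg : orderOf g = N * M) (hx : orderOf x = N) (hxg : x ∈ Submonoid.powers g) :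
    ∃ u, u.Coprime N ∧ x = (g ^ M) ^ u := by
  obtain ⟨j, rfl⟩ := hxg
  have hgcd : (N * M).gcd j = M := by
    have hdiv : N * M / (N * M).gcd j = N := by
      rw [← hg, ← IsOfFinOrder.orderOf_pow g j (orderOf_pos_iff.mp (by rw [hg]; positivity))]
      exact hx
    have hmul := Nat.div_mul_cancel (Nat.gcd_dvd_left (N * M) j)
    rw [hdiv] at hmul
    exact Nat.eq_of_mul_eq_mul_left hN hmul
  obtain ⟨u, rfl⟩ : M ∣ j := hgcd ▸ Nat.gcd_dvd_right _ _
  rw [mul_comm N, Nat.gcd_mul_left] at hgcd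
  refine ⟨u, ?_, pow_mul _ _ _⟩
  rw [Nat.coprime_comm]
  exact Nat.eq_of_mul_eq_mul_left hM (by rw [hgcd, mul_one])

variable (p : ℕ) [Fact p.Prime] {F : Type*} [Field F] [Fintype F] [Algebra (ZMod p) F]
  {V : ValuationSubring ℂ} {N f : ℕ}

omit [Algebra (ZMod p) F] in
theorem mem_powers_of_orderOf_eq_card_sub_one {θ : MulChar F ℂ}
    (hθ : orderOf θ = Fintype.card F - 1) (χ : MulChar F ℂ) : χ ∈ Submonoid.powers θ := by
  classical
  refine mem_powers_iff_mem_zpowers.mpr ?_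
  have htop : Subgroup.zpowers θ = ⊤ := by
    refine Subgroup.eq_top_of_card_eq _ ?_
    rw [Nat.card_zpowers, hθ, MulChar.card_eq_card_units_of_hasEnoughRootsOfUnity,
      Nat.card_eq_fintype_card, Fintype.card_units]
  exact htop ▸ Subgroup.mem_top χ

theorem pow_stickelbergerSum_le_valuation_traceGaussSum_pow {θ : MulChar F ℂ} {M : ℕ} (hN : 0 < N)
    (hcard : Fintype.card F = p ^ f) (hM : p ^ f = N * M + 1)
    (hθ : V.valuation (zetaP p - 1) ≤ V.valuation (traceGaussSum p θ)) (k : ℕ) :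
    V.valuation (p : ℂ) ^ stickelbergerSum p f N k ≤
      V.valuation (traceGaussSum p ((θ ^ M) ^ k)) ^ N := by
  have hθN : (θ ^ M) ^ N = 1 := by
    rw [← pow_mul, mul_comm, ← Nat.add_sub_cancel (n := N * M) (m := 1), ← hM, ← hcard]
    exact orderOf_dvd_iff_pow_eq_one.mp (MulChar.orderOf_dvd_card_sub_one F θ)
  have hpf : p ^ f ≡ 1 [MOD N] := by rw [hM]; exact (Nat.modEq_iff_dvd.mpr (by simp))
  rw [pow_eq_pow_mod k hθN, ← stickelbergerSum_mod]
  set c := k % N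
  have hexp : p ^ f * c / N = M * c := by
    rw [hM, add_mul, one_mul, mul_assoc, Nat.mul_add_div hN, Nat.div_eq_of_lt (Nat.mod_lt k hN),
      add_zero]
  have hle := valuation_traceGaussSum_pow_sum_le (V := V) p θ (Nat.mod_lt k hN) f
  rw [hexp, pow_mul] at hle
  calc V.valuation (p : ℂ) ^ stickelbergerSum p f N c
      ≤ (V.valuation (zetaP p - 1) ^ (p - 1)) ^ stickelbergerSum p f N c :=
        pow_le_pow_left' (valuation_natCast_le_valuation_zetaP_sub_one_pow p V) _
    _ = (V.valuation (zetaP p - 1) ^ ∑ j ∈ Finset.range f, p * (p ^ j * c % N) / N) ^ N := by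
        rw [← pow_mul, ← pow_mul, ← mul_sum_mul_mod_div hpf, mul_comm N]
    _ ≤ _ := pow_le_pow_left' ((pow_le_pow_left' hθ _).trans hle) _

/-- The bounds for `k` and `-k` are sharp because `G(χ ^ k) G(χ ^ -k) = p ^ f`. -/
theorem valuation_traceGaussSum_pow_eq_of_le {χ : MulChar F ℂ} (hχ : orderOf χ = N)
    (hN : Odd N) (hNp : N.Coprime p) (hcard : Fintype.card F = p ^ f)
    (hle : ∀ k, V.valuation (p : ℂ) ^ stickelbergerSum p f N k ≤
      V.valuation (traceGaussSum p (χ ^ k)) ^ N) {k : ℕ} (hk : ¬ N ∣ k) :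
    V.valuation (traceGaussSum p (χ ^ k)) ^ N = V.valuation (p : ℂ) ^ stickelbergerSum p f N k := by
  obtain ⟨k', hkk'⟩ : ∃ k', N ∣ k + k' := by
    obtain ⟨n, rfl⟩ : ∃ n, N = n + 1 := ⟨N - 1, by have := hN.pos; lia⟩
    exact ⟨n * k, k, by ring⟩
  have hne : χ ^ k ≠ 1 := fun h ↦ hk (hχ ▸ orderOf_dvd_of_pow_eq_one h)
  have hodd : Odd (orderOf (χ ^ k)) := Odd.of_dvd_nat hN (hχ ▸ orderOf_pow_dvd k)
  have hinv : (χ ^ k)⁻¹ = χ ^ k' := by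
    rw [inv_eq_iff_mul_eq_one, ← pow_add]
    exact orderOf_dvd_iff_pow_eq_one.mp (hχ ▸ hkk')
  have hprod := traceGaussSum_mul_inv p hodd hne
  rw [hinv, hcard] at hprod
  have hval : V.valuation (traceGaussSum p (χ ^ k)) ^ N *
      V.valuation (traceGaussSum p (χ ^ k')) ^ N =
        V.valuation (p : ℂ) ^ stickelbergerSum p f N k *
          V.valuation (p : ℂ) ^ stickelbergerSum p f N k' := by
    rw [← mul_pow, ← map_mul, hprod, ← pow_add, stickelbergerSum_add_of_dvd_add hNp hk hkk',
      pow_mul, Nat.cast_pow, map_pow]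
  refine le_antisymm (not_lt.mp fun hlt ↦ ?_) (hle k)
  have hpos : 0 < V.valuation (p : ℂ) := valuation_natCast_pos Fact.out
  exact (mul_lt_mul_of_lt_of_le_of_pos_of_nonneg hlt (hle k') (pow_pos hpos _)
    zero_le).ne' hval

theorem exists_valuation_traceGaussSum_pow_eq (hV : V.valuation (p : ℂ) < 1) {χ : MulChar F ℂ}
    (hχ : orderOf χ = N) (hN : Odd N) (hN1 : 1 < N) (hcard : Fintype.card F = p ^ f)
    (hNp : N.Coprime p) :
    ∃ u, u.Coprime N ∧ ∀ k, ¬ N ∣ k → V.valuation (traceGaussSum p (χ ^ k)) ^ N =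
      V.valuation (p : ℂ) ^ stickelbergerSum p f N (u * k) := by
  obtain ⟨M, hM⟩ : N ∣ Fintype.card F - 1 := hχ ▸ MulChar.orderOf_dvd_card_sub_one F χ
  have hF := Fintype.one_lt_card (α := F)
  have hM0 : 0 < M := Nat.pos_of_ne_zero (by rintro rfl; lia)
  have hF2 : 2 < Fintype.card F := by
    have := Nat.le_mul_of_pos_right N hM0
    obtain ⟨n, rfl⟩ := hN
    lia
  obtain ⟨ι⟩ := nonempty_ringHom_residueField p F hV
  obtain ⟨ω, hω⟩ := exists_mulChar_residue_eq ι
  have hG := valuation_traceGaussSum_teichmuller p hV hω hF2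
  have hθ : orderOf (ω.ringHomComp V.subtype)⁻¹ = N * M := by
    rw [orderOf_inv, ← hM, ← orderOf_mulChar_eq_card_sub_one hω]
    exact orderOf_injective (MulChar.ringHomCompHom V.subtype)
      (MulChar.injective_ringHomComp V.subtype_injective) ω
  set θ := (ω.ringHomComp V.subtype)⁻¹
  have hθM : orderOf (θ ^ M) = N := by
    rw [orderOf_pow_of_dvd hM0.ne' ⟨N, by rw [hθ, mul_comm]⟩, hθ, Nat.mul_div_cancel _ hM0]
  obtain ⟨u, hu, rfl⟩ := exists_eq_pow_pow_coprime hM0 (by lia) hθ hχ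
    (mem_powers_of_orderOf_eq_card_sub_one (hθ.trans hM.symm) χ)
  refine ⟨u, hu, fun k hk ↦ ?_⟩
  rw [← pow_mul]
  exact valuation_traceGaussSum_pow_eq_of_le p hθM hN hNp hcard
    (pow_stickelbergerSum_le_valuation_traceGaussSum_pow p (by lia) hcard (by lia) hG.ge)
    fun h ↦ hk (hu.symm.dvd_of_dvd_mul_left h)

end Stickelberger

section ResidueSums

open Finset

theorem natCast_mod_eq_of_dvd {d n : ℕ} (h : d ∣ n) (a : ℕ) : ((a % n : ℕ) : ZMod d) = a :=
  (ZMod.natCast_eq_natCast_iff _ _ _).mpr ((Nat.mod_modEq a n).of_dvd h)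

theorem natCast_sub_one_eq_neg_one_of_dvd {d n : ℕ} (hn : 0 < n) (h : d ∣ n) :
    ((n - 1 : ℕ) : ZMod d) = -1 := by
  rw [Nat.cast_sub hn, (ZMod.natCast_eq_zero_iff n d).mpr h, Nat.cast_one, zero_sub]

theorem coprime_mod_iff {n a : ℕ} : n.Coprime (a % n) ↔ n.Coprime a := by
  rw [Nat.coprime_comm, Nat.Coprime, ← Nat.gcd_rec]

theorem sum_range_mul {R : Type*} [AddCommMonoid R] (n k : ℕ) (g : ℕ → R) :
    ∑ c ∈ range (n * k), g c = ∑ b ∈ range k, ∑ a ∈ range n, g (n * b + a) := by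
  induction k with
  | zero => simp
  | succ k ih => rw [mul_add, mul_one, sum_range_add, ih, sum_range_succ]

theorem sum_range_mul_comp_mul_of_coprime {R : Type*} [AddCommMonoid R] {n u : ℕ} (k : ℕ)
    (hu : u.Coprime n) (hn : 0 < n) {g : ℕ → R} (hg : ∀ c, g (c % n) = g c) :
    ∑ c ∈ range (n * k), g (u * c) = ∑ c ∈ range (n * k), g c := by
  have : NeZero n := ⟨hn.ne'⟩
  rw [sum_range_mul, sum_range_mul]
  refine sum_congr rfl fun b _ ↦ ?_
  have hblock : ∀ a, g (n * b + a) = g a := fun a ↦ by rw [← hg, Nat.mul_add_mod, hg]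
  have hblock' : ∀ a, g (u * (n * b + a)) = g (u * a) := fun a ↦ by
    rw [← hg, show u * (n * b + a) = n * (u * b) + u * a by ring, Nat.mul_add_mod, hg]
  simp_rw [hblock, hblock', ← sum_zmod_val_eq_sum_range (N := n)]
  refine Fintype.sum_equiv (Units.mulLeft (ZMod.unitOfCoprime u hu)) _ _ fun x ↦ ?_
  rw [Units.mulLeft_apply, ZMod.coe_unitOfCoprime, ZMod.val_mul, hg, ZMod.val_natCast, ← hg,
    ← hg (u % n * _), Nat.mod_mul_mod]

variable {l : ℕ} [Fact l.Prime]

theorem sum_quadraticChar_mul_add (hl : l ≠ 2) (b : ℕ) :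
    ∑ a ∈ range l, quadraticChar (ZMod l) (a : ZMod l) * ((l * b + a : ℕ) : ℤ) =
      legendreMoment l := by
  have hzero := quadraticChar_sum_zero (F := ZMod l) (by rwa [ZMod.ringChar_zmod_n])
  rw [legendreMoment, ← sum_zmod_val_eq_sum_range
    fun a ↦ quadraticChar (ZMod l) (a : ZMod l) * ((l * b + a : ℕ) : ℤ)]
  simp only [ZMod.natCast_val, ZMod.cast_id', id_eq, Nat.cast_add, mul_add, sum_add_distrib,
    ← sum_mul, hzero, zero_mul, zero_add]

theorem sum_quadraticChar_mul_mod (hl : l ≠ 2) (s k : ℕ) :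
    ∑ c ∈ range (l * s * k), quadraticChar (ZMod l) (c : ZMod l) * ((c % (l * s) : ℕ) : ℤ) =
      s * k * legendreMoment l := by
  have hperiod : ∀ b a : ℕ, quadraticChar (ZMod l) ((l * b + a : ℕ) : ZMod l) =
      quadraticChar (ZMod l) (a : ZMod l) := fun b a ↦ by simp
  have hblock : ∑ a ∈ range (l * s), quadraticChar (ZMod l) (a : ZMod l) * (a : ℤ) =
      s * legendreMoment l := by
    simp_rw [sum_range_mul, hperiod, sum_quadraticChar_mul_add hl, sum_const, card_range,
      nsmul_eq_mul]
  rw [sum_range_mul, sum_congr rfl (g := fun _ ↦ (s : ℤ) * legendreMoment l) fun b _ ↦ ?_,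
    sum_const, card_range, nsmul_eq_mul]
  · ring
  · rw [← hblock]
    refine sum_congr rfl fun a ha ↦ ?_
    rw [mul_assoc l, hperiod, ← mul_assoc, Nat.mul_add_mod, Nat.mod_eq_of_lt (mem_range.mp ha)]

theorem sum_quadraticChar_mul_mul_mod (hl : l ≠ 2) (s k d : ℕ) :
    ∑ c ∈ range (l * s * k),
        quadraticChar (ZMod l) (c : ZMod l) * ((c * d % (l * s * d) : ℕ) : ℤ) =
      s * k * d * legendreMoment l := by
  rw [mul_right_comm _ (d : ℤ), ← sum_quadraticChar_mul_mod hl, sum_mul]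
  refine sum_congr rfl fun c _ ↦ ?_
  rw [Nat.mul_mod_mul_right, Nat.cast_mul, mul_assoc]

/-- The sum `∑ (c / l) (c λ mod N)` over the units `c` modulo `N`, which measures how unevenly the
least residues of multiples of `λ` are split between the two cosets of the kernel of the Legendre
character modulo `l`. -/
def legendreResidueSum (l N lam : ℕ) [Fact l.Prime] : ℤ :=
  ∑ c ∈ range N with N.Coprime c, quadraticChar (ZMod l) (c : ZMod l) * ((c * lam % N : ℕ) : ℤ)

theorem legendreResidueSum_mul {N u : ℕ} (lam : ℕ) (hN : 0 < N) (hlN : l ∣ N) (hu : u.Coprime N) :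
    legendreResidueSum l N (u * lam) =
      quadraticChar (ZMod l) (u : ZMod l) * legendreResidueSum l N lam := by
  have hu0 : (u : ZMod l) ≠ 0 :=
    ((ZMod.isUnit_iff_coprime u l).mpr (hu.coprime_dvd_right hlN)).ne_zero
  have hcop : ∀ c, N.Coprime (u * c) ↔ N.Coprime c := fun c ↦ by
    rw [Nat.coprime_mul_iff_right, and_iff_right hu.symm]
  have hperm := sum_range_mul_comp_mul_of_coprime 1 hu hN (g := fun c ↦ if N.Coprime c then
    quadraticChar (ZMod l) (c : ZMod l) * ((c * lam % N : ℕ) : ℤ) else 0) fun c ↦ by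
      simp only [natCast_mod_eq_of_dvd hlN, coprime_mod_iff, Nat.mod_mul_mod]
  simp only [mul_one, hcop, ← sum_filter] at hperm
  rw [legendreResidueSum, legendreResidueSum, ← hperm, mul_sum]
  refine sum_congr rfl fun c _ ↦ ?_
  rw [Nat.cast_mul u c, map_mul, show c * (u * lam) = u * c * lam by ring, ← mul_assoc, ← mul_assoc,
    ← sq, quadraticChar_sq_one hu0, one_mul]

end ResidueSums

section IndexTwo

open Finset

/-- The residue class of `p` generates the kernel of the Legendre character modulo `l` on the unit
group modulo `N`, a subgroup of index two and order `f`. Since `l ≡ 3 (mod 4)`, the class of `-1`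
represents the other coset. -/
structure GeneratesLegendreKernel (p l N f : ℕ) [Fact l.Prime] : Prop where
  mod_four : l % 4 = 3
  odd : Odd N
  dvd : l ∣ N
  coprime : N.Coprime p
  orderOf_eq : orderOf (p : ZMod N) = f
  two_mul_eq : 2 * f = N.totient
  quadraticChar_eq_one : quadraticChar (ZMod l) (p : ZMod l) = 1

variable {p l N f : ℕ} [Fact l.Prime]

omit [Fact l.Prime] in
theorem stickelbergerSum_le {c : ℕ} (hN : 0 < N) : stickelbergerSum p f N c ≤ f * N := by
  simpa [stickelbergerSum] using
    sum_le_card_nsmul (range f) _ N fun i _ ↦ (Nat.mod_lt (p ^ i * c) hN).le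

namespace GeneratesLegendreKernel

theorem pos (D : GeneratesLegendreKernel p l N f) : 0 < N := D.odd.pos

theorem one_lt (D : GeneratesLegendreKernel p l N f) : 1 < N :=
  (Fact.out : l.Prime).one_lt.trans_le (Nat.le_of_dvd D.pos D.dvd)

theorem coprime_sub_one (D : GeneratesLegendreKernel p l N f) : N.Coprime (N - 1) :=
  (Nat.coprime_self_sub_right D.pos).mpr (Nat.coprime_one_right N)

theorem quadraticChar_sub_one (D : GeneratesLegendreKernel p l N f) :
    quadraticChar (ZMod l) ((N - 1 : ℕ) : ZMod l) = -1 := by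
  rw [natCast_sub_one_eq_neg_one_of_dvd D.pos D.dvd, quadraticChar_zmod_neg_one D.mod_four]

theorem quadraticChar_mul_pow_mod (D : GeneratesLegendreKernel p l N f) (u i : ℕ) :
    quadraticChar (ZMod l) ((u * p ^ i % N : ℕ) : ZMod l) =
      quadraticChar (ZMod l) (u : ZMod l) := by
  rw [natCast_mod_eq_of_dvd D.dvd, Nat.cast_mul, Nat.cast_pow, map_mul, map_pow,
    D.quadraticChar_eq_one, one_pow, mul_one]

theorem injOn_mul_pow_mod (D : GeneratesLegendreKernel p l N f) {u : ℕ} (hu : u.Coprime N) :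
    Set.InjOn (fun i ↦ u * p ^ i % N) (range f) := by
  intro i hi j hj hij
  have hcast : (u * p ^ i : ZMod N) = u * p ^ j :=
    mod_cast (ZMod.natCast_eq_natCast_iff _ _ N).mpr hij
  exact pow_injOn_Iio_orderOf (x := (p : ZMod N)) (by simpa [D.orderOf_eq] using hi)
    (by simpa [D.orderOf_eq] using hj)
    (((ZMod.isUnit_iff_coprime u N).mpr hu).mul_left_cancel hcast)

theorem disjoint_image_image (D : GeneratesLegendreKernel p l N f) :
    Disjoint ((range f).image fun i ↦ 1 * p ^ i % N)
      ((range f).image fun i ↦ (N - 1) * p ^ i % N) := by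
  rw [disjoint_left]
  intro x hx hx'
  obtain ⟨i, -, rfl⟩ := mem_image.mp hx
  obtain ⟨j, -, hij⟩ := mem_image.mp hx'
  have hchar := congrArg (fun x : ℕ ↦ quadraticChar (ZMod l) (x : ZMod l)) hij
  simp only [D.quadraticChar_mul_pow_mod, D.quadraticChar_sub_one, Nat.cast_one, map_one] at hchar
  lia

theorem image_union_image_eq (D : GeneratesLegendreKernel p l N f) :
    (range f).image (fun i ↦ 1 * p ^ i % N) ∪ (range f).image (fun i ↦ (N - 1) * p ^ i % N) =
      {c ∈ range N | N.Coprime c} := by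
  have hsub : ∀ u, N.Coprime u →
      (range f).image (fun i ↦ u * p ^ i % N) ⊆ {c ∈ range N | N.Coprime c} := fun u hu ↦
    image_subset_iff.mpr fun i _ ↦ mem_filter.mpr ⟨mem_range.mpr (Nat.mod_lt _ D.pos),
      coprime_mod_iff.mpr (hu.mul_right (D.coprime.pow_right i))⟩
  refine eq_of_subset_of_card_le
    (union_subset (hsub 1 (Nat.coprime_one_right N)) (hsub _ D.coprime_sub_one)) ?_
  rw [← Nat.totient_eq_card_coprime, card_union_of_disjoint D.disjoint_image_image,
    card_image_of_injOn (D.injOn_mul_pow_mod (Nat.coprime_one_left N)),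
    card_image_of_injOn (D.injOn_mul_pow_mod D.coprime_sub_one.symm), card_range, ← D.two_mul_eq,
    two_mul]

theorem sum_coprime_eq (D : GeneratesLegendreKernel p l N f) {R : Type*} [AddCommMonoid R]
    (g : ℕ → R) : ∑ c ∈ range N with N.Coprime c, g c =
      ∑ i ∈ range f, (g (p ^ i % N) + g ((N - 1) * p ^ i % N)) := by
  rw [← D.image_union_image_eq, sum_union D.disjoint_image_image,
    sum_image (D.injOn_mul_pow_mod (Nat.coprime_one_left N)),
    sum_image (D.injOn_mul_pow_mod D.coprime_sub_one.symm), sum_add_distrib]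
  simp_rw [one_mul]

theorem legendreResidueSum_eq_sub (D : GeneratesLegendreKernel p l N f) (lam : ℕ) :
    legendreResidueSum l N lam =
      stickelbergerSum p f N lam - stickelbergerSum p f N ((N - 1) * lam) := by
  have hpow := fun i ↦ D.quadraticChar_mul_pow_mod 1 i
  simp only [one_mul, Nat.cast_one, map_one] at hpow
  simp only [legendreResidueSum, stickelbergerSum, D.sum_coprime_eq, D.quadraticChar_mul_pow_mod,
    D.quadraticChar_sub_one, hpow, Nat.mod_mul_mod, Nat.cast_sum, ← sum_sub_distrib]
  refine sum_congr rfl fun i _ ↦ ?_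
  rw [mul_assoc (N - 1), mul_left_comm (N - 1)]
  ring

theorem two_mul_stickelbergerSum_eq (D : GeneratesLegendreKernel p l N f) {c : ℕ} (hc : ¬ N ∣ c) :
    (2 * stickelbergerSum p f N c : ℤ) = f * N + legendreResidueSum l N c := by
  have hdvd : N ∣ c + (N - 1) * c :=
    ⟨c, by rw [← one_add_mul, add_comm 1, tsub_add_cancel_of_le D.one_lt.le]⟩
  have hadd : (stickelbergerSum p f N c : ℤ) + stickelbergerSum p f N ((N - 1) * c) = f * N :=
    mod_cast stickelbergerSum_add_of_dvd_add D.coprime hc hdvd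
  linear_combination hadd - D.legendreResidueSum_eq_sub c

end GeneratesLegendreKernel

/-- `λ` has defect `n`: up to sign, the sums of the least residues of the multiples of `λ` over the
two cosets of the kernel of the Legendre character modulo `l` differ by `n N h(ℚ(√-l))`. -/
def HasLegendreDefect (l N lam n : ℕ) [Fact l.Prime] : Prop :=
  l * legendreResidueSum l N lam = N * legendreMoment l * n

theorem exists_legendreResidueSum_eq (hl : l % 4 = 3) (hl3 : 3 < l) : ∃ ε : ℤ,
    (ε = 1 ∨ ε = -1) ∧ ∀ N lam n, HasLegendreDefect l N lam n →
      legendreResidueSum l N lam = N * (ε * (classNumSqrtNeg l * n : ℕ)) := by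
  have hl0 : (l : ℤ) ≠ 0 := mod_cast (Fact.out : l.Prime).ne_zero
  obtain ⟨ε, hε, hmoment⟩ : ∃ ε : ℤ, (ε = 1 ∨ ε = -1) ∧
      legendreMoment l = ε * (l * classNumSqrtNeg l) := by
    rcases (abs_eq (by positivity)).mp (abs_legendreMoment_eq_mul_classNumSqrtNeg hl hl3) with h | h
    · exact ⟨1, .inl rfl, by rw [h, one_mul]⟩
    · exact ⟨-1, .inr rfl, by rw [h, neg_one_mul]⟩
  refine ⟨ε, hε, fun N lam n hn ↦ mul_left_cancel₀ hl0 ?_⟩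
  rw [hn, hmoment]
  push_cast
  ring

theorem GeneratesLegendreKernel.exists_valuation_traceGaussSum_sq_eq [Fact p.Prime]
    (D : GeneratesLegendreKernel p l N f) (hl3 : 3 < l) {F : Type*} [Field F] [Fintype F]
    [Algebra (ZMod p) F] (hcard : Fintype.card F = p ^ f) {χ : MulChar F ℂ} (hχ : orderOf χ = N) :
    ∃ (V : ValuationSubring ℂ) (ε : ℤ), V.valuation (p : ℂ) < 1 ∧ (ε = 1 ∨ ε = -1) ∧
      ∀ lam n : ℕ, ¬ N ∣ lam → HasLegendreDefect l N lam n → classNumSqrtNeg l * n ≤ f ∧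
        V.valuation (traceGaussSum p (χ ^ lam)) ^ 2 =
          V.valuation (p : ℂ) ^ ((f : ℤ) + ε * (classNumSqrtNeg l * n : ℕ)) := by
  obtain ⟨V, hV⟩ := exists_valuationSubring_valuation_natCast_lt_one ℂ (Fact.out : p.Prime)
  obtain ⟨u, hu, hval⟩ := exists_valuation_traceGaussSum_pow_eq p hV hχ D.odd D.one_lt hcard
    D.coprime
  obtain ⟨ε₀, hε₀, hsum⟩ := exists_legendreResidueSum_eq D.mod_four hl3
  have hu0 : (u : ZMod l) ≠ 0 :=
    ((ZMod.isUnit_iff_coprime u l).mpr (hu.coprime_dvd_right D.dvd)).ne_zero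
  set η := quadraticChar (ZMod l) (u : ZMod l)
  have hε : η * ε₀ = 1 ∨ η * ε₀ = -1 := by
    rcases quadraticChar_dichotomy hu0 with h | h <;> rcases hε₀ with rfl | rfl <;> simp [η, h]
  refine ⟨V, η * ε₀, hV, hε, fun lam n hlam hn ↦ ?_⟩
  have hndvd : ¬ N ∣ u * lam := fun h ↦ hlam (hu.symm.dvd_of_dvd_mul_left h)
  have htwo : (2 * stickelbergerSum p f N (u * lam) : ℤ) =
      N * (f + η * ε₀ * (classNumSqrtNeg l * n : ℕ)) := by
    rw [D.two_mul_stickelbergerSum_eq hndvd, legendreResidueSum_mul lam D.pos D.dvd hu,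
      hsum N lam n hn]
    ring
  have hle : (stickelbergerSum p f N (u * lam) : ℤ) ≤ f * N := mod_cast stickelbergerSum_le D.pos
  have hN0 : (0 : ℤ) < N := mod_cast D.pos
  have hnonneg : 0 ≤ f + η * ε₀ * (classNumSqrtNeg l * n : ℕ) :=
    nonneg_of_mul_nonneg_right (htwo ▸ by positivity) hN0
  have hle_two_mul : f + η * ε₀ * (classNumSqrtNeg l * n : ℕ) ≤ 2 * f :=
    le_of_mul_le_mul_left (by linarith) hN0
  obtain ⟨E, hE⟩ := Int.eq_ofNat_of_zero_le hnonneg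
  refine ⟨by rcases hε with h | h <;> rw [h] at hnonneg hle_two_mul <;> lia, ?_⟩
  rw [hE] at htwo ⊢
  rw [zpow_natCast, ← pow_left_inj₀ zero_le zero_le D.pos.ne', pow_right_comm, hval lam hlam,
    ← pow_mul, ← pow_mul, mul_comm _ 2, mul_comm E]
  exact congrArg _ (mod_cast htwo)

end IndexTwo

section CaseB2

/-- The index two case B2 of a modulus `N = l ^ r₁ * m ^ r₂` with two prime factors: `p` has half
the maximal order modulo `l ^ r₁`, is a primitive root modulo `m ^ r₂`, and has order `f = φ(N) / 2`
modulo `N`. -/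
structure CaseB2 (p l m r₁ r₂ N f : ℕ) : Prop where
  prime_p : p.Prime
  prime_l : l.Prime
  prime_m : m.Prime
  ne : l ≠ m
  mod_four : l % 4 = 3
  three_lt : 3 < l
  m_odd : m % 2 = 1
  one_le_r₁ : 1 ≤ r₁
  one_le_r₂ : 1 ≤ r₂
  eq_mul : N = l ^ r₁ * m ^ r₂
  coprime : N.Coprime p
  orderOf_mod_l : orderOf (p : ZMod (l ^ r₁)) = (l ^ r₁).totient / 2
  orderOf_mod_m : orderOf (p : ZMod (m ^ r₂)) = (m ^ r₂).totient
  orderOf_mod_N : orderOf (p : ZMod N) = f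
  eq_totient_div_two : f = N.totient / 2

theorem odd_totient_prime_pow_div_two {l r : ℕ} (hl : l.Prime) (hl4 : l % 4 = 3) :
    Odd ((l ^ (r + 1)).totient / 2) := by
  obtain ⟨k, rfl⟩ : ∃ k, l = 4 * k + 3 := ⟨l / 4, by lia⟩
  have htotient : ((4 * k + 3) ^ (r + 1)).totient = (4 * k + 3) ^ r * (2 * k + 1) * 2 := by
    rw [Nat.totient_prime_pow_succ hl, mul_assoc]
    congr 1
    lia
  rw [htotient, Nat.mul_div_cancel _ two_pos]
  exact (Odd.pow ⟨2 * k + 1, by ring⟩).mul (odd_two_mul_add_one k)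

theorem even_totient_prime_pow {m r : ℕ} (hm : m.Prime) (hm2 : m ≠ 2) (hr : r ≠ 0) :
    Even (m ^ r).totient := by
  refine Nat.totient_even ?_
  calc 2 < m := hm.two_le.lt_of_ne' hm2
    _ ≤ m ^ r := Nat.le_self_pow hr m

theorem two_mul_totient_prime_pow_div_two {m r : ℕ} (hm : m.Prime) (hm2 : m ≠ 2) (hr : r ≠ 0) :
    2 * ((m ^ r).totient / 2) = (m ^ r).totient :=
  Nat.two_mul_div_two_of_even (even_totient_prime_pow hm hm2 hr)

theorem prime_pow_dvd_pow_totient_div_two_add_one {p m r : ℕ} (hm : m.Prime) (hm2 : m ≠ 2)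
    (hr : r ≠ 0) (hp : orderOf (p : ZMod (m ^ r)) = (m ^ r).totient) :
    ((m ^ r : ℕ) : ℤ) ∣ (p : ℤ) ^ ((m ^ r).totient / 2) + 1 := by
  have htwo := two_mul_totient_prime_pow_div_two hm hm2 hr
  set B := (m ^ r).totient / 2
  have hmul : ((m ^ r : ℕ) : ℤ) ∣ ((p : ℤ) ^ B - 1) * ((p : ℤ) ^ B + 1) := by
    have hpow : (p : ZMod (m ^ r)) ^ (2 * B) = 1 := by rw [htwo, ← hp, pow_orderOf_eq_one]
    rw [← ZMod.intCast_zmod_eq_zero_iff_dvd]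
    push_cast
    linear_combination hpow
  have hnot : ¬ ((m ^ r : ℕ) : ℤ) ∣ (p : ℤ) ^ B - 1 := fun h ↦ by
    rw [← ZMod.intCast_zmod_eq_zero_iff_dvd] at h
    push_cast at h
    have hpos : 0 < (m ^ r).totient := Nat.totient_pos.mpr (pow_pos hm.pos r)
    have := Nat.le_of_dvd (by lia) (orderOf_dvd_of_pow_eq_one (sub_eq_zero.mp h))
    lia
  rw [Nat.cast_pow] at hmul hnot ⊢
  have hmZ := Nat.prime_iff_prime_int.mp hm
  refine hmZ.pow_dvd_of_dvd_mul_left r (fun hsub ↦ ?_) hmul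
  refine hnot (hmZ.pow_dvd_of_dvd_mul_right r (fun hadd ↦ hm2 ?_) hmul)
  have htwo : (m : ℤ) ∣ (2 : ℕ) := by simpa [sub_add_eq_sub_sub] using (dvd_sub hadd hsub)
  exact (Nat.prime_dvd_prime_iff_eq hm Nat.prime_two).mp (Int.natCast_dvd_natCast.mp htwo)

namespace CaseB2

variable {p l m r₁ r₂ N f : ℕ}

theorem ne_two_l (D : CaseB2 p l m r₁ r₂ N f) : l ≠ 2 := by
  have := D.three_lt
  lia

theorem ne_two_m (D : CaseB2 p l m r₁ r₂ N f) : m ≠ 2 := by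
  have := D.m_odd
  lia

theorem ne_zero_r₁ (D : CaseB2 p l m r₁ r₂ N f) : r₁ ≠ 0 := Nat.one_le_iff_ne_zero.mp D.one_le_r₁

theorem ne_zero_r₂ (D : CaseB2 p l m r₁ r₂ N f) : r₂ ≠ 0 := Nat.one_le_iff_ne_zero.mp D.one_le_r₂

theorem l_dvd (D : CaseB2 p l m r₁ r₂ N f) : l ∣ N :=
  D.eq_mul ▸ (dvd_pow_self l D.ne_zero_r₁).mul_right _

theorem m_dvd (D : CaseB2 p l m r₁ r₂ N f) : m ∣ N :=
  D.eq_mul ▸ (dvd_pow_self m D.ne_zero_r₂).mul_left _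

theorem l_odd (D : CaseB2 p l m r₁ r₂ N f) : Odd l := D.prime_l.odd_of_ne_two D.ne_two_l

theorem N_odd (D : CaseB2 p l m r₁ r₂ N f) : Odd N :=
  D.eq_mul ▸ D.l_odd.pow.mul (D.prime_m.odd_of_ne_two D.ne_two_m).pow

theorem ne_of_prime_dvd (D : CaseB2 p l m r₁ r₂ N f) {q : ℕ} (hq : q.Prime) (hqN : q ∣ N) :
    q ≠ p := by
  rintro rfl
  exact hq.not_dvd_one (D.coprime ▸ Nat.dvd_gcd hqN dvd_rfl)

theorem odd_orderOf (D : CaseB2 p l m r₁ r₂ N f) {G : Type*} [Monoid G] {x : G} (hx : x ^ N = 1) :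
    Odd (orderOf x) :=
  D.N_odd.of_dvd_nat (orderOf_dvd_of_pow_eq_one hx)

theorem coprime_l_m (D : CaseB2 p l m r₁ r₂ N f) : l.Coprime m :=
  (Nat.coprime_primes D.prime_l D.prime_m).mpr D.ne

theorem odd_totient_l_div_two (D : CaseB2 p l m r₁ r₂ N f) : Odd ((l ^ r₁).totient / 2) := by
  rw [← Nat.sub_add_cancel D.one_le_r₁]
  exact odd_totient_prime_pow_div_two D.prime_l D.mod_four

theorem two_mul_f (D : CaseB2 p l m r₁ r₂ N f) : 2 * f = N.totient := by
  rw [D.eq_totient_div_two, Nat.two_mul_div_two_of_even (Nat.totient_even ?_)]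
  have := Nat.le_of_dvd D.N_odd.pos D.l_dvd
  have := D.three_lt
  lia

theorem f_eq (D : CaseB2 p l m r₁ r₂ N f) :
    f = 2 * ((l ^ r₁).totient / 2 * ((m ^ r₂).totient / 2)) := by
  have htwo := D.two_mul_f
  rw [D.eq_mul, Nat.totient_mul (D.coprime_l_m.pow _ _),
    ← two_mul_totient_prime_pow_div_two D.prime_l D.ne_two_l D.ne_zero_r₁,
    ← two_mul_totient_prime_pow_div_two D.prime_m D.ne_two_m D.ne_zero_r₂, mul_assoc] at htwo
  rw [Nat.eq_of_mul_eq_mul_left two_pos htwo, mul_left_comm]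

theorem two_mul_f_div_two (D : CaseB2 p l m r₁ r₂ N f) : 2 * (f / 2) = f := by
  have := D.f_eq
  lia

theorem f_div_two_eq (D : CaseB2 p l m r₁ r₂ N f) :
    f / 2 = (l ^ r₁).totient / 2 * ((m ^ r₂).totient / 2) := by
  have := D.f_eq
  lia

theorem natCast_pow_totient_div_two (D : CaseB2 p l m r₁ r₂ N f) :
    (p : ZMod l) ^ ((l ^ r₁).totient / 2) = 1 := by
  have hpow : (p : ZMod (l ^ r₁)) ^ ((l ^ r₁).totient / 2) = 1 := by
    rw [← D.orderOf_mod_l, pow_orderOf_eq_one]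
  have hcast := congrArg (ZMod.castHom (dvd_pow_self l D.ne_zero_r₁) (ZMod l)) hpow
  rwa [map_pow, map_natCast, map_one] at hcast

theorem quadraticChar_eq_one [Fact l.Prime] (D : CaseB2 p l m r₁ r₂ N f) :
    quadraticChar (ZMod l) (p : ZMod l) = 1 := by
  have hp0 : (p : ZMod l) ≠ 0 :=
    ((ZMod.isUnit_iff_coprime p l).mpr (D.coprime.coprime_dvd_left D.l_dvd).symm).ne_zero
  have hpow := congrArg (quadraticChar (ZMod l)) D.natCast_pow_totient_div_two
  rw [map_pow, map_one] at hpow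
  refine (quadraticChar_dichotomy hp0).resolve_right fun h ↦ ?_
  rw [h, D.odd_totient_l_div_two.neg_one_pow] at hpow
  lia

theorem generatesLegendreKernel [Fact l.Prime] (D : CaseB2 p l m r₁ r₂ N f) :
    GeneratesLegendreKernel p l N f where
  mod_four := D.mod_four
  odd := D.N_odd
  dvd := D.l_dvd
  coprime := D.coprime
  orderOf_eq := D.orderOf_mod_N
  two_mul_eq := D.two_mul_f
  quadraticChar_eq_one := D.quadraticChar_eq_one

theorem intCast_dvd_pow_f_div_two_sub_one (D : CaseB2 p l m r₁ r₂ N f) :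
    (l : ℤ) ∣ (p : ℤ) ^ (f / 2) - 1 := by
  rw [← ZMod.intCast_zmod_eq_zero_iff_dvd, D.f_div_two_eq, pow_mul]
  push_cast
  rw [D.natCast_pow_totient_div_two, one_pow, sub_self]

theorem intCast_dvd_pow_f_div_two_add_one (D : CaseB2 p l m r₁ r₂ N f) :
    (m : ℤ) ∣ (p : ℤ) ^ (f / 2) + 1 := by
  have hdvd : (m : ℤ) ∣ (p : ℤ) ^ ((m ^ r₂).totient / 2) + 1 :=
    (Int.natCast_dvd_natCast.mpr (dvd_pow_self m D.ne_zero_r₂)).trans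
      (prime_pow_dvd_pow_totient_div_two_add_one D.prime_m D.ne_two_m D.ne_zero_r₂ D.orderOf_mod_m)
  rw [D.f_div_two_eq, mul_comm, pow_mul]
  refine hdvd.trans ?_
  simpa using D.odd_totient_l_div_two.add_dvd_pow_add_pow ((p : ℤ) ^ ((m ^ r₂).totient / 2)) 1

end CaseB2

end CaseB2

section LegendreDefect

open Finset

theorem sum_range_mul_with_dvd {R : Type*} [AddCommMonoid R] {m : ℕ} (hm : 0 < m) (n : ℕ)
    (g : ℕ → R) : ∑ c ∈ range (m * n) with m ∣ c, g c = ∑ c ∈ range n, g (m * c) := by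
  have himage : (range (m * n)).filter (m ∣ ·) = (range n).image (m * ·) := by
    ext c
    simp only [mem_filter, mem_range, mem_image]
    constructor
    · rintro ⟨hc, k, rfl⟩
      exact ⟨k, Nat.lt_of_mul_lt_mul_left hc, rfl⟩
    · rintro ⟨k, hk, rfl⟩
      exact ⟨Nat.mul_lt_mul_of_pos_left hk hm, dvd_mul_right m k⟩
  rw [himage, sum_image fun a _ b _ h ↦ Nat.eq_of_mul_eq_mul_left hm h]

namespace CaseB2

variable {p l m r₁ r₂ N f : ℕ}

theorem coprime_iff (D : CaseB2 p l m r₁ r₂ N f) (c : ℕ) :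
    N.Coprime c ↔ ¬ l ∣ c ∧ ¬ m ∣ c := by
  rw [D.eq_mul, Nat.coprime_mul_iff_left, Nat.coprime_pow_left_iff D.one_le_r₁,
    Nat.coprime_pow_left_iff D.one_le_r₂, D.prime_l.coprime_iff_not_dvd,
    D.prime_m.coprime_iff_not_dvd]

theorem sum_coprime_eq_sub (D : CaseB2 p l m r₁ r₂ N f) {R : Type*} [AddCommGroup R] {n : ℕ}
    (hn : N = m * n) {g : ℕ → R} (hg : ∀ c, l ∣ c → g c = 0) :
    ∑ c ∈ range N with N.Coprime c, g c =
      ∑ c ∈ range N, g c - ∑ c ∈ range n, g (m * c) := by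
  have hcoprime : ∑ c ∈ range N with N.Coprime c, g c = ∑ c ∈ range N with ¬ m ∣ c, g c := by
    refine sum_subset (fun c hc ↦ ?_) fun c hc hc' ↦ hg c ?_
    · rw [mem_filter] at hc ⊢
      exact ⟨hc.1, ((D.coprime_iff c).mp hc.2).2⟩
    · by_contra hlc
      rw [mem_filter] at hc hc'
      exact hc' ⟨hc.1, (D.coprime_iff c).mpr ⟨hlc, hc.2⟩⟩
  rw [hcoprime, eq_sub_iff_add_eq', ← sum_range_mul_with_dvd D.prime_m.pos, ← hn,
    sum_filter_add_sum_filter_not]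

theorem legendreResidueSum_eq_sub [Fact l.Prime] (D : CaseB2 p l m r₁ r₂ N f) {n : ℕ}
    (hn : N = m * n) (lam : ℕ) : legendreResidueSum l N lam =
      ∑ c ∈ range N, quadraticChar (ZMod l) (c : ZMod l) * ((c * lam % N : ℕ) : ℤ) -
        ∑ c ∈ range n, quadraticChar (ZMod l) ((m * c : ℕ) : ZMod l) *
          ((m * c * lam % N : ℕ) : ℤ) := by
  refine D.sum_coprime_eq_sub hn fun c hc ↦ ?_
  rw [(ZMod.natCast_eq_zero_iff c l).mpr hc, MulChar.map_zero, zero_mul]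

theorem mul_legendreResidueSum_eq [Fact l.Prime] (D : CaseB2 p l m r₁ r₂ N f) {t₁ t₂ : ℕ}
    (ht₁ : t₁ < r₁) (ht₂ : t₂ < r₂) :
    l * legendreResidueSum l N (l ^ t₁ * m ^ t₂) = N * legendreMoment l *
      (((l ^ t₁ * m ^ t₂ : ℕ) : ℤ) * (1 - quadraticChar (ZMod l) (m : ZMod l))) := by
  obtain ⟨a, rfl⟩ := Nat.exists_eq_add_of_lt ht₁
  obtain ⟨b, rfl⟩ := Nat.exists_eq_add_of_lt ht₂
  set lam := l ^ t₁ * m ^ t₂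
  set s := l ^ a * m ^ b
  have hN : N = m * (l * s * lam) := by
    rw [D.eq_mul]
    ring
  have hfull := sum_quadraticChar_mul_mul_mod D.ne_two_l (s * m) lam lam
  have hmultiples := sum_quadraticChar_mul_mul_mod D.ne_two_l s lam (m * lam)
  rw [show l * (s * m) * lam = N by rw [hN]; ring] at hfull
  rw [show l * s * (m * lam) = N by rw [hN]; ring] at hmultiples
  have hswap : ∀ c, m * c * lam = c * (m * lam) := fun c ↦ by ring
  rw [D.legendreResidueSum_eq_sub hN, hfull]
  simp_rw [hswap, Nat.cast_mul m, map_mul, mul_assoc (quadraticChar (ZMod l) (m : ZMod l)),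
    ← mul_sum]
  rw [hmultiples, hN]
  push_cast
  ring

theorem mul_legendreResidueSum_mul_pow_eq [Fact l.Prime] (D : CaseB2 p l m r₁ r₂ N f) {t₁ : ℕ}
    (ht₁ : t₁ < r₁) : l * legendreResidueSum l N (l ^ t₁ * m ^ r₂) =
      N * legendreMoment l * ((l ^ t₁ * (m ^ r₂).totient : ℕ) : ℤ) := by
  obtain ⟨a, rfl⟩ := Nat.exists_eq_add_of_lt ht₁
  obtain ⟨b, rfl⟩ := Nat.exists_eq_add_of_le' D.one_le_r₂
  set lam := l ^ t₁ * m ^ (b + 1) with hlam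
  set s := l ^ a
  have hN : N = l * s * lam := by
    rw [D.eq_mul]
    ring
  have hN' : N = m * (l * s * (l ^ t₁ * m ^ b)) := by
    rw [hN]
    ring
  have hfull := sum_quadraticChar_mul_mul_mod D.ne_two_l s lam lam
  have hmultiples := sum_quadraticChar_mul_mul_mod D.ne_two_l s (l ^ t₁ * m ^ b) lam
  have hcoprime : m.Coprime (l * s) := by
    rw [← pow_succ']
    exact D.coprime_l_m.symm.pow_right _
  have hpos : 0 < l * s := mul_pos D.prime_l.pos (pow_pos D.prime_l.pos a)
  rw [← sum_range_mul_comp_mul_of_coprime _ hcoprime hpos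
    fun c ↦ by rw [natCast_mod_eq_of_dvd (dvd_mul_right l s), Nat.mul_mod_mul_right,
      Nat.mul_mod_mul_right, Nat.mod_mod]] at hmultiples
  rw [D.legendreResidueSum_eq_sub hN', hN, hfull, hmultiples, Nat.totient_prime_pow_succ D.prime_m]
  push_cast [D.prime_m.one_le]
  rw [show (lam : ℤ) = l ^ t₁ * m ^ (b + 1) by rw [hlam]; push_cast; rfl]
  ring

theorem not_dvd_of_lt_left (D : CaseB2 p l m r₁ r₂ N f) {t₁ : ℕ} (ht₁ : t₁ < r₁) (t₂ : ℕ) :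
    ¬ N ∣ l ^ t₁ * m ^ t₂ := fun h ↦ by
  have hdvd := (D.coprime_l_m.pow r₁ t₂).dvd_of_dvd_mul_right
    ((D.eq_mul ▸ dvd_mul_right _ _ : l ^ r₁ ∣ N).trans h)
  exact ht₁.not_ge ((Nat.pow_dvd_pow_iff_le_right D.prime_l.one_lt).mp hdvd)

theorem not_dvd_of_lt_right (D : CaseB2 p l m r₁ r₂ N f) (t₁ : ℕ) {t₂ : ℕ} (ht₂ : t₂ < r₂) :
    ¬ N ∣ l ^ t₁ * m ^ t₂ := fun h ↦ by
  have hdvd := (D.coprime_l_m.symm.pow r₂ t₁).dvd_of_dvd_mul_left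
    ((D.eq_mul ▸ dvd_mul_left _ _ : m ^ r₂ ∣ N).trans h)
  exact ht₂.not_ge ((Nat.pow_dvd_pow_iff_le_right D.prime_m.one_lt).mp hdvd)

theorem hasLegendreDefect_zero [Fact l.Prime] (D : CaseB2 p l m r₁ r₂ N f)
    (hm : quadraticChar (ZMod l) (m : ZMod l) = 1) {t₁ t₂ : ℕ} (ht₁ : t₁ < r₁) (ht₂ : t₂ < r₂) :
    HasLegendreDefect l N (l ^ t₁ * m ^ t₂) 0 := by
  rw [HasLegendreDefect, D.mul_legendreResidueSum_eq ht₁ ht₂, hm, sub_self, mul_zero, Nat.cast_zero]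

theorem hasLegendreDefect_two_mul [Fact l.Prime] (D : CaseB2 p l m r₁ r₂ N f)
    (hm : quadraticChar (ZMod l) (m : ZMod l) = -1) {t₁ t₂ : ℕ} (ht₁ : t₁ < r₁) (ht₂ : t₂ < r₂) :
    HasLegendreDefect l N (l ^ t₁ * m ^ t₂) (2 * (l ^ t₁ * m ^ t₂)) := by
  rw [HasLegendreDefect, D.mul_legendreResidueSum_eq ht₁ ht₂, hm]
  push_cast
  ring

theorem hasLegendreDefect_mul_totient [Fact l.Prime] (D : CaseB2 p l m r₁ r₂ N f) {t₁ : ℕ}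
    (ht₁ : t₁ < r₁) :
    HasLegendreDefect l N (l ^ t₁ * m ^ r₂) (l ^ t₁ * (m ^ r₂).totient) :=
  D.mul_legendreResidueSum_mul_pow_eq ht₁

end CaseB2

end LegendreDefect

section PeriodSums

open Finset

variable {l : ℕ} [Fact l.Prime]

/-- The period sums `∑ κ(a) z ^ a` of `κ` at the `l`-th roots of unity `z` are integral multiples
of `δ`. -/
def HasIntegralPeriodSums (κ : MulChar (ZMod l) ℤ) (δ : ℂ) : Prop :=
  ∀ z : ℂ, z ^ l = 1 → ∃ k : ℤ, ∑ a ∈ range l, (κ (a : ZMod l) : ℂ) * z ^ a = k * δ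

theorem hasIntegralPeriodSums_one : HasIntegralPeriodSums (1 : MulChar (ZMod l) ℤ) 1 := by
  intro z hz
  have hlpos := (Fact.out : l.Prime).pos
  have hκ : ∀ a ∈ (range l).erase 0,
      (((1 : MulChar (ZMod l) ℤ) (a : ZMod l) : ℤ) : ℂ) * z ^ a = z ^ a := by
    intro a ha
    rw [mem_erase, mem_range] at ha
    have ha0 : (a : ZMod l) ≠ 0 := by
      rw [Ne, ZMod.natCast_eq_zero_iff]
      exact Nat.not_dvd_of_pos_of_lt (Nat.pos_of_ne_zero ha.1) ha.2
    rw [MulChar.one_apply ha0.isUnit, Int.cast_one, one_mul]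
  rw [← sum_erase (range l) (a := 0) (by simp [MulChar.map_zero]), sum_congr rfl hκ,
    sum_erase_eq_sub (mem_range.mpr hlpos), pow_zero]
  rcases eq_or_ne z 1 with rfl | hz1
  · exact ⟨l - 1, by simp⟩
  · exact ⟨-1, by rw [geom_sum_eq hz1, hz]; simp⟩

theorem hasIntegralPeriodSums_quadraticChar (hl : l % 4 = 3) :
    HasIntegralPeriodSums (quadraticChar (ZMod l)) (sqrtNeg l) := by
  intro z hz
  have hsum : ∀ w : ℂ, ∑ a ∈ range l, ((quadraticChar (ZMod l) (a : ZMod l) : ℤ) : ℂ) * w ^ a =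
      ∑ j : ZMod l, legendreChar l j * w ^ j.val := fun w ↦ by
    simp [← sum_zmod_val_eq_sum_range (N := l), legendreChar_apply]
  rw [hsum]
  rcases eq_or_ne z 1 with rfl | hz1
  · exact ⟨0, by simp [MulChar.sum_eq_zero_of_ne_one (legendreChar_ne_one hl)]⟩
  · have hprim : IsPrimitiveRoot z l := IsPrimitiveRoot.iff_orderOf.mpr (orderOf_eq_prime hz hz1)
    have hsq : gaussSum (legendreChar l) (AddChar.zmodChar l hz) ^ 2 =
        legendreChar l (-1) * Fintype.card (ZMod l) :=
      gaussSum_sq (legendreChar_ne_one hl) legendreChar_isQuadratic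
        (AddChar.zmodChar_primitive_of_primitive_root l hprim)
    rw [legendreChar_apply, quadraticChar_zmod_neg_one hl, ZMod.card] at hsq
    have hsq' : (∑ j : ZMod l, legendreChar l j * z ^ j.val) ^ 2 = sqrtNeg l ^ 2 := by
      rw [sqrtNeg_sq, ← neg_one_mul]
      exact_mod_cast hsq
    rcases sq_eq_sq_iff_eq_or_eq_neg.mp hsq' with h | h
    · exact ⟨1, by rw [h, Int.cast_one, one_mul]⟩
    · exact ⟨-1, by rw [h, Int.cast_neg, Int.cast_one, neg_one_mul]⟩

theorem HasIntegralPeriodSums.exists_sum_range_mul_eq {κ : MulChar (ZMod l) ℤ} {δ : ℂ}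
    (hκ : HasIntegralPeriodSums κ δ) (s : ℕ) {z : ℂ} (hz : z ^ (l * s) = 1) :
    ∃ k : ℤ, ∑ a ∈ range (l * s), (κ (a : ZMod l) : ℂ) * z ^ a = k * δ := by
  have hfactor : ∑ a ∈ range (l * s), (κ (a : ZMod l) : ℂ) * z ^ a =
      (∑ b ∈ range s, (z ^ l) ^ b) * ∑ a ∈ range l, (κ (a : ZMod l) : ℂ) * z ^ a := by
    rw [sum_range_mul, sum_mul]
    refine sum_congr rfl fun b _ ↦ ?_
    rw [mul_sum]
    refine sum_congr rfl fun a _ ↦ ?_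
    simp only [Nat.cast_add, Nat.cast_mul, CharP.cast_eq_zero, zero_mul, zero_add]
    ring
  rw [hfactor]
  by_cases hzl : z ^ l = 1
  · obtain ⟨k, hk⟩ := hκ z hzl
    exact ⟨s * k, by simp [hk, hzl, mul_assoc]⟩
  · exact ⟨0, by rw [geom_sum_eq hzl, ← pow_mul, hz]; simp⟩

theorem CaseB2.exists_sum_coprime_eq {p m r₁ r₂ N f : ℕ} (D : CaseB2 p l m r₁ r₂ N f)
    {κ : MulChar (ZMod l) ℤ} {δ : ℂ} (hκ : HasIntegralPeriodSums κ δ) {z : ℂ} (hz : z ^ N = 1) :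
    ∃ k : ℤ, ∑ c ∈ range N with N.Coprime c, (κ (c : ZMod l) : ℂ) * z ^ c = k * δ := by
  obtain ⟨s, rfl⟩ : ∃ s, N = m * (l * s) := by
    obtain ⟨s, hs⟩ := D.coprime_l_m.mul_dvd_of_dvd_of_dvd D.l_dvd D.m_dvd
    exact ⟨s, by rw [hs]; ring⟩
  obtain ⟨k₁, hk₁⟩ := hκ.exists_sum_range_mul_eq (m * s) (z := z) (by rw [← hz]; ring)
  obtain ⟨k₂, hk₂⟩ := hκ.exists_sum_range_mul_eq s (z := z ^ m) (by rw [← pow_mul, hz])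
  refine ⟨k₁ - κ (m : ZMod l) * k₂, ?_⟩
  have hmultiples : ∑ c ∈ range (l * s), (κ ((m * c : ℕ) : ZMod l) : ℂ) * z ^ (m * c) =
      κ (m : ZMod l) * (k₂ * δ) := by
    rw [← hk₂, mul_sum]
    refine sum_congr rfl fun c _ ↦ ?_
    rw [Nat.cast_mul, map_mul, Int.cast_mul, pow_mul, mul_assoc]
  rw [D.sum_coprime_eq_sub rfl fun c hc ↦ by
      rw [(ZMod.natCast_eq_zero_iff c l).mpr hc, MulChar.map_zero, Int.cast_zero, zero_mul],
    hmultiples, mul_left_comm m, hk₁]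
  push_cast
  ring

end PeriodSums

section Rationality

open Finset

theorem not_dvd_sub_one_of_lt_orderOf {q r : ℕ} {x : ℤ} (hq : 0 < q)
    (hx : q ^ r < orderOf (x : ZMod (q ^ (r + 1)))) : ¬ (q : ℤ) ∣ x - 1 := fun hdvd ↦ by
  have hpow := dvd_sub_pow_of_dvd_sub hdvd r
  rw [one_pow] at hpow
  refine hx.not_ge (Nat.le_of_dvd (pow_pos hq r) (orderOf_dvd_of_pow_eq_one ?_))
  rw [← sub_eq_zero]
  exact_mod_cast (ZMod.intCast_zmod_eq_zero_iff_dvd _ _).mpr (mod_cast hpow)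

theorem CaseB2.coprime_prime_sub_one {p l m r₁ r₂ N f : ℕ} (D : CaseB2 p l m r₁ r₂ N f) :
    N.Coprime (p - 1) := by
  have hcast : ((p - 1 : ℕ) : ℤ) = (p : ℤ) - 1 := by rw [Nat.cast_sub D.prime_p.one_le]; rfl
  rw [D.coprime_iff, ← Int.natCast_dvd_natCast, ← Int.natCast_dvd_natCast, hcast]
  constructor
  · obtain ⟨s, rfl⟩ := Nat.exists_eq_add_of_le' D.one_le_r₁
    refine not_dvd_sub_one_of_lt_orderOf (r := s) D.prime_l.pos ?_
    have hl := D.mod_four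
    have hl3 := D.three_lt
    rw [Int.cast_natCast, D.orderOf_mod_l, Nat.totient_prime_pow_succ D.prime_l,
      Nat.mul_div_assoc _ (by lia)]
    exact lt_mul_of_one_lt_right (pow_pos D.prime_l.pos s) (by lia)
  · obtain ⟨s, rfl⟩ := Nat.exists_eq_add_of_le' D.one_le_r₂
    refine not_dvd_sub_one_of_lt_orderOf (r := s) D.prime_m.pos ?_
    have hm := D.m_odd
    have := D.prime_m.two_le
    rw [Int.cast_natCast, D.orderOf_mod_m, Nat.totient_prime_pow_succ D.prime_m]
    exact lt_mul_of_one_lt_right (pow_pos D.prime_m.pos s) (by lia)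

theorem CaseB2.coprime_orderOf {p l m r₁ r₂ N f : ℕ} (D : CaseB2 p l m r₁ r₂ N f) {G : Type*}
    [Monoid G] {x : G} (hx : x ^ N = 1) : (orderOf x).Coprime (p - 1) :=
  D.coprime_prime_sub_one.coprime_dvd_left (orderOf_dvd_of_pow_eq_one hx)

section

variable (p : ℕ) [Fact p.Prime] {F : Type*} [Field F] [Fintype F] [Algebra (ZMod p) F]

omit [Fintype F] in
theorem mulChar_algebraMap_eq_one [Finite F] {R : Type*} [CommRing R] {χ : MulChar F R}
    (hχ : (orderOf χ).Coprime (p - 1)) {a : ZMod p} (ha : a ≠ 0) :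
    χ (algebraMap (ZMod p) F a) = 1 := by
  have hu : IsUnit (algebraMap (ZMod p) F a) := ha.isUnit.map _
  have horder : χ (algebraMap (ZMod p) F a) ^ orderOf χ = 1 := by
    rw [← MulChar.pow_apply' _ χ.orderOf_pos.ne', pow_orderOf_eq_one, MulChar.one_apply hu]
  have hsub : χ (algebraMap (ZMod p) F a) ^ (p - 1) = 1 := by
    rw [← map_pow, ← map_pow, ZMod.pow_card_sub_one_eq_one ha, map_one, map_one]
  have hgcd := pow_gcd_eq_one.mpr ⟨horder, hsub⟩
  rwa [hχ, pow_one] at hgcd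

theorem sum_mulChar_mul_traceAddChar_mul {χ : MulChar F ℂ} (hχ : (orderOf χ).Coprime (p - 1))
    {a : ZMod p} (ha : a ≠ 0) :
    ∑ x : F, χ x * traceAddChar p F (algebraMap (ZMod p) F a * x) = traceGaussSum p χ := by
  have ha' : algebraMap (ZMod p) F a ≠ 0 := by simpa using ha
  have hshift := gaussSum_mulShift χ (traceAddChar p F) (Units.mk0 _ ha')
  rw [Units.val_mk0, mulChar_algebraMap_eq_one p hχ ha, one_mul] at hshift
  exact hshift

omit [Fintype F] in
theorem exists_sum_traceAddChar_mul_eq_intCast (x : F) : ∃ k : ℤ,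
    ∑ a ∈ univ.erase (0 : ZMod p), traceAddChar p F (algebraMap (ZMod p) F a * x) = k := by
  let φ : AddChar (ZMod p) ℂ := (traceAddChar p F).compAddMonoidHom
    ((AddMonoidHom.mulRight x).comp (algebraMap (ZMod p) F).toAddMonoidHom)
  refine ⟨(if φ = 0 then p else 0) - 1, ?_⟩
  have hsum := AddChar.sum_eq_ite φ
  rw [ZMod.card] at hsum
  change ∑ a ∈ univ.erase (0 : ZMod p), φ a = _
  rw [sum_erase_eq_sub (mem_univ _), hsum, AddChar.map_zero_eq_one]
  push_cast
  rfl

theorem exists_sub_one_mul_traceGaussSum_eq : ∃ k : F → ℤ, ∀ χ : MulChar F ℂ,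
    (orderOf χ).Coprime (p - 1) → ((p - 1 : ℕ) : ℂ) * traceGaussSum p χ = ∑ x, k x * χ x := by
  choose k hk using fun x : F ↦ exists_sum_traceAddChar_mul_eq_intCast p x
  refine ⟨k, fun χ hχ ↦ ?_⟩
  calc ((p - 1 : ℕ) : ℂ) * traceGaussSum p χ
      = ∑ _a ∈ univ.erase (0 : ZMod p), traceGaussSum p χ := by
        rw [sum_const, card_erase_of_mem (mem_univ _), card_univ, ZMod.card, nsmul_eq_mul]
    _ = ∑ a ∈ univ.erase (0 : ZMod p),
          ∑ x, χ x * traceAddChar p F (algebraMap (ZMod p) F a * x) :=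
        sum_congr rfl fun a ha ↦ (sum_mulChar_mul_traceAddChar_mul p hχ (ne_of_mem_erase ha)).symm
    _ = ∑ x, k x * χ x := by
        rw [sum_comm]
        refine sum_congr rfl fun x _ ↦ ?_
        rw [← mul_sum, hk, mul_comm]

end

variable {p l m r₁ r₂ N f : ℕ} [Fact l.Prime] [Fact p.Prime] {F : Type*} [Field F] [Fintype F]
  [Algebra (ZMod p) F] {ρ : MulChar F ℂ}

theorem GeneratesLegendreKernel.sum_coprime_mul_traceGaussSum_pow
    (D : GeneratesLegendreKernel p l N f) {κ : MulChar (ZMod l) ℤ} (hκ : κ (p : ZMod l) = 1)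
    (hρ : ρ ^ N = 1) :
    ∑ c ∈ range N with N.Coprime c, (κ (c : ZMod l) : ℂ) * traceGaussSum p (ρ ^ c) =
      f * (traceGaussSum p ρ + κ (-1) * traceGaussSum p ρ⁻¹) := by
  have hinv : ρ ^ (N - 1) = ρ⁻¹ := by
    rw [eq_inv_iff_mul_eq_one, ← pow_succ, Nat.sub_add_cancel D.pos, hρ]
  simp only [D.sum_coprime_eq, natCast_mod_eq_of_dvd D.dvd, ← pow_eq_pow_mod _ hρ, pow_mul, hinv,
    traceGaussSum_pow_char_pow, Nat.cast_mul, Nat.cast_pow, map_mul, map_pow, hκ, one_pow, mul_one,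
    natCast_sub_one_eq_neg_one_of_dvd D.pos D.dvd, Int.cast_one, one_mul, sum_const, card_range,
    nsmul_eq_mul]

theorem CaseB2.exists_mul_traceGaussSum_add_eq (D : CaseB2 p l m r₁ r₂ N f)
    {κ : MulChar (ZMod l) ℤ} {δ : ℂ} (hκ : HasIntegralPeriodSums κ δ) (hκp : κ (p : ZMod l) = 1)
    (hρ : ρ ^ N = 1) :
    ∃ k : ℤ, ((f * (p - 1) : ℕ) : ℂ) *
      (traceGaussSum p ρ + κ (-1) * traceGaussSum p ρ⁻¹) = k * δ := by
  obtain ⟨k, hk⟩ := exists_sub_one_mul_traceGaussSum_eq p (F := F)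
  have hk' : ∀ c : ℕ, ((p - 1 : ℕ) : ℂ) * traceGaussSum p (ρ ^ c) = ∑ x, k x * (ρ ^ c) x :=
    fun c ↦ hk _ (D.coprime_orderOf (by rw [pow_right_comm, hρ, one_pow]))
  have hvalue : ∀ x, ∃ j : ℤ,
      ∑ c ∈ range N with N.Coprime c, (κ (c : ZMod l) : ℂ) * (ρ ^ c) x = j * δ := by
    intro x
    by_cases hx : IsUnit x
    · obtain ⟨u, rfl⟩ := hx
      simp only [MulChar.pow_apply_coe]
      exact D.exists_sum_coprime_eq hκ (by rw [← MulChar.pow_apply_coe, hρ, MulChar.one_apply_coe])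
    · exact ⟨0, by simp [MulChar.map_nonunit _ hx]⟩
  choose j hj using hvalue
  refine ⟨∑ x, k x * j x, ?_⟩
  calc ((f * (p - 1) : ℕ) : ℂ) * (traceGaussSum p ρ + κ (-1) * traceGaussSum p ρ⁻¹)
      = ∑ c ∈ range N with N.Coprime c,
          (κ (c : ZMod l) : ℂ) * (((p - 1 : ℕ) : ℂ) * traceGaussSum p (ρ ^ c)) := by
        simp_rw [mul_left_comm _ ((p - 1 : ℕ) : ℂ), ← mul_sum,
          D.generatesLegendreKernel.sum_coprime_mul_traceGaussSum_pow hκp hρ]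
        push_cast
        ring
    _ = ∑ x, k x * ∑ c ∈ range N with N.Coprime c, (κ (c : ZMod l) : ℂ) * (ρ ^ c) x := by
        simp_rw [hk', mul_sum]
        rw [sum_comm]
        simp_rw [mul_left_comm]
    _ = (∑ x, k x * j x : ℤ) * δ := by
        simp_rw [hj, ← mul_assoc]
        rw [← sum_mul]
        push_cast
        rfl

/-- `z` and `w` are conjugate elements `r ± s√-l` of the quadratic field `ℚ(√-l)`, viewed in `ℂ`. -/
def IsConjPair (l : ℕ) (z w : ℂ) : Prop :=
  ∃ r s : ℚ, z = r + s * sqrtNeg l ∧ w = r - s * sqrtNeg l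

theorem CaseB2.isConjPair_traceGaussSum (D : CaseB2 p l m r₁ r₂ N f) (hρ : ρ ^ N = 1) :
    IsConjPair l (traceGaussSum p ρ) (traceGaussSum p ρ⁻¹) := by
  have hpu : IsUnit (p : ZMod l) :=
    (ZMod.isUnit_iff_coprime p l).mpr (D.coprime.coprime_dvd_left D.l_dvd).symm
  obtain ⟨k₁, hk₁⟩ :=
    D.exists_mul_traceGaussSum_add_eq hasIntegralPeriodSums_one (MulChar.one_apply hpu) hρ
  obtain ⟨k₂, hk₂⟩ := D.exists_mul_traceGaussSum_add_eq
    (hasIntegralPeriodSums_quadraticChar D.mod_four) D.quadraticChar_eq_one hρ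
  rw [MulChar.one_apply isUnit_one.neg] at hk₁
  rw [quadraticChar_zmod_neg_one D.mod_four] at hk₂
  have hfpos : 0 < f := by
    have := D.two_mul_f
    have := Nat.totient_pos.mpr D.N_odd.pos
    lia
  have hc : ((f * (p - 1) : ℕ) : ℂ) ≠ 0 :=
    mod_cast (mul_pos hfpos (Nat.sub_pos_of_lt D.prime_p.one_lt)).ne'
  set c := f * (p - 1)
  refine ⟨k₁ / (2 * c), k₂ / (2 * c), ?_, ?_⟩
  · push_cast at *
    field_simp
    linear_combination hk₁ + hk₂
  · push_cast at *
    field_simp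
    linear_combination hk₁ - hk₂

end Rationality

section QuadraticIntegers

theorem eq_zero_of_sq_add_prime_mul_sq_eq_four {l : ℕ} (hl : l.Prime) (hl3 : 3 < l) {k : ℤ} {r : ℚ}
    (h : (k : ℚ) ^ 2 + l * r ^ 2 = 4) : r = 0 := by
  by_contra hr
  have := Fact.mk hl
  have hl0 : (0 : ℚ) < l := mod_cast hl.pos
  have hk : k ^ 2 < 4 := by
    have : (k : ℚ) ^ 2 < 4 := by
      have : 0 < (l : ℚ) * r ^ 2 := by positivity
      linarith
    exact_mod_cast this
  have hndvd : ¬ (l : ℤ) ∣ 4 - k ^ 2 := fun hdvd ↦ by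
    have hle := Int.le_of_dvd (by lia) hdvd
    have hsq := sq_nonneg k
    obtain rfl : l = 4 := by lia
    exact absurd hl (by decide)
  have hleft : padicValRat l ((l : ℚ) * r ^ 2) = 1 + 2 * padicValRat l r := by
    rw [padicValRat.mul hl0.ne' (pow_ne_zero _ hr), padicValRat.self hl.one_lt, padicValRat.pow,
      Nat.cast_ofNat]
  have hright : padicValRat l ((4 - k ^ 2 : ℤ) : ℚ) = 0 := by
    rw [padicValRat.of_int, padicValInt.eq_zero_of_not_dvd hndvd, Nat.cast_zero]
  have heq : (l : ℚ) * r ^ 2 = ((4 - k ^ 2 : ℤ) : ℚ) := by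
    push_cast
    linarith
  rw [heq, hright] at hleft
  lia

theorem exists_eq_intCast_of_isIntegral_ratCast {K : Type*} [Field K] [CharZero K] {r : ℚ}
    (h : IsIntegral ℤ (r : K)) : ∃ n : ℤ, r = n := by
  rw [← eq_ratCast (algebraMap ℚ K), isIntegral_algebraMap_iff (algebraMap ℚ K).injective] at h
  obtain ⟨n, hn⟩ := IsIntegrallyClosed.isIntegral_iff.mp h
  exact ⟨n, hn.symm⟩

namespace IsConjPair

variable {l : ℕ} {z w z' w' : ℂ}

theorem symm (h : IsConjPair l z w) : IsConjPair l w z := by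
  obtain ⟨r, s, rfl, rfl⟩ := h
  exact ⟨r, -s, by push_cast; ring, by push_cast; ring⟩

theorem natCast (l n : ℕ) : IsConjPair l n n := ⟨n, 0, by simp, by simp⟩

theorem mul (h : IsConjPair l z w) (h' : IsConjPair l z' w') : IsConjPair l (z * z') (w * w') := by
  obtain ⟨r, s, rfl, rfl⟩ := h
  obtain ⟨r', s', rfl, rfl⟩ := h'
  refine ⟨r * r' - l * (s * s'), r * s' + s * r', ?_, ?_⟩
  · push_cast
    linear_combination (s : ℂ) * s' * sqrtNeg_sq l
  · push_cast
    linear_combination (s : ℂ) * s' * sqrtNeg_sq l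

theorem pow (h : IsConjPair l z w) (n : ℕ) : IsConjPair l (z ^ n) (w ^ n) := by
  induction n with
  | zero => simpa using natCast l 1
  | succ n ih =>
    rw [pow_succ, pow_succ]
    exact ih.mul h

theorem exists_eq_intCast_add_div_two (h : IsConjPair l z w) (hz : IsIntegral ℤ z)
    (hw : IsIntegral ℤ w) : ∃ (n : ℤ) (t : ℚ),
      z = (n + t * sqrtNeg l) / 2 ∧ w = (n - t * sqrtNeg l) / 2 := by
  obtain ⟨r, s, rfl, rfl⟩ := h
  have hadd : (r : ℂ) + s * sqrtNeg l + (r - s * sqrtNeg l) = (2 * r : ℚ) := by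
    push_cast
    ring
  obtain ⟨n, hn⟩ := exists_eq_intCast_of_isIntegral_ratCast (hadd ▸ hz.add hw)
  have hn' : (2 * r : ℂ) = n := mod_cast congrArg (Rat.cast : ℚ → ℂ) hn
  refine ⟨n, 2 * s, ?_, ?_⟩
  · push_cast
    linear_combination hn' / 2
  · push_cast
    linear_combination hn' / 2

variable {V : ValuationSubring ℂ} {p : ℕ}

theorem eq_pow_or_eq_neg_pow (h : IsConjPair l z w) (hl : l.Prime) (hl3 : 3 < l) (hp : p.Prime)
    (hV : V.valuation (p : ℂ) < 1) (hz : IsIntegral ℤ z) (hw : IsIntegral ℤ w) {k : ℕ}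
    (hzw : z * w = (p : ℂ) ^ (2 * k)) (hVz : V.valuation z ≤ V.valuation (p : ℂ) ^ k)
    (hVw : V.valuation w ≤ V.valuation (p : ℂ) ^ k) :
    z = (p : ℂ) ^ k ∨ z = -(p : ℂ) ^ k := by
  obtain ⟨n, t, rfl, rfl⟩ := h.exists_eq_intCast_add_div_two hz hw
  have hVn : V.valuation (n : ℂ) ≤ V.valuation (p : ℂ) ^ k := by
    convert V.valuation.map_add_le hVz hVw using 2
    ring
  obtain ⟨c, rfl⟩ := pow_dvd_of_valuation_intCast_le hp hV hVn
  push_cast at hzw ⊢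
  have hpk : (p : ℚ) ^ k ≠ 0 := pow_ne_zero _ (Nat.cast_ne_zero.mpr hp.ne_zero)
  have hnorm : ((p : ℚ) ^ k * c) ^ 2 + l * t ^ 2 = 4 * (p : ℚ) ^ (2 * k) := by
    have : ((p : ℂ) ^ k * c) ^ 2 + l * (t : ℂ) ^ 2 = 4 * (p : ℂ) ^ (2 * k) := by
      linear_combination 4 * hzw + (t : ℂ) ^ 2 * sqrtNeg_sq l
    exact_mod_cast this
  have hfour : (c : ℚ) ^ 2 + l * (t / (p : ℚ) ^ k) ^ 2 = 4 := by
    field_simp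
    linear_combination hnorm
  have hquot := eq_zero_of_sq_add_prime_mul_sq_eq_four hl hl3 hfour
  obtain rfl : t = 0 := (div_eq_zero_iff.mp hquot).resolve_right hpk
  have hc : c ^ 2 = 2 ^ 2 := by
    rw [hquot] at hfour
    exact_mod_cast (by linear_combination hfour : (c : ℚ) ^ 2 = 2 ^ 2)
  refine (sq_eq_sq_iff_eq_or_eq_neg.mp hc).imp (fun h ↦ ?_) fun h ↦ ?_
  · rw [h]
    push_cast
    ring
  · rw [h]
    push_cast
    ring

theorem eq_or_eq_neg (h : IsConjPair l z w) (h' : IsConjPair l z' w') (hl : l.Prime) (hl3 : 3 < l)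
    (hp : p.Prime) (hV : V.valuation (p : ℂ) < 1) (hz : IsIntegral ℤ z) (hw : IsIntegral ℤ w)
    (hz' : IsIntegral ℤ z') (hw' : IsIntegral ℤ w') {k : ℕ} (hzw : z * w = (p : ℂ) ^ k)
    (hzw' : z' * w' = (p : ℂ) ^ k) (hVz : V.valuation z = V.valuation z') :
    z = z' ∨ z = -z' := by
  have hpk : (p : ℂ) ^ k ≠ 0 := pow_ne_zero _ (Nat.cast_ne_zero.mpr hp.ne_zero)
  have hw0 : w' ≠ 0 := right_ne_zero_of_mul (hzw' ▸ hpk)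
  have hsign := (h.mul h'.symm).eq_pow_or_eq_neg_pow hl hl3 hp hV (hz.mul hw') (hw.mul hz') (k := k)
    (by linear_combination z' * w' * hzw + (p : ℂ) ^ k * hzw')
    (by rw [map_mul, hVz, ← map_mul, hzw', map_pow])
    (by rw [map_mul, ← hVz, ← map_mul, mul_comm, hzw, map_pow])
  rw [← hzw', ← neg_mul] at hsign
  exact hsign.imp (mul_right_cancel₀ hw0) (mul_right_cancel₀ hw0)

end IsConjPair

/-- The element `(a + b√-l) / 2` of `ℚ(√-l)`, viewed in `ℂ`. -/
noncomputable def halfQuadratic (l : ℕ) (a b : ℤ) : ℂ := (a + b * sqrtNeg l) / 2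

theorem isConjPair_halfQuadratic (l : ℕ) (a b : ℤ) :
    IsConjPair l (halfQuadratic l a b) (halfQuadratic l a (-b)) :=
  ⟨a / 2, b / 2, by rw [halfQuadratic]; push_cast; ring, by rw [halfQuadratic]; push_cast; ring⟩

theorem halfQuadratic_add_halfQuadratic_neg (l : ℕ) (a b : ℤ) :
    halfQuadratic l a b + halfQuadratic l a (-b) = a := by
  rw [halfQuadratic, halfQuadratic]
  push_cast
  ring

variable {l : ℕ} {a b c : ℤ}

theorem halfQuadratic_mul_halfQuadratic_neg (h : 4 * c = a ^ 2 + l * b ^ 2) :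
    halfQuadratic l a b * halfQuadratic l a (-b) = c := by
  have hc : (4 * c : ℂ) = a ^ 2 + l * b ^ 2 := mod_cast congrArg (Int.cast : ℤ → ℂ) h
  rw [halfQuadratic, halfQuadratic]
  push_cast
  linear_combination -hc / 4 - (b : ℂ) ^ 2 / 4 * sqrtNeg_sq l

theorem isIntegral_halfQuadratic (h : 4 * c = a ^ 2 + l * b ^ 2) :
    IsIntegral ℤ (halfQuadratic l a b) := by
  refine ⟨X ^ 2 - C a * X + C c, by monicity!, ?_⟩
  rw [← eval_map, Polynomial.map_add, Polynomial.map_sub, Polynomial.map_mul, Polynomial.map_pow,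
    map_X, map_C, map_C, eval_add, eval_sub, eval_mul, eval_pow, eval_X, eval_C, eval_C, eq_intCast,
    eq_intCast, ← halfQuadratic_mul_halfQuadratic_neg h,
    ← halfQuadratic_add_halfQuadratic_neg l a b]
  ring

variable {V : ValuationSubring ℂ} {p k : ℕ}

theorem exists_valuation_halfQuadratic_eq_and_eq_one (h : 4 * (p : ℤ) ^ k = a ^ 2 + l * b ^ 2)
    (hp : p.Prime) (hV : V.valuation (p : ℂ) < 1) (ha : ¬ (p : ℤ) ∣ a) :
    ∃ b' : ℤ, b' ^ 2 = b ^ 2 ∧ V.valuation (halfQuadratic l a b') = V.valuation (p : ℂ) ^ k ∧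
      V.valuation (halfQuadratic l a (-b')) = 1 := by
  have hle := valuation_le_one_of_isIntegral (V := V) (isIntegral_halfQuadratic h)
  have hle_neg : V.valuation (halfQuadratic l a (-b)) ≤ 1 :=
    valuation_le_one_of_isIntegral (isIntegral_halfQuadratic (neg_sq b ▸ h))
  have hmul := congrArg V.valuation (halfQuadratic_mul_halfQuadratic_neg h)
  push_cast at hmul
  rw [map_mul, map_pow] at hmul
  obtain heq | hlt := hle_neg.eq_or_lt
  · exact ⟨b, rfl, by rwa [heq, mul_one] at hmul, heq⟩
  have heq : V.valuation (halfQuadratic l a b) = 1 := hle.eq_of_not_lt fun hlt' ↦ by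
    have hadd := V.valuation.map_add_lt hlt' hlt
    rw [halfQuadratic_add_halfQuadratic_neg, valuation_intCast_eq_one hp hV ha] at hadd
    exact hadd.false
  exact ⟨-b, neg_sq b, by rwa [heq, one_mul] at hmul, by rwa [neg_neg]⟩

theorem exists_valuation_halfQuadratic_sq_eq (h : 4 * (p : ℤ) ^ k = a ^ 2 + l * b ^ 2)
    (hp : p.Prime) (hV : V.valuation (p : ℂ) < 1) (ha : ¬ (p : ℤ) ∣ a) {ε : ℤ}
    (hε : ε = 1 ∨ ε = -1) : ∃ b' : ℤ, b' ^ 2 = b ^ 2 ∧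
      V.valuation (halfQuadratic l a b') ^ 2 = V.valuation (p : ℂ) ^ ((k : ℤ) + ε * k) := by
  obtain ⟨b', hb', hval, hval_neg⟩ := exists_valuation_halfQuadratic_eq_and_eq_one h hp hV ha
  rcases hε with rfl | rfl
  · refine ⟨b', hb', ?_⟩
    rw [hval, ← pow_mul, one_mul, ← two_mul, mul_comm k]
    exact (zpow_natCast _ _).symm
  · refine ⟨-b', by rw [neg_sq, hb'], ?_⟩
    rw [hval_neg, one_pow, neg_one_mul, add_neg_cancel, zpow_zero]

theorem valuation_halfQuadratic_sq_sub_lt_one (h : 4 * c = a ^ 2 + l * b ^ 2)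
    (hV : V.valuation (l : ℂ) < 1) : V.valuation (halfQuadratic l a b ^ 2 - c) < 1 := by
  have hsqrt : V.valuation (sqrtNeg l) < 1 := by
    rw [← pow_lt_one_iff two_ne_zero, ← map_pow, sqrtNeg_sq, Valuation.map_neg]
    exact hV
  have hfactor : halfQuadratic l a b ^ 2 - c = halfQuadratic l a b * b * sqrtNeg l := by
    rw [← halfQuadratic_mul_halfQuadratic_neg h, halfQuadratic, halfQuadratic]
    push_cast
    ring
  rw [hfactor, map_mul, map_mul]
  exact (mul_le_of_le_one_left' (mul_le_one'
    (valuation_le_one_of_isIntegral (isIntegral_halfQuadratic h))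
    (valuation_intCast_le_one b))).trans_lt hsqrt

end QuadraticIntegers

section Evaluation

variable {p : ℕ} [Fact p.Prime] {F : Type*} [Field F] [Fintype F] [Algebra (ZMod p) F]

theorem traceGaussSum_one : traceGaussSum p (1 : MulChar F ℂ) = -1 :=
  gaussSum_one_left (traceAddChar_ne_one p F)

theorem valuation_traceGaussSum_pow_sub_lt_one {χ : MulChar F ℂ}
    (hχ : (orderOf χ).Coprime (p - 1)) {q : ℕ} (hq : q.Prime) (hqp : q ≠ p)
    {V : ValuationSubring ℂ} (hV : V.valuation (q : ℂ) < 1) (n : ℕ) :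
    V.valuation (traceGaussSum p χ ^ q ^ n - traceGaussSum p (χ ^ q ^ n)) < 1 := by
  have hq0 : (q : ZMod p) ^ n ≠ 0 := by
    refine pow_ne_zero _ fun h ↦ hqp ?_
    rw [ZMod.natCast_eq_zero_iff] at h
    exact ((Nat.prime_dvd_prime_iff_eq Fact.out hq).mp h).symm
  have hsum : ∑ x : F, (χ x * traceAddChar p F x) ^ q ^ n = traceGaussSum p (χ ^ q ^ n) := by
    rw [← sum_mulChar_mul_traceAddChar_mul p (hχ.coprime_dvd_left (orderOf_pow_dvd _)) hq0]
    refine Finset.sum_congr rfl fun x _ ↦ ?_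
    rw [mul_pow, MulChar.pow_apply' _ (pow_ne_zero _ hq.ne_zero), ← AddChar.map_nsmul_eq_pow,
      nsmul_eq_mul, map_pow, map_natCast, Nat.cast_pow]
  rw [← hsum]
  exact valuation_sum_pow_char_pow_sub_lt_one hq hV _ (fun x ↦ valuation_le_one_of_isIntegral
    ((isIntegral_mulChar_apply χ x).mul (isIntegral_addChar_apply _ x))) n

namespace CaseB2

variable {l m r₁ r₂ N f : ℕ} {ρ : MulChar F ℂ}

theorem traceGaussSum_sq_eq (D : CaseB2 p l m r₁ r₂ N f) (hcard : Fintype.card F = p ^ f)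
    (hρ : ρ ^ m ^ r₂ = 1) (hρ1 : ρ ≠ 1) : traceGaussSum p ρ ^ 2 = (p : ℂ) ^ f := by
  have hinv : ρ⁻¹ = ρ ^ p ^ ((m ^ r₂).totient / 2) := by
    rw [inv_eq_iff_mul_eq_one, ← pow_succ', ← orderOf_dvd_iff_pow_eq_one]
    refine (orderOf_dvd_of_pow_eq_one hρ).trans (Int.natCast_dvd_natCast.mp ?_)
    exact_mod_cast prime_pow_dvd_pow_totient_div_two_add_one D.prime_m D.ne_two_m D.ne_zero_r₂
      D.orderOf_mod_m
  have hodd : Odd (orderOf ρ) :=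
    D.odd_orderOf (by rw [D.eq_mul, pow_mul', hρ, one_pow])
  have hmul := traceGaussSum_mul_inv p hodd hρ1
  rw [hinv, traceGaussSum_pow_char_pow, hcard] at hmul
  rw [sq, hmul, Nat.cast_pow]

/-- The sign is found modulo `m`, where `G(ρ) ^ m ^ r₂ ≡ G(ρ ^ m ^ r₂) = -1` and
`p ^ (f / 2) ≡ -1`. -/
theorem traceGaussSum_eq_pow (D : CaseB2 p l m r₁ r₂ N f) (hcard : Fintype.card F = p ^ f)
    (hρ : ρ ^ m ^ r₂ = 1) (hρ1 : ρ ≠ 1) : traceGaussSum p ρ = (p : ℂ) ^ (f / 2) := by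
  have hsq := D.traceGaussSum_sq_eq hcard hρ hρ1
  rw [← D.two_mul_f_div_two, pow_mul', sq_eq_sq_iff_eq_or_eq_neg] at hsq
  refine hsq.resolve_right fun hneg ↦ ?_
  obtain ⟨V, hV⟩ := exists_valuationSubring_valuation_natCast_lt_one ℂ D.prime_m
  have hcong := valuation_traceGaussSum_pow_sub_lt_one
    (D.coprime_orderOf (by rw [D.eq_mul, pow_mul', hρ, one_pow])) D.prime_m
    (D.ne_of_prime_dvd D.prime_m D.m_dvd) hV r₂
  rw [hρ, traceGaussSum_one, hneg] at hcong
  have hdvd : (m : ℤ) ∣ (-(p : ℤ) ^ (f / 2)) ^ m ^ r₂ + 1 := by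
    rw [← valuation_intCast_lt_one_iff D.prime_m hV]
    push_cast
    rwa [sub_neg_eq_add] at hcong
  have hdvd' : (m : ℤ) ∣ (-(p : ℤ) ^ (f / 2)) ^ m ^ r₂ - 1 := by
    have hbase : (m : ℤ) ∣ -(p : ℤ) ^ (f / 2) - 1 := by
      rw [← neg_add']
      exact D.intCast_dvd_pow_f_div_two_add_one.neg_right
    exact hbase.trans (by simpa using sub_dvd_pow_sub_pow (-(p : ℤ) ^ (f / 2)) 1 (m ^ r₂))
  have htwo : (m : ℤ) ∣ (2 : ℕ) := by simpa [one_add_one_eq_two] using dvd_sub hdvd hdvd'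
  exact D.ne_two_m ((Nat.prime_dvd_prime_iff_eq D.prime_m Nat.prime_two).mp
    (Int.natCast_dvd_natCast.mp htwo))

variable {a b : ℤ} {h n : ℕ}

omit [Fact p.Prime] in
theorem valuation_pow_mul_halfQuadratic_pow_sub_one_lt_one (D : CaseB2 p l m r₁ r₂ N f)
    (hab : 4 * (p : ℤ) ^ h = a ^ 2 + l * b ^ 2) (hn : Even n) (hle : h * n ≤ f)
    {V : ValuationSubring ℂ} (hV : V.valuation (l : ℂ) < 1) :
    V.valuation ((p : ℂ) ^ ((f - h * n) / 2) * halfQuadratic l a b ^ n - 1) < 1 := by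
  obtain ⟨k, rfl⟩ := even_iff_exists_two_mul.mp hn
  set e := (f - h * (2 * k)) / 2
  have hsplit : f / 2 = e + h * k := by lia
  have hsq := valuation_halfQuadratic_sq_sub_lt_one hab hV
  push_cast at hsq
  have hpow : V.valuation ((halfQuadratic l a b ^ 2) ^ k - ((p : ℂ) ^ h) ^ k) < 1 :=
    valuation_pow_sub_pow_lt_one
      (valuation_le_one_of_isIntegral ((isIntegral_halfQuadratic hab).pow 2))
      (mod_cast valuation_natCast_le_one (p ^ h)) hsq k
  have hp : V.valuation ((p : ℂ) ^ e) ≤ 1 := mod_cast valuation_natCast_le_one (p ^ e)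
  have hone : V.valuation ((p : ℂ) ^ (f / 2) - 1) < 1 :=
    mod_cast (valuation_intCast_lt_one_iff D.prime_l hV).mpr D.intCast_dvd_pow_f_div_two_sub_one
  have hdecomp : (p : ℂ) ^ e * halfQuadratic l a b ^ (2 * k) - 1 =
      (p : ℂ) ^ e * ((halfQuadratic l a b ^ 2) ^ k - ((p : ℂ) ^ h) ^ k) +
        ((p : ℂ) ^ (f / 2) - 1) := by
    rw [hsplit]
    ring
  rw [hdecomp]
  refine V.valuation.map_add_lt ?_ hone
  rw [map_mul]
  exact (mul_le_of_le_one_left' hp).trans_lt hpow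

theorem traceGaussSum_eq_or_eq_neg (D : CaseB2 p l m r₁ r₂ N f) [Fact l.Prime]
    (hcard : Fintype.card F = p ^ f) (hρ : ρ ^ N = 1) (hρ1 : ρ ≠ 1)
    (hab : 4 * (p : ℤ) ^ h = a ^ 2 + l * b ^ 2) (hn : Even n) (hle : h * n ≤ f)
    {V : ValuationSubring ℂ} (hV : V.valuation (p : ℂ) < 1) {ε : ℤ}
    (hVab : V.valuation (halfQuadratic l a b) ^ 2 = V.valuation (p : ℂ) ^ ((h : ℤ) + ε * h))
    (hVG : V.valuation (traceGaussSum p ρ) ^ 2 =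
      V.valuation (p : ℂ) ^ ((f : ℤ) + ε * (h * n : ℕ))) :
    traceGaussSum p ρ = (p : ℂ) ^ ((f - h * n) / 2) * halfQuadratic l a b ^ n ∨
      traceGaussSum p ρ = -((p : ℂ) ^ ((f - h * n) / 2) * halfQuadratic l a b ^ n) := by
  set e := (f - h * n) / 2
  have he : 2 * e + h * n = f := by
    have := D.two_mul_f_div_two
    obtain ⟨k, rfl⟩ := even_iff_exists_two_mul.mp hn
    rw [mul_left_comm] at *
    lia
  have hint : ∀ b', 4 * (p : ℤ) ^ h = a ^ 2 + l * b' ^ 2 →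
      IsIntegral ℤ ((p : ℂ) ^ e * halfQuadratic l a b' ^ n) := fun b' hb' ↦
    ((isIntegral_natCast p).pow e).mul ((isIntegral_halfQuadratic hb').pow n)
  have hpair : IsConjPair l ((p : ℂ) ^ e * halfQuadratic l a b ^ n)
      ((p : ℂ) ^ e * halfQuadratic l a (-b) ^ n) :=
    ((IsConjPair.natCast l p).pow e).mul ((isConjPair_halfQuadratic l a b).pow n)
  refine (D.isConjPair_traceGaussSum hρ).eq_or_eq_neg hpair D.prime_l D.three_lt D.prime_p hV
    (isIntegral_gaussSum _ _) (isIntegral_gaussSum _ _) (hint b hab) (hint (-b) (neg_sq b ▸ hab))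
    (k := f) ?_ ?_ ?_
  · rw [traceGaussSum_mul_inv p (D.odd_orderOf hρ) hρ1, hcard, Nat.cast_pow]
  · rw [mul_mul_mul_comm, ← mul_pow, ← mul_pow, halfQuadratic_mul_halfQuadratic_neg hab, ← he]
    push_cast
    ring
  · have hvp := (valuation_natCast_pos (V := V) D.prime_p).ne'
    refine (pow_left_inj₀ zero_le zero_le two_ne_zero).mp ?_
    rw [hVG, map_mul, map_pow, map_pow, mul_pow, ← pow_mul, pow_right_comm, hVab, ← zpow_natCast,
      ← zpow_natCast, ← zpow_mul, ← zpow_add₀ hvp, ← he]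
    congr 1
    push_cast
    ring

theorem traceGaussSum_eq_sign_mul (D : CaseB2 p l m r₁ r₂ N f) (hρ : ρ ^ N = 1)
    {V : ValuationSubring ℂ} (hV : V.valuation (l : ℂ) < 1) {x : ℂ} (hx : V.valuation (x - 1) < 1)
    (hG : traceGaussSum p ρ = x ∨ traceGaussSum p ρ = -x) {u : ℤ} (hu : u = 1 ∨ u = -1)
    (hGu : V.valuation (traceGaussSum p (ρ ^ l ^ r₁) - u) < 1) : traceGaussSum p ρ = u * x := by
  obtain ⟨s, hs, hGs⟩ : ∃ s : ℤ, (s = 1 ∨ s = -1) ∧ traceGaussSum p ρ = s * x := by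
    rcases hG with h | h
    · exact ⟨1, .inl rfl, by simpa using h⟩
    · exact ⟨-1, .inr rfl, by simpa using h⟩
  have hspow : s ^ l ^ r₁ = s := by
    rcases hs with rfl | rfl
    · exact one_pow _
    · exact D.l_odd.pow.neg_one_pow
  have hxV : V.valuation x ≤ 1 := by
    simpa using V.valuation.map_add_le hx.le V.valuation.map_one.le
  have hsx : V.valuation (s * (1 - x ^ l ^ r₁)) < 1 := by
    rw [map_mul, V.valuation.map_sub_swap, ← one_pow (l ^ r₁)]
    exact (mul_le_of_le_one_left' (valuation_intCast_le_one s)).trans_lt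
      (valuation_pow_sub_pow_lt_one hxV V.valuation.map_one.le hx _)
  have hcong := valuation_traceGaussSum_pow_sub_lt_one (D.coprime_orderOf hρ) D.prime_l
    (D.ne_of_prime_dvd D.prime_l D.l_dvd) hV r₁
  rw [hGs, mul_pow, ← Int.cast_pow, hspow] at hcong
  have hsu : (l : ℤ) ∣ s - u := by
    rw [← valuation_intCast_lt_one_iff D.prime_l hV]
    convert V.valuation.map_add_lt hsx (V.valuation.map_add_lt hcong hGu) using 2
    push_cast
    ring
  have hl3 := D.three_lt
  have hzero := Int.eq_zero_of_abs_lt_dvd hsu (by rw [abs_lt]; lia)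
  rw [hGs, sub_eq_zero.mp hzero]

variable {χ : MulChar F ℂ}

theorem traceGaussSum_pow_eq_pow (D : CaseB2 p l m r₁ r₂ N f) (hcard : Fintype.card F = p ^ f)
    (hχ : orderOf χ = N) {t₁ t₂ : ℕ} (ht₁ : r₁ ≤ t₁) (ht₂ : t₂ < r₂) :
    traceGaussSum p (χ ^ (l ^ t₁ * m ^ t₂)) = (p : ℂ) ^ (f / 2) := by
  refine D.traceGaussSum_eq_pow hcard ?_ ?_
  · rw [← pow_mul, ← orderOf_dvd_iff_pow_eq_one, hχ, D.eq_mul]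
    exact mul_dvd_mul_right ((pow_dvd_pow l ht₁).mul_right _) _
  · rw [Ne, ← orderOf_dvd_iff_pow_eq_one, hχ]
    exact D.not_dvd_of_lt_right t₁ ht₂

theorem valuation_traceGaussSum_pow_sub_one_lt_one (D : CaseB2 p l m r₁ r₂ N f)
    (hcard : Fintype.card F = p ^ f) (hχ : orderOf χ = N) (t₁ : ℕ) {t₂ : ℕ} (ht₂ : t₂ < r₂)
    {V : ValuationSubring ℂ} (hV : V.valuation (l : ℂ) < 1) :
    V.valuation (traceGaussSum p ((χ ^ (l ^ t₁ * m ^ t₂)) ^ l ^ r₁) - 1) < 1 := by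
  rw [← pow_mul, mul_right_comm, ← pow_add,
    D.traceGaussSum_pow_eq_pow hcard hχ (Nat.le_add_left r₁ t₁) ht₂]
  exact mod_cast (valuation_intCast_lt_one_iff D.prime_l hV).mpr D.intCast_dvd_pow_f_div_two_sub_one

theorem traceGaussSum_pow_mul_pow_eq_neg_one (D : CaseB2 p l m r₁ r₂ N f) (hχ : orderOf χ = N)
    (t₁ : ℕ) : traceGaussSum p ((χ ^ (l ^ t₁ * m ^ r₂)) ^ l ^ r₁) = -1 := by
  have hone : (χ ^ (l ^ t₁ * m ^ r₂)) ^ l ^ r₁ = 1 := by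
    rw [← pow_mul, ← orderOf_dvd_iff_pow_eq_one, hχ, D.eq_mul]
    exact ⟨l ^ t₁, by ring⟩
  rw [hone, traceGaussSum_one]

theorem exists_traceGaussSum_pow_eq (D : CaseB2 p l m r₁ r₂ N f) [Fact l.Prime]
    (hcard : Fintype.card F = p ^ f) (hχ : orderOf χ = N) :
    ∃ a b : ℤ, 4 * (p : ℤ) ^ classNumSqrtNeg l = a ^ 2 + l * b ^ 2 ∧
      a ≡ -2 * (p : ℤ) ^ ((l - 1 + 2 * classNumSqrtNeg l) / 4) [ZMOD l] ∧
      ∀ (lam n : ℕ) (u : ℤ), ¬ N ∣ lam → HasLegendreDefect l N lam n → Even n →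
        (u = 1 ∨ u = -1) → (∀ V : ValuationSubring ℂ, V.valuation (l : ℂ) < 1 →
          V.valuation (traceGaussSum p ((χ ^ lam) ^ l ^ r₁) - u) < 1) →
        traceGaussSum p (χ ^ lam) = u * ((p : ℂ) ^ (((f : ℤ) - classNumSqrtNeg l * n) / 2) *
          halfQuadratic l a b ^ n) := by
  obtain ⟨a, b₀, hab₀, hmod, hpa⟩ := exists_four_mul_pow_classNumSqrtNeg_eq_and_modEq D.mod_four
    D.three_lt D.prime_p (by rw [legendreSym, Int.cast_natCast, D.quadraticChar_eq_one])
  obtain ⟨V, ε, hV, hε, hval⟩ :=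
    D.generatesLegendreKernel.exists_valuation_traceGaussSum_sq_eq D.three_lt hcard hχ
  obtain ⟨b, hb, hVab⟩ := exists_valuation_halfQuadratic_sq_eq hab₀ D.prime_p hV hpa hε
  rw [← hb] at hab₀
  obtain ⟨W, hW⟩ := exists_valuationSubring_valuation_natCast_lt_one ℂ D.prime_l
  refine ⟨a, b, hab₀, hmod, fun lam n u hlam hdefect hn hu hGu ↦ ?_⟩
  obtain ⟨hle, hVG⟩ := hval lam n hlam hdefect
  have hρ : (χ ^ lam) ^ N = 1 := by rw [pow_right_comm, ← hχ, pow_orderOf_eq_one, one_pow]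
  have hρ1 : χ ^ lam ≠ 1 := by rwa [Ne, ← orderOf_dvd_iff_pow_eq_one, hχ]
  have hexp : ((f : ℤ) - classNumSqrtNeg l * n) / 2 = ((f - classNumSqrtNeg l * n) / 2 : ℕ) := by
    push_cast [hle]
    rfl
  rw [hexp, zpow_natCast]
  exact D.traceGaussSum_eq_sign_mul hρ hW
    (D.valuation_pow_mul_halfQuadratic_pow_sub_one_lt_one hab₀ hn hle hW)
    (D.traceGaussSum_eq_or_eq_neg hcard hρ hρ1 hab₀ hn hle hV hVab hVG) hu (hGu W hW)

end CaseB2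

end Evaluation

end GaussSumIndexTwo

open GaussSumIndexTwo

theorem statement18 (p l1 l2 r1 r2 N f : ℕ) (hp : p.Prime)
    (hl1 : l1.Prime) (hl2 : l2.Prime) (hne : l1 ≠ l2)
    (hl1m : l1 % 4 = 3) (hl1gt : 3 < l1) (hl2odd : l2 % 2 = 1)
    (hr1 : 1 ≤ r1) (hr2 : 1 ≤ r2) (hN : N = l1 ^ r1 * l2 ^ r2) (hNp : Nat.gcd N p = 1)
    (hord1 : orderOf (p : ZMod (l1 ^ r1)) = Nat.totient (l1 ^ r1) / 2)
    (hord2 : orderOf (p : ZMod (l2 ^ r2)) = Nat.totient (l2 ^ r2))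
    (hf : orderOf (p : ZMod N) = f) (hind : f = Nat.totient N / 2)
    (F : Type) [Field F] [Fintype F] [Algebra (ZMod p) F]
    (hcard : Fintype.card F = p ^ f)
    (χ : MulChar F ℂ) (hχord : orderOf χ = N) :
    ∃ a b : ℤ,
      4 * (p : ℤ) ^ classNumSqrtNeg l1 = a ^ 2 + (l1 : ℤ) * b ^ 2 ∧
      a ≡ -2 * (p : ℤ) ^ ((l1 - 1 + 2 * classNumSqrtNeg l1) / 4) [ZMOD (l1 : ℤ)] ∧
      ∀ t1 t2 : ℕ, t1 < r1 → t2 < r2 →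
        (@legendreSym l1 ⟨hl1⟩ (l2 : ℤ) = 1 →
          gaussSumN p χ (l1 ^ t1 * l2 ^ t2) = (p : ℂ) ^ ((f : ℤ) / 2)) ∧
        (@legendreSym l1 ⟨hl1⟩ (l2 : ℤ) = -1 →
          gaussSumN p χ (l1 ^ t1 * l2 ^ t2) =
            (p : ℂ) ^ ((f : ℤ) / 2 - (classNumSqrtNeg l1 : ℤ) * ((l1 : ℤ) ^ t1 * (l2 : ℤ) ^ t2)) *
              (((a : ℂ) + (b : ℂ) * sqrtNeg l1) / 2) ^ (2 * (l1 ^ t1 * l2 ^ t2))) ∧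
        gaussSumN p χ (l1 ^ r1 * l2 ^ t2) = (p : ℂ) ^ ((f : ℤ) / 2) ∧
        gaussSumN p χ (l1 ^ t1 * l2 ^ r2) =
          -(p : ℂ) ^
              (((f : ℤ) - (classNumSqrtNeg l1 : ℤ) * (l1 : ℤ) ^ t1 * (Nat.totient (l2 ^ r2) : ℤ)) / 2) *
            (((a : ℂ) + (b : ℂ) * sqrtNeg l1) / 2) ^ (l1 ^ t1 * Nat.totient (l2 ^ r2)) := by
  have := Fact.mk hp
  have := Fact.mk hl1
  have D : CaseB2 p l1 l2 r1 r2 N f :=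
    ⟨hp, hl1, hl2, hne, hl1m, hl1gt, hl2odd, hr1, hr2, hN, hNp, hord1, hord2, hf, hind⟩
  obtain ⟨a, b, hab, hmod, heval⟩ := D.exists_traceGaussSum_pow_eq hcard hχord
  refine ⟨a, b, hab, hmod, fun t1 t2 ht1 ht2 ↦ ?_⟩
  have hone (V) := D.valuation_traceGaussSum_pow_sub_one_lt_one hcard hχord t1 ht2 (V := V)
  have heven := even_totient_prime_pow hl2 D.ne_two_m D.ne_zero_r₂
  simp only [gaussSumN_eq_traceGaussSum_pow, legendreSym, Int.cast_natCast]
  refine ⟨fun hη ↦ ?_, fun hη ↦ ?_, ?_, ?_⟩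
  · simpa using heval _ 0 1 (D.not_dvd_of_lt_left ht1 t2) (D.hasLegendreDefect_zero hη ht1 ht2)
      Even.zero (.inl rfl) (mod_cast hone)
  · rw [heval _ _ 1 (D.not_dvd_of_lt_left ht1 t2) (D.hasLegendreDefect_two_mul hη ht1 ht2)
      (even_two_mul _) (.inl rfl) (mod_cast hone), Int.cast_one, one_mul, halfQuadratic]
    congr 2
    push_cast
    lia
  · rw [D.traceGaussSum_pow_eq_pow hcard hχord le_rfl ht2]
    norm_cast
  · rw [heval _ _ (-1) (D.not_dvd_of_lt_left ht1 r2) (D.hasLegendreDefect_mul_totient ht1)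
      (heven.mul_left _) (.inr rfl) (by simp [D.traceGaussSum_pow_mul_pow_eq_neg_one hχord]),
      halfQuadratic]
    push_cast
    ring_nf
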